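/- There exists an absolute constant C > 0 such that the following holds. Let q be a prime power, n ≥ 1, and let f ∈ 𝔽_q[x_1,…,x_n] be a non-constant polynomial of total degree d that is indecomposable over 𝔽_q. Then the output distribution of f on a uniform input is C·d^2/√q-close to uniform on 𝔽_q: (1/2)·Σ_{a∈𝔽_q} | Pr_{x ← uniform on 𝔽_q^n}[f(x)=a] − 1/q | ≤ C·d^2/√q. -/

import Mathlib

open MvPolynomial

/-- A non-constant polynomial `f ∈ F[x₁,…,xₙ]` is *decomposable* over `F` if
`f = g(h)` for some univariate `g ∈ F[z]` with `deg g ≥ 2` and some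
`h ∈ F[x₁,…,xₙ]`. -/
def MvPolynomial.Decomposable {F : Type*} [CommSemiring F] {n : ℕ}
    (f : MvPolynomial (Fin n) F) : Prop :=
  ∃ (g : Polynomial F) (h : MvPolynomial (Fin n) F),
    2 ≤ g.natDegree ∧ f = Polynomial.aeval h g

/-!
If `q` is less than about `d ^ 4` the bound is trivial. Otherwise a linear change of coordinates
makes `f` monic in a distinguished variable `y` with `∂f/∂y ≠ 0`.

An algebraic relation between the coordinates along a formal arc on which `f` is constant, at the
generic point `x`, exhibits `f` as a composition unless `f(X) - f(x)` is irreducible; so it is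
irreducible when `f` is indecomposable. By a determinant of jets this limits how far `f - a` can
split over all `a ∈ 𝔽_q` together: the irreducible factors of degree at most `d / 2` have total
degree at most `16 * d ^ 3`, which accounts for a negligible set of points. Each `f - a` has at most
one irreducible factor `u` of degree greater than `d / 2`.

For such a `u`, through a smooth zero a generic plane section of `u` stays irreducible, and the
Stepanov method bounds its number of points by `q + O(d ^ 2 * √q)`. Averaging over the lines
through the points of the base bounds the second moment of the number of smooth zeros of `u` over a
base point, so `u` has at most `q ^ (n - 1) * (1 + O(d ^ 2 / √q))` of them. Hence the fibres of `f`
exceed `q ^ (n - 1)` by at most `O(d ^ 2 * √q * q ^ (n - 1))` in total, and this total excess is, up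
to the factor `q ^ n`, the statistical distance to uniform.
-/

namespace IndecomposablePolynomial

open scoped Polynomial Polynomial.Bivariate PowerSeries Finset

section Filtration

variable {F A τ : Type*} [CommRing F] [CommRing A] [Algebra F A]

theorem aeval_mem_graded (V : ℕ → Submodule F A) [SetLike.GradedMonoid V] (hV : Monotone V)
    {γ : ℕ} {g : τ → A} (hg : ∀ i, g i ∈ V γ) (f : MvPolynomial τ F) :
    aeval g f ∈ V (f.totalDegree * γ) := by
  rw [aeval_def, eval₂_eq]
  refine sum_mem fun m hm ↦ ?_
  rw [← Algebra.smul_def]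
  refine Submodule.smul_mem _ _ (hV ?_
    (SetLike.prod_pow_mem_graded V (fun _ ↦ γ) g m fun i _ ↦ hg i))
  simp_rw [smul_eq_mul, ← Finset.sum_mul]
  exact Nat.mul_le_mul_right _ (le_totalDegree hm)

theorem restrictTotalDegree_mono : Monotone (restrictTotalDegree τ F) := fun _ _ h _ hp ↦
  (mem_restrictTotalDegree ..).2 (((mem_restrictTotalDegree ..).1 hp).trans h)

instance restrictTotalDegree.gradedMonoid : SetLike.GradedMonoid (restrictTotalDegree τ F) where
  one_mem := by simp [mem_restrictTotalDegree]
  mul_mem _ _ p r hp hr := by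
    rw [mem_restrictTotalDegree] at hp hr ⊢
    exact (totalDegree_mul p r).trans (add_le_add hp hr)

theorem totalDegree_aeval_le {ι : Type*} {γ : ℕ} {g : τ → MvPolynomial ι F}
    (hg : ∀ i, (g i).totalDegree ≤ γ) (f : MvPolynomial τ F) :
    (aeval g f).totalDegree ≤ f.totalDegree * γ :=
  (mem_restrictTotalDegree ..).1 <| aeval_mem_graded _ restrictTotalDegree_mono
    (fun i ↦ (mem_restrictTotalDegree ..).2 (hg i)) f

variable (V : ℕ → Submodule F A)

/-- For a filtration `V` of `A`, the filtration of `A[X]` in which `X` is given degree `-c`: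
the coefficient of `X ^ i` in a polynomial of degree `n` lies in `V (c * i + n)`. -/
def polynomialFiltration (c n : ℕ) : Submodule F A[X] where
  carrier := {p | ∀ i, p.coeff i ∈ V (c * i + n)}
  add_mem' hp hq i := by simpa using add_mem (hp i) (hq i)
  zero_mem' i := by simp
  smul_mem' r p hp i := by simpa using Submodule.smul_mem _ r (hp i)

/-- The analogue for power series of `polynomialFiltration`. -/
def powerSeriesFiltration (c n : ℕ) : Submodule F A⟦X⟧ where
  carrier := {w | ∀ k, PowerSeries.coeff k w ∈ V (c * k + n)}
  add_mem' hv hw k := by simpa using add_mem (hv k) (hw k)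
  zero_mem' k := by simp
  smul_mem' r w hw k := by simpa using Submodule.smul_mem _ r (hw k)

variable {V} {c n m : ℕ}

theorem polynomialFiltration_mono (hV : Monotone V) : Monotone (polynomialFiltration V c) :=
  fun _ _ h _ hp i ↦ hV (Nat.add_le_add_left h _) (hp i)

theorem powerSeriesFiltration_mono (hV : Monotone V) : Monotone (powerSeriesFiltration V c) :=
  fun _ _ h _ hw k ↦ hV (Nat.add_le_add_left h _) (hw k)

theorem C_mem_polynomialFiltration (hV : Monotone V) {a : A} (ha : a ∈ V n) :
    Polynomial.C a ∈ polynomialFiltration V c n := fun i ↦ by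
  rw [Polynomial.coeff_C]
  split_ifs
  · exact hV (Nat.le_add_left _ _) ha
  · exact zero_mem _

theorem C_mem_powerSeriesFiltration (hV : Monotone V) {a : A} (ha : a ∈ V n) :
    PowerSeries.C a ∈ powerSeriesFiltration V c n := fun k ↦ by
  rw [PowerSeries.coeff_C]
  split_ifs
  · exact hV (Nat.le_add_left _ _) ha
  · exact zero_mem _

theorem X_mul_mem_powerSeriesFiltration {w : A⟦X⟧} (hw : w ∈ powerSeriesFiltration V c (c + n)) :
    PowerSeries.X * w ∈ powerSeriesFiltration V c n
  | 0 => by simp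
  | k + 1 => by simpa [mul_add, add_assoc] using hw k

variable [SetLike.GradedMonoid V]

instance polynomialFiltration.gradedMonoid (c : ℕ) :
    SetLike.GradedMonoid (polynomialFiltration V c) where
  one_mem i := by
    rw [Polynomial.coeff_one]
    split_ifs with h
    · simpa [h] using SetLike.one_mem_graded V
    · exact zero_mem _
  mul_mem n m p r hp hr i := by
    rw [Polynomial.coeff_mul]
    refine sum_mem fun x hx ↦ ?_
    rw [Finset.HasAntidiagonal.mem_antidiagonal] at hx
    convert SetLike.mul_mem_graded (hp x.1) (hr x.2) using 2
    rw [← hx]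
    ring

instance powerSeriesFiltration.gradedMonoid (c : ℕ) :
    SetLike.GradedMonoid (powerSeriesFiltration V c) where
  one_mem k := by
    rw [PowerSeries.coeff_one]
    split_ifs with h
    · simpa [h] using SetLike.one_mem_graded V
    · exact zero_mem _
  mul_mem n m v w hv hw k := by
    rw [PowerSeries.coeff_mul]
    refine sum_mem fun x hx ↦ ?_
    rw [Finset.HasAntidiagonal.mem_antidiagonal] at hx
    convert SetLike.mul_mem_graded (hv x.1) (hw x.2) using 2
    rw [← hx]
    ring

end Filtration

section ImplicitFunction

variable {A : Type*} [CommRing A]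

theorem exists_fixedPoint_of_X_pow_dvd_sub {G : A⟦X⟧ → A⟦X⟧}
    (hG : ∀ n a b, PowerSeries.X ^ n ∣ a - b → PowerSeries.X ^ (n + 1) ∣ G a - G b)
    {S : ℕ → Set A} (hS0 : ∀ k, 0 ∈ S k)
    (hS : ∀ w, (∀ k, PowerSeries.coeff k w ∈ S k) → ∀ k, PowerSeries.coeff k (G w) ∈ S k) :
    ∃ w, G w = w ∧ ∀ k, PowerSeries.coeff k w ∈ S k := by
  have hmod {n : ℕ} {a b : A⟦X⟧} :
      a ≡ b [SMOD (Ideal.span {(PowerSeries.X : A⟦X⟧)} ^ n • ⊤ : Ideal A⟦X⟧)] ↔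
        PowerSeries.X ^ n ∣ a - b := by
    rw [SModEq.sub_mem, smul_eq_mul, Ideal.mul_top, Ideal.span_singleton_pow,
      Ideal.mem_span_singleton]
  have hstep (n : ℕ) : PowerSeries.X ^ n ∣ G^[n] 0 - G^[n + 1] 0 := by
    induction n with
    | zero => simp
    | succ n ih => simpa only [Function.iterate_succ_apply'] using hG _ _ _ ih
  obtain ⟨w, hw⟩ := IsPrecomplete.prec (I := Ideal.span {(PowerSeries.X : A⟦X⟧)}) inferInstance
    (f := fun n ↦ G^[n] 0) fun {m n} hmn ↦ by
      rw [hmod]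
      induction n, hmn using Nat.le_induction with
      | base => simp
      | succ n hmn ih => simpa using dvd_add ih ((pow_dvd_pow _ hmn).trans (hstep n))
  simp only [hmod] at hw
  refine ⟨w, ?_, fun k ↦ ?_⟩
  · rw [← sub_eq_zero]
    ext k
    refine PowerSeries.X_pow_dvd_iff.1 (?_ : PowerSeries.X ^ (k + 1) ∣ _) k k.lt_succ_self
    have h := hG _ _ _ (hw k)
    rw [← Function.iterate_succ_apply' G] at h
    simpa using dvd_sub (hw (k + 1)) h
  · have h := PowerSeries.X_pow_dvd_iff.1 (hw (k + 1)) k k.lt_succ_self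
    rw [map_sub, sub_eq_zero] at h
    rw [← h]
    suffices ∀ n k, PowerSeries.coeff k (G^[n] 0) ∈ S k from this _ _
    intro n
    induction n with
    | zero => simpa using hS0
    | succ n ih => simpa only [Function.iterate_succ_apply'] using hS _ ih

theorem eval_eq_add_sq_mul_eval_divX_divX (p : A[X]) (x : A) :
    p.eval x = p.coeff 0 + p.coeff 1 * x + x ^ 2 * p.divX.divX.eval x := by
  have h0 := congrArg (Polynomial.eval x) p.divX_mul_X_add
  have h1 := congrArg (Polynomial.eval x) p.divX.divX_mul_X_add
  simp only [Polynomial.coeff_divX, zero_add, Polynomial.eval_add, Polynomial.eval_mul,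
    Polynomial.eval_X, Polynomial.eval_C] at h0 h1
  linear_combination -h0 - x * h1

variable {F : Type*} [CommRing F] [Algebra F A] {V : ℕ → Submodule F A}

theorem eval_mem_graded {B : Type*} [CommRing B] [Algebra F B] {W : ℕ → Submodule F B}
    [SetLike.GradedMonoid W] {n : ℕ} {p : B[X]} (hp : ∀ j, p.coeff j ∈ W n) {x : B}
    (hx : x ∈ W 0) : p.eval x ∈ W n := by
  rw [Polynomial.eval_eq_sum_range]
  refine sum_mem fun j _ ↦ ?_
  simpa using SetLike.mul_mem_graded (hp j) (SetLike.pow_mem_graded j hx)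

-- Substituting `δTw` for the variable makes every term divisible by `δ²T`; after that division the
-- equation reads `w = -(e₀ + T(⋯))`, which has a unique solution by contraction.
theorem exists_powerSeries_eval_eq_C [SetLike.GradedMonoid V] (hV : Monotone V) {a δ : A}
    {b c β : ℕ} (hbc : b + β ≤ c) (hδ : δ ∈ V β) {p : A⟦X⟧[X]} {e₀ e₁ : A⟦X⟧}
    (h₀ : p.coeff 0 = PowerSeries.C a + PowerSeries.C (δ ^ 2) * PowerSeries.X * e₀)
    (h₁ : p.coeff 1 = PowerSeries.C δ + PowerSeries.C (δ ^ 2) * PowerSeries.X * e₁)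
    (he₀ : e₀ ∈ powerSeriesFiltration V c b) (he₁ : e₁ ∈ powerSeriesFiltration V c b)
    (hp : ∀ j, p.coeff (j + 2) ∈ powerSeriesFiltration V c β) :
    ∃ v ∈ powerSeriesFiltration V c 0, PowerSeries.constantCoeff v = 0 ∧
      p.eval v = PowerSeries.C a := by
  have hW : Monotone (powerSeriesFiltration V c) := powerSeriesFiltration_mono hV
  set r := p.divX.divX with hr
  set t : A⟦X⟧ := PowerSeries.X * PowerSeries.C δ
  set H : A⟦X⟧[X] := Polynomial.C (PowerSeries.C δ * e₁) * Polynomial.X +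
    Polynomial.X ^ 2 * r.comp (Polynomial.C t * Polynomial.X) with hH
  have hHeval (w : A⟦X⟧) : H.eval w = PowerSeries.C δ * e₁ * w + w ^ 2 * r.eval (t * w) := by
    simp [hH]
  have htw {w : A⟦X⟧} (hw : w ∈ powerSeriesFiltration V c b) :
      t * w ∈ powerSeriesFiltration V c 0 := by
    rw [mul_assoc]
    refine X_mul_mem_powerSeriesFiltration (hW ?_ (SetLike.mul_mem_graded
      (C_mem_powerSeriesFiltration hV hδ) hw))
    omega
  obtain ⟨w, hw, hwW⟩ := exists_fixedPoint_of_X_pow_dvd_sub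
    (G := fun w ↦ -(e₀ + PowerSeries.X * H.eval w)) (S := fun k ↦ V (c * k + b))
    (fun n x y h ↦ by
      obtain ⟨z, hz⟩ := h.trans (H.sub_dvd_eval_sub x y)
      exact ⟨-z, by linear_combination (-PowerSeries.X) * hz⟩)
    (fun k ↦ zero_mem _) fun w hw ↦ by
      refine neg_mem (add_mem he₀ ?_ : _ ∈ powerSeriesFiltration V c b)
      rw [hHeval, show PowerSeries.X * (PowerSeries.C δ * e₁ * w + w ^ 2 * r.eval (t * w)) =
        e₁ * (t * w) + PowerSeries.X * (w * w * r.eval (t * w)) by ring]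
      refine add_mem (SetLike.mul_mem_graded (j := 0) he₁ (htw hw))
        (X_mul_mem_powerSeriesFiltration (hW (by omega : b + b + β ≤ _) (SetLike.mul_mem_graded
          (SetLike.mul_mem_graded (A := powerSeriesFiltration V c) hw hw)
          (eval_mem_graded (fun j ↦ ?_) (htw hw)))))
      simpa [hr, Polynomial.coeff_divX] using hp j
  refine ⟨t * w, htw hwW, by simp [t], ?_⟩
  rw [hHeval] at hw
  rw [eval_eq_add_sq_mul_eval_divX_divX, h₀, h₁]
  simp only [map_pow, t] at hw ⊢
  linear_combination -(PowerSeries.C δ ^ 2 * PowerSeries.X) * hw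

theorem coeff_aeval_C_mul_X (a : A) (p : A[X]) (k : ℕ) :
    PowerSeries.coeff k (Polynomial.aeval (PowerSeries.C a * PowerSeries.X) p) =
      p.coeff k * a ^ k := by
  have : Polynomial.aeval (PowerSeries.C a * PowerSeries.X) p =
      PowerSeries.rescale a (p : A⟦X⟧) := by
    rw [← Polynomial.coeToPowerSeries.ringHom_apply, ← AlgHom.coe_toRingHom, ← RingHom.comp_apply]
    congr 1
    ext r : 2
    · ext n
      by_cases hn : n = 0 <;> simp [PowerSeries.coeff_C, hn]
    · simp [PowerSeries.rescale_X]
  rw [this, PowerSeries.coeff_rescale, Polynomial.coeff_coe, mul_comm]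

theorem aevalAeval_eq_eval_map {R B : Type*} [CommRing R] [CommRing B] [Algebra R B] (s y : B)
    (P : R[X][Y]) :
    P.aevalAeval s y = (P.map ((Polynomial.aeval s : R[X] →ₐ[R] B) : R[X] →+* B)).eval y := by
  suffices (Polynomial.aevalAeval s y : R[X][Y] →ₐ[R] B).toRingHom = (Polynomial.evalRingHom y).comp
      (Polynomial.mapRingHom (Polynomial.aeval s : R[X] →ₐ[R] B)) from
    DFunLike.congr_fun this P
  ext <;> simp

-- The arc is parametrized by `δ²T` so that no denominators appear.
theorem exists_powerSeries_aevalAeval_eq_C [SetLike.GradedMonoid V] (hV : Monotone V) {α β : ℕ}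
    {P : A[X][Y]} (hP : P ∈ polynomialFiltration (polynomialFiltration V α) 0 β) :
    ∃ v ∈ powerSeriesFiltration V (α + 2 * β) 0, PowerSeries.constantCoeff v = 0 ∧
      P.aevalAeval (PowerSeries.C (((P.coeff 1).coeff 0) ^ 2) * PowerSeries.X) v =
        PowerSeries.C ((P.coeff 0).coeff 0) := by
  set δ := (P.coeff 1).coeff 0 with hδ
  set s : A⟦X⟧ := PowerSeries.C (δ ^ 2) * PowerSeries.X with hs
  have hcoeff (i j : ℕ) : (P.coeff j).coeff i ∈ V (α * i + β) := by simpa using hP j i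
  have hδV : δ ∈ V β := by simpa using hcoeff 0 1
  have hmul {x : A} {n : ℕ} (k : ℕ) (hx : x ∈ V (α * k + n)) :
      x * (δ ^ 2) ^ k ∈ V ((α + 2 * β) * k + n) := by
    rw [← pow_mul]
    convert SetLike.mul_mem_graded hx (SetLike.pow_mem_graded (2 * k) hδV) using 2
    rw [smul_eq_mul]
    ring
  have hsplit (j : ℕ) : (P.map ((Polynomial.aeval s : A[X] →ₐ[A] A⟦X⟧) : A[X] →+* A⟦X⟧)).coeff j =
      PowerSeries.C ((P.coeff j).coeff 0) + s * Polynomial.aeval s (P.coeff j).divX := by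
    rw [Polynomial.coeff_map, RingHom.coe_coe]
    conv_lhs => rw [← Polynomial.divX_mul_X_add (P.coeff j), map_add, map_mul, Polynomial.aeval_X,
      Polynomial.aeval_C, PowerSeries.algebraMap_apply, Algebra.algebraMap_self_apply]
    ring
  have hdivX (j : ℕ) : Polynomial.aeval s (P.coeff j).divX ∈
      powerSeriesFiltration V (α + 2 * β) (α + β) := fun k ↦ by
    rw [coeff_aeval_C_mul_X, Polynomial.coeff_divX]
    refine hmul k ?_
    convert hcoeff (k + 1) j using 2
    ring
  simp_rw [aevalAeval_eq_eval_map]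
  refine exists_powerSeries_eval_eq_C hV (by omega) hδV (hsplit 0) (hsplit 1) (hdivX 0) (hdivX 1)
    fun j k ↦ ?_
  rw [Polynomial.coeff_map]
  rw [RingHom.coe_coe, hs, coeff_aeval_C_mul_X]
  exact hmul k (hcoeff k (j + 2))

end ImplicitFunction

section PlaneSection

variable {F A B σ : Type*} [CommRing F] [CommRing A] [Algebra F A] [CommRing B] [Algebra A B]

/-- The point with parameters `(s, y)` on the plane through `x₀` spanned by the direction `lam`
and the distinguished axis `none`. -/
def planePoint (x₀ : Option σ → A) (lam : σ → A) (s y : B) : Option σ → B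
  | none => algebraMap A B (x₀ none) + y
  | some i => algebraMap A B (x₀ (some i)) + algebraMap A B (lam i) * s

/-- The restriction of a polynomial to the plane parametrized by `planePoint x₀ lam`, as a
polynomial in the parameters `s` (inner variable) and `y` (outer variable). -/
noncomputable def planeSection (x₀ : Option σ → A) (lam : σ → A) :
    MvPolynomial (Option σ) F →ₐ[F] A[X][Y] :=
  aeval (planePoint x₀ lam (Polynomial.C Polynomial.X) Polynomial.X)

theorem planeSection_X_none (x₀ : Option σ → A) (lam : σ → A) :
    planeSection (F := F) x₀ lam (X none) =
      Polynomial.C (Polynomial.C (x₀ none)) + Polynomial.X := by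
  simp [planeSection, planePoint, Polynomial.algebraMap_apply]

theorem planeSection_X_some (x₀ : Option σ → A) (lam : σ → A) (i : σ) :
    planeSection (F := F) x₀ lam (X (some i)) =
      Polynomial.C (Polynomial.C (x₀ (some i)) + Polynomial.C (lam i) * Polynomial.X) := by
  simp [planeSection, planePoint, Polynomial.algebraMap_apply]

theorem aevalAeval_planeSection [Algebra F B] [IsScalarTower F A B] (x₀ : Option σ → A)
    (lam : σ → A) (s y : B) (f : MvPolynomial (Option σ) F) :
    (planeSection x₀ lam f).aevalAeval s y = aeval (planePoint x₀ lam s y) f := by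
  suffices ((Polynomial.aevalAeval s y).restrictScalars F).comp (planeSection x₀ lam) =
      aeval (planePoint x₀ lam s y) from DFunLike.congr_fun this f
  refine algHom_ext fun o ↦ ?_
  cases o <;> simp [planeSection_X_none, planeSection_X_some, planePoint]

theorem derivative_planeSection (x₀ : Option σ → A) (lam : σ → A)
    (f : MvPolynomial (Option σ) F) :
    Polynomial.derivative (planeSection x₀ lam f) = planeSection x₀ lam (pderiv none f) := by
  induction f using MvPolynomial.induction_on with
  | C a => simp [← algebraMap_eq, Polynomial.algebraMap_apply]
  | add p q hp hq => simp only [map_add, hp, hq]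
  | mul_X p i hp =>
    rw [map_mul, Polynomial.derivative_mul, hp, pderiv_mul, map_add, map_mul, map_mul]
    cases i with
    | none => simp [planeSection_X_none]
    | some i => simp [planeSection_X_some, pderiv_X_of_ne]

theorem planeSection_coeff_zero_coeff_zero (x₀ : Option σ → A) (lam : σ → A)
    (f : MvPolynomial (Option σ) F) :
    ((planeSection x₀ lam f).coeff 0).coeff 0 = aeval x₀ f := by
  have h : planePoint x₀ lam (0 : A) 0 = x₀ := by
    funext o
    cases o <;> simp [planePoint]
  conv_rhs => rw [← h, ← aevalAeval_planeSection, Polynomial.coe_aevalAeval_eq_evalEval]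
  simp [Polynomial.coeff_zero_eq_eval_zero, Polynomial.evalEval]

theorem totalDegree_pderiv_le {τ : Type*} (i : τ) (f : MvPolynomial τ F) :
    (pderiv i f).totalDegree ≤ f.totalDegree - 1 := by
  classical
  conv_lhs => rw [f.as_sum, map_sum]
  refine totalDegree_finsetSum_le fun m hm ↦ ?_
  rw [pderiv_monomial]
  rcases eq_or_ne (m i) 0 with hmi | hmi
  · simp [hmi]
  have hdegree : m.degree = (m - Finsupp.single i 1).degree + 1 := by
    have hle := Finsupp.single_le_iff.2 (Nat.one_le_iff_ne_zero.2 hmi)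
    conv_lhs => rw [← tsub_add_cancel_of_le hle]
    simp
  have hle : m.degree ≤ f.totalDegree := le_totalDegree hm
  refine (totalDegree_monomial_le _ _).trans (?_ : (m - Finsupp.single i 1).degree ≤ _)
  omega

variable {V : ℕ → Submodule F A} [SetLike.GradedMonoid V] {α γ : ℕ} {x₀ : Option σ → A}
  {lam : σ → A}

theorem planeSection_mem_polynomialFiltration (hV : Monotone V) (hx₀ : ∀ o, x₀ o ∈ V γ)
    (hlam : ∀ i, lam i ∈ V (α + γ)) (f : MvPolynomial (Option σ) F) :
    planeSection x₀ lam f ∈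
      polynomialFiltration (polynomialFiltration V α) 0 (f.totalDegree * γ) := by
  have hC {a : A} (ha : a ∈ V γ) : Polynomial.C a ∈ polynomialFiltration V α γ :=
    C_mem_polynomialFiltration hV ha
  have hX {a : A} (ha : a ∈ V (α + γ)) :
      Polynomial.C a * Polynomial.X ∈ polynomialFiltration V α γ := fun i ↦ by
    rw [Polynomial.coeff_C_mul_X]
    split_ifs with h
    · simpa [h] using ha
    · exact zero_mem _
  have hW := polynomialFiltration_mono (c := α) hV
  refine aeval_mem_graded _ (polynomialFiltration_mono hW) (fun o ↦ ?_) f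
  cases o with
  | none =>
    refine add_mem (C_mem_polynomialFiltration hW (hC (hx₀ none)))
      (polynomialFiltration_mono hW γ.zero_le fun j ↦ ?_)
    rw [Polynomial.coeff_X]
    split_ifs
    · exact hW (Nat.zero_le _) (SetLike.one_mem_graded _)
    · exact zero_mem _
  | some i =>
    convert C_mem_polynomialFiltration (c := 0) hW (add_mem (hC (hx₀ (some i))) (hX (hlam i)))
    simp [planePoint, Polynomial.algebraMap_apply]

theorem exists_powerSeries_aeval_planePoint_eq_C (hV : Monotone V) (hx₀ : ∀ o, x₀ o ∈ V γ)
    (hlam : ∀ i, lam i ∈ V (α + γ)) {d : ℕ} {f : MvPolynomial (Option σ) F}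
    (hf : f.totalDegree ≤ d) :
    ∃ v ∈ powerSeriesFiltration V (α + 2 * (d * γ)) 0, PowerSeries.constantCoeff v = 0 ∧
      aeval (planePoint x₀ lam
        (PowerSeries.C (aeval x₀ (pderiv none f) ^ 2) * PowerSeries.X : A⟦X⟧) v) f =
        PowerSeries.C (aeval x₀ f) := by
  have h₁ : ((planeSection x₀ lam f).coeff 1).coeff 0 = aeval x₀ (pderiv none f) := by
    rw [← planeSection_coeff_zero_coeff_zero x₀ lam, ← derivative_planeSection,
      Polynomial.coeff_derivative]
    simp
  have hmem := polynomialFiltration_mono (polynomialFiltration_mono (c := α) hV)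
    (Nat.mul_le_mul_right γ hf) (planeSection_mem_polynomialFiltration hV hx₀ hlam f)
  simp_rw [← aevalAeval_planeSection, ← h₁, ← planeSection_coeff_zero_coeff_zero x₀ lam]
  exact exists_powerSeries_aevalAeval_eq_C hV hmem

end PlaneSection

section Elimination

theorem exists_mul_add_mul_eq_C {D : Type*} [CommRing D] [IsDomain D] [IsIntegrallyClosed D]
    {u g : D[X]} (hu : u.Monic) (hi : Irreducible u) (hg : ¬ u ∣ g) :
    ∃ (a b : D[X]) (r : D), r ≠ 0 ∧ u * a + g * b = Polynomial.C r := by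
  let φ := algebraMap D (FractionRing D)
  have hφ : Function.Injective φ := IsFractionRing.injective D _
  have hu0 : u.natDegree ≠ 0 := fun h ↦ hi.not_isUnit (by simp [hu.natDegree_eq_zero.1 h])
  have hcop : IsCoprime (u.map φ) (g.map φ) := by
    refine ((hu.irreducible_iff_irreducible_map_fraction_map).1 hi).coprime_iff_not_dvd.2
      fun h ↦ hg ?_
    rwa [← Polynomial.modByMonic_eq_zero_iff_dvd (hu.map φ), ← Polynomial.map_modByMonic _ hu,
      Polynomial.map_eq_zero_iff hφ, Polynomial.modByMonic_eq_zero_iff_dvd hu] at h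
  obtain ⟨a, b, -, -, h⟩ :=
    Polynomial.exists_mul_add_mul_eq_C_resultant u g le_rfl le_rfl (.inl hu0)
  refine ⟨a, b, _, fun h0 ↦ Polynomial.resultant_ne_zero _ _ hcop ?_, h⟩
  rw [Polynomial.natDegree_map_eq_of_injective hφ, Polynomial.natDegree_map_eq_of_injective hφ,
    Polynomial.resultant_map_map, h0, map_zero]

theorem dvd_of_map_eq_zero {D T : Type*} [CommRing D] [IsDomain D] [IsIntegrallyClosed D]
    [CommRing T] {u g : D[X]} (hu : u.Monic) (hi : Irreducible u) (Φ : D[X] →+* T)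
    (hΦ : ∀ r, Φ (Polynomial.C r) = 0 → r = 0) (hΦu : Φ u = 0) (hΦg : Φ g = 0) : u ∣ g := by
  by_contra hn
  obtain ⟨a, b, r, hr, h⟩ := exists_mul_add_mul_eq_C hu hi hn
  exact hr (hΦ r (by simp [← h, hΦu, hΦg]))

theorem dvd_of_dvd_C_mul {R : Type*} [CommRing R] [IsDomain R] {u g : R[X]} (hu : u.Monic)
    {r : R} (hr : r ≠ 0) (h : u ∣ Polynomial.C r * g) : u ∣ g := by
  rw [← Polynomial.modByMonic_eq_zero_iff_dvd hu] at h ⊢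
  rw [← Polynomial.smul_eq_C_mul, Polynomial.smul_modByMonic] at h
  exact (smul_eq_zero.1 h).resolve_left hr

theorem dvd_of_dvd_mul_of_mul_add_mul_eq_C {R : Type*} [CommRing R] [IsDomain R] {u p q g h : R[X]}
    {r : R} (hu : u.Monic) (hr : r ≠ 0) (hpq : u * p + h * q = Polynomial.C r)
    (hg : u ∣ g * h) : u ∣ g := by
  refine dvd_of_dvd_C_mul hu hr ?_
  rw [← hpq, show (u * p + h * q) * g = u * (p * g) + g * h * q by ring]
  exact dvd_add (dvd_mul_right _ _) (hg.mul_right _)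

end Elimination

section PlaneDegree

/-- The polynomials in `k[X][Y]` of total degree at most `n` in the two variables. -/
def planeDegreeLE (k : Type*) [CommRing k] (n : ℕ) : Submodule k k[X][Y] where
  carrier := {p | ∀ i j, (p.coeff j).coeff i ≠ 0 → i + j ≤ n}
  add_mem' {p r} hp hr i j h := by
    by_contra hn
    exact h (by simp [not_imp_comm.1 (hp i j) hn, not_imp_comm.1 (hr i j) hn])
  zero_mem' := by simp
  smul_mem' c p hp i j h := hp i j (right_ne_zero_of_mul (by simpa using h))

variable {k : Type*} [CommRing k]

theorem planeDegreeLE_mono : Monotone (planeDegreeLE k) :=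
  fun _ _ h _ hp i j hij ↦ (hp i j hij).trans h

theorem C_mem_planeDegreeLE {p : k[X]} {n : ℕ} (hp : p.natDegree ≤ n) :
    Polynomial.C p ∈ planeDegreeLE k n := by
  intro i j h
  obtain rfl | hj := eq_or_ne j 0
  · exact (Polynomial.le_natDegree_of_ne_zero (by simpa using h)).trans hp
  · simp [Polynomial.coeff_C, hj] at h

theorem X_mem_planeDegreeLE : (Polynomial.X : k[X][Y]) ∈ planeDegreeLE k 1 := by
  intro i j h
  obtain rfl | hj := eq_or_ne j 1
  · obtain rfl : i = 0 := by
      by_contra hi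
      simp [Polynomial.coeff_one, hi] at h
    rfl
  · simp [Polynomial.coeff_X, hj.symm] at h

instance planeDegreeLE.gradedMonoid : SetLike.GradedMonoid (planeDegreeLE k) where
  one_mem := C_mem_planeDegreeLE Polynomial.natDegree_one.le
  mul_mem m n p r hp hr i j h := by
    rw [Polynomial.coeff_mul, Polynomial.finsetSum_coeff] at h
    obtain ⟨x, hx, h⟩ := Finset.exists_ne_zero_of_sum_ne_zero h
    rw [Polynomial.coeff_mul] at h
    obtain ⟨y, hy, h⟩ := Finset.exists_ne_zero_of_sum_ne_zero h
    rw [Finset.HasAntidiagonal.mem_antidiagonal] at hx hy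
    have := hp _ _ (left_ne_zero_of_mul h)
    have := hr _ _ (right_ne_zero_of_mul h)
    omega

theorem exists_mem_planeDegreeLE (p : k[X][Y]) : ∃ n, p ∈ planeDegreeLE k n := by
  refine ⟨(p.support.sup fun j ↦ (p.coeff j).natDegree) + p.natDegree, fun i j h ↦ ?_⟩
  have hj : p.coeff j ≠ 0 := fun h0 ↦ h (by simp [h0])
  gcongr
  · exact (Polynomial.le_natDegree_of_ne_zero h).trans (Finset.le_sup
      (f := fun j ↦ (p.coeff j).natDegree) (Polynomial.mem_support_iff.2 hj))
  · exact Polynomial.le_natDegree_of_ne_zero hj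

/-- The substitution `p(X, Y) ↦ p(T, Z T)`, as a ring homomorphism to polynomials in the outer
variable `T` with coefficients in `k[Z]`: it turns the total degree into the degree in `T`. -/
noncomputable def dilation (k : Type*) [CommRing k] : k[X][Y] →+* k[X][Y] :=
  Polynomial.eval₂RingHom (Polynomial.mapRingHom Polynomial.C)
    (Polynomial.C Polynomial.X * Polynomial.X)

theorem coeff_coeff_dilation (p : k[X][Y]) (n j : ℕ) :
    ((dilation k p).coeff n).coeff j = if j ≤ n then (p.coeff j).coeff (n - j) else 0 := by
  rw [dilation, Polynomial.coe_eval₂RingHom, Polynomial.eval₂_eq_sum_range,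
    Polynomial.finsetSum_coeff, Polynomial.finsetSum_coeff]
  simp_rw [mul_pow, ← mul_assoc, Polynomial.coeff_mul_X_pow', ← map_pow,
    apply_ite (fun q ↦ Polynomial.coeff q j), Polynomial.coeff_mul_C, Polynomial.coe_mapRingHom,
    Polynomial.coeff_map, Polynomial.coeff_C_mul, Polynomial.coeff_X_pow, Polynomial.coeff_zero]
  rw [Finset.sum_eq_single j]
  · simp
  · intro b _ hb
    simp [hb.symm]
  · intro hj
    simp [Polynomial.coeff_eq_zero_of_natDegree_lt (by simpa using hj : p.natDegree < j)]

theorem mem_planeDegreeLE_iff_natDegree_dilation_le {n : ℕ} {p : k[X][Y]} :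
    p ∈ planeDegreeLE k n ↔ (dilation k p).natDegree ≤ n := by
  rw [Polynomial.natDegree_le_iff_coeff_eq_zero]
  refine ⟨fun h N hN ↦ ?_, fun h i j hij ↦ ?_⟩
  · ext j
    rw [coeff_coeff_dilation, Polynomial.coeff_zero, ite_eq_right_iff]
    intro hj
    by_contra hne
    have := h _ _ hne
    omega
  · by_contra! hlt
    simpa [coeff_coeff_dilation, hij] using congrArg (·.coeff j) (h (i + j) hlt)

theorem coeff_natDegree_dilation_ne_zero [Nontrivial k] {u : k[X][Y]} (hu : u.Monic) :
    (dilation k u).coeff u.natDegree ≠ 0 := fun h ↦ by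
  simpa [coeff_coeff_dilation, hu.coeff_natDegree] using congrArg (·.coeff u.natDegree) h

theorem mem_planeDegreeLE_of_mul [IsDomain k] {u v : k[X][Y]} (hu : u.Monic) (hv : v.Monic)
    (h : u * v ∈ planeDegreeLE k (u * v).natDegree) : u ∈ planeDegreeLE k u.natDegree := by
  have hu0 := coeff_natDegree_dilation_ne_zero hu
  have hv0 := coeff_natDegree_dilation_ne_zero hv
  rw [mem_planeDegreeLE_iff_natDegree_dilation_le] at h ⊢
  rw [hu.natDegree_mul hv, map_mul, Polynomial.natDegree_mul (fun h ↦ hu0 (by simp [h]))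
    fun h ↦ hv0 (by simp [h])] at h
  have := Polynomial.le_natDegree_of_ne_zero hv0
  omega

theorem modByMonic_mem_planeDegreeLE [Nontrivial k] {u : k[X][Y]} (hu : u.Monic)
    (hud : u ∈ planeDegreeLE k u.natDegree) {n : ℕ} {p : k[X][Y]} (hp : p ∈ planeDegreeLE k n) :
    p %ₘ u ∈ planeDegreeLE k n := by
  induction hN : p.natDegree using Nat.strong_induction_on generalizing p with
  | _ N ih =>
  obtain hlt | hle := lt_or_ge p.degree u.degree
  · rwa [(Polynomial.modByMonic_eq_self_iff hu).2 hlt]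
  obtain rfl | hp0 := eq_or_ne p 0
  · simp
  set c : k[X][Y] :=
    Polynomial.C p.leadingCoeff * Polynomial.X ^ (p.natDegree - u.natDegree) with hc
  have hlc0 : p.leadingCoeff ≠ 0 := Polynomial.leadingCoeff_ne_zero.2 hp0
  have hdeg := Polynomial.natDegree_le_natDegree hle
  have hcu : c * u ∈ planeDegreeLE k n := by
    have hX := SetLike.pow_mem_graded (p.natDegree - u.natDegree) (X_mem_planeDegreeLE (k := k))
    refine planeDegreeLE_mono ?_ (SetLike.mul_mem_graded
      (SetLike.mul_mem_graded (C_mem_planeDegreeLE le_rfl) hX) hud)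
    have : p.leadingCoeff.natDegree + p.natDegree ≤ n := hp _ _ (by simpa using hp0)
    simp only [smul_eq_mul, mul_one]
    omega
  have hmod : p %ₘ u = (p - c * u) %ₘ u := by
    rw [Polynomial.sub_modByMonic,
      (Polynomial.modByMonic_eq_zero_iff_dvd hu).2 (dvd_mul_left u c), sub_zero]
  rw [hmod]
  obtain h0 | h0 := eq_or_ne (p - c * u) 0
  · simp [h0]
  refine ih _ ?_ (sub_mem hp hcu) rfl
  rw [← hN]
  refine Polynomial.natDegree_lt_natDegree h0 (Polynomial.degree_sub_lt_left ?_ hp0 ?_)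
  · rw [hu.degree_mul, hc, Polynomial.degree_C_mul_X_pow _ hlc0,
      Polynomial.degree_eq_natDegree hp0, Polynomial.degree_eq_natDegree hu.ne_zero]
    norm_cast
    omega
  · rw [Polynomial.leadingCoeff_mul_monic hu, hc, Polynomial.leadingCoeff_C_mul_X_pow]

end PlaneDegree

section Interpolation

variable {k R ι : Type*} [Field k] [CommRing R] [Algebra k R]

theorem isCoprime_comap_span_X_pow (φ ψ : R →ₐ[k] k⟦X⟧) {g : R}
    (h : PowerSeries.constantCoeff (φ g) ≠ PowerSeries.constantCoeff (ψ g)) (M : ℕ) :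
    IsCoprime ((Ideal.span {(PowerSeries.X : k⟦X⟧) ^ M}).comap φ)
      ((Ideal.span {(PowerSeries.X : k⟦X⟧) ^ M}).comap ψ) := by
  have hmem (χ : R →ₐ[k] k⟦X⟧) : (g - algebraMap k R (PowerSeries.constantCoeff (χ g))) ^ M ∈
      (Ideal.span {(PowerSeries.X : k⟦X⟧) ^ M}).comap χ := by
    rw [Ideal.mem_comap, Ideal.mem_span_singleton, map_pow]
    exact pow_dvd_pow_of_dvd (PowerSeries.X_dvd_iff.2 (by simp)) M
  have hcop := ((Polynomial.isCoprime_X_sub_C_of_isUnit_sub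
    (sub_ne_zero.2 h).isUnit).map (Polynomial.aeval g).toRingHom).pow (m := M) (n := M)
  obtain ⟨a, b, hab⟩ := hcop
  simp only [AlgHom.toRingHom_eq_coe, RingHom.coe_coe, map_sub, Polynomial.aeval_X,
    Polynomial.aeval_C] at hab
  exact Ideal.isCoprime_iff_exists.2
    ⟨_, Ideal.mul_mem_left _ a (hmem φ), _, Ideal.mul_mem_left _ b (hmem ψ), hab⟩

theorem exists_forall_X_pow_dvd_sub [Finite ι] (φ : ι → R →ₐ[k] k⟦X⟧)
    (hsep : Pairwise fun P Q ↦
      ∃ g, PowerSeries.constantCoeff (φ P g) ≠ PowerSeries.constantCoeff (φ Q g))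
    (hX : ∀ P, ∃ t, φ P t = PowerSeries.X) (M : ℕ) (τ : ι → k⟦X⟧) :
    ∃ G, ∀ P, PowerSeries.X ^ M ∣ φ P G - τ P := by
  choose t ht using hX
  obtain ⟨G, hG⟩ := Ideal.exists_forall_sub_mem_ideal
    (I := fun P ↦ (Ideal.span {(PowerSeries.X : k⟦X⟧) ^ M}).comap (φ P))
    (fun P Q h ↦ (hsep h).elim fun g hg ↦ isCoprime_comap_span_X_pow _ _ hg M)
    (fun P ↦ Polynomial.aeval (t P) (PowerSeries.trunc M (τ P)))
  refine ⟨G, fun P ↦ ?_⟩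
  have hP := hG P
  rw [Ideal.mem_comap, Ideal.mem_span_singleton, map_sub, ← Polynomial.aeval_algHom_apply, ht]
    at hP
  have htrunc : PowerSeries.X ^ M ∣
      Polynomial.aeval PowerSeries.X (PowerSeries.trunc M (τ P)) - τ P := by
    rw [PowerSeries.X_pow_dvd_iff]
    intro m hm
    have hcoe : Polynomial.aeval (PowerSeries.X : k⟦X⟧) (PowerSeries.trunc M (τ P)) =
        (PowerSeries.trunc M (τ P) : k⟦X⟧) := by
      rw [Polynomial.aeval_def, PowerSeries.algebraMap_eq, Polynomial.eval₂_C_X_eq_coe]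
    rw [map_sub, hcoe, Polynomial.coeff_coe, PowerSeries.coeff_trunc, if_pos hm, sub_self]
  simpa using dvd_add hP htrunc

end Interpolation

section Bezout

/-- The polynomials in `k[X][Y]` of degree less than `e` in `Y` and of total degree at most `N`:
the normal forms modulo a monic polynomial of degree `e` that are used to count dimensions. -/
noncomputable def planeNormalForms (k : Type*) [CommRing k] (e N : ℕ) : Submodule k k[X][Y] :=
  (Polynomial.degreeLT k[X] e).restrictScalars k ⊓ planeDegreeLE k N

theorem mem_planeNormalForms {k : Type*} [CommRing k] {e N : ℕ} {p : k[X][Y]} :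
    p ∈ planeNormalForms k e N ↔ p.degree < e ∧ p ∈ planeDegreeLE k N := by
  simp [planeNormalForms, Polynomial.mem_degreeLT]

theorem modByMonic_mem_planeNormalForms {k : Type*} [CommRing k] [Nontrivial k] {u : k[X][Y]}
    (hu : u.Monic) (hud : u ∈ planeDegreeLE k u.natDegree) {N : ℕ} {p : k[X][Y]}
    (hp : p ∈ planeDegreeLE k N) : p %ₘ u ∈ planeNormalForms k u.natDegree N := by
  refine mem_planeNormalForms.2 ⟨?_, modByMonic_mem_planeDegreeLE hu hud hp⟩
  rw [← Polynomial.degree_eq_natDegree hu.ne_zero]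
  exact Polynomial.degree_modByMonic_lt p hu

variable {k : Type*} [Field k]

instance finiteDimensional_planeDegreeLE (N : ℕ) : FiniteDimensional k (planeDegreeLE k N) := by
  let coeffs : k[X][Y] →ₗ[k] (Fin (N + 1) × Fin (N + 1) → k) := LinearMap.pi fun x ↦
    Polynomial.lcoeff k x.1 ∘ₗ (Polynomial.lcoeff k[X] x.2).restrictScalars k
  refine FiniteDimensional.of_injective (coeffs ∘ₗ (planeDegreeLE k N).subtype) ?_
  rw [injective_iff_map_eq_zero]
  rintro ⟨p, hp⟩ h
  ext j i
  by_contra hne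
  have hij := hp i j (by simpa using hne)
  exact hne (congrFun h (⟨i, by omega⟩, ⟨j, by omega⟩))

instance finiteDimensional_planeNormalForms (e N : ℕ) :
    FiniteDimensional k (planeNormalForms k e N) :=
  Submodule.finiteDimensional_of_le inf_le_right

theorem finrank_planeNormalForms_add_le {e D : ℕ} (he : e ≤ D) (r : ℕ) :
    Module.finrank k (planeNormalForms k e (D + r)) ≤
      Module.finrank k (planeNormalForms k e D) + e * r := by
  let top : planeNormalForms k e (D + r) →ₗ[k] (Fin e × Fin r → k) := (LinearMap.pi fun x ↦
    Polynomial.lcoeff k (D + 1 + x.2 - x.1) ∘ₗ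
      (Polynomial.lcoeff k[X] x.1).restrictScalars k) ∘ₗ Submodule.subtype _
  have hker : (LinearMap.ker top).map (Submodule.subtype _) ≤ planeNormalForms k e D := by
    rintro _ ⟨⟨p, hp⟩, hp0, rfl⟩
    obtain ⟨hpe, hpD⟩ := mem_planeNormalForms.1 hp
    refine mem_planeNormalForms.2 ⟨hpe, fun i j hij ↦ ?_⟩
    by_contra! hlt
    have hle : i + j ≤ D + r := hpD i j hij
    have hj : j < e := by
      by_contra! hj
      exact hij (by simp [Polynomial.coeff_eq_zero_of_degree_lt
        (hpe.trans_le (Nat.cast_le.2 hj))])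
    have h0 := congrFun (LinearMap.mem_ker.1 hp0) (⟨j, hj⟩, ⟨i + j - (D + 1), by omega⟩)
    refine hij ?_
    have hidx : D + 1 + (i + j - (D + 1)) - j = i := by omega
    simpa [top, hidx] using h0
  have hrange : Module.finrank k (LinearMap.range top) ≤ e * r :=
    (Submodule.finrank_le _).trans_eq (by simp)
  have hker' := Submodule.finrank_mono hker
  rw [← (Submodule.equivSubtypeMap _ _).finrank_eq] at hker'
  have := LinearMap.finrank_range_add_finrank_ker (K := k)
    (V := planeNormalForms k e (D + r)) (V₂ := Fin e × Fin r → k) top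
  omega

/-- The map recording the first `M` coefficients of `φ P p` for every `P`. -/
noncomputable def jets {R ι : Type*} [CommRing R] [Algebra k R] (φ : ι → R →ₐ[k] k⟦X⟧) (M : ℕ) :
    R →ₗ[k] (ι × Fin M → k) :=
  LinearMap.pi fun x ↦ PowerSeries.coeff x.2 ∘ₗ (φ x.1).toLinearMap

variable {ι : Type*} {u : k[X][Y]} (φ : ι → k[X][Y] →ₐ[k] k⟦X⟧)

theorem jets_modByMonic (hφu : ∀ P, φ P u = 0) (M : ℕ) (p : k[X][Y]) :
    jets φ M (p %ₘ u) = jets φ M p := by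
  ext x
  conv_rhs => rw [← Polynomial.modByMonic_add_div p u]
  simp [jets, hφu]

theorem map_jets_planeNormalForms [Finite ι] (hu : u.Monic)
    (hud : u ∈ planeDegreeLE k u.natDegree)
    (hsep : Pairwise fun P Q ↦
      ∃ g, PowerSeries.constantCoeff (φ P g) ≠ PowerSeries.constantCoeff (φ Q g))
    (hX : ∀ P, ∃ t, φ P t = PowerSeries.X) (hφu : ∀ P, φ P u = 0) (M : ℕ) :
    ∃ D₀, ∀ D, D₀ ≤ D → (planeNormalForms k u.natDegree D).map (jets φ M) = ⊤ := by
  classical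
  have hinterp (i : ι × Fin M) : ∃ G, jets φ M G = Pi.basisFun k _ i := by
    obtain ⟨G, hG⟩ := exists_forall_X_pow_dvd_sub φ hsep hX M
      (fun P ↦ if P = i.1 then PowerSeries.X ^ (i.2 : ℕ) else 0)
    refine ⟨G, funext fun x ↦ ?_⟩
    have hx := PowerSeries.X_pow_dvd_iff.1 (hG x.1) x.2 x.2.2
    rw [map_sub, sub_eq_zero] at hx
    simp only [jets, LinearMap.pi_apply, LinearMap.comp_apply, AlgHom.toLinearMap_apply, hx,
      Pi.basisFun_apply, Pi.single_apply, Prod.ext_iff]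
    split_ifs <;> simp_all [PowerSeries.coeff_X_pow, Fin.ext_iff]
  choose G hG using hinterp
  choose b hb using fun i ↦ exists_mem_planeDegreeLE (G i)
  obtain ⟨D₀, hD₀⟩ := (Set.finite_range b).bddAbove
  refine ⟨D₀, fun D hD ↦ eq_top_iff.2 ?_⟩
  rw [← (Pi.basisFun k (ι × Fin M)).span_eq, Submodule.span_le]
  rintro _ ⟨i, rfl⟩
  exact ⟨G i %ₘ u, modByMonic_mem_planeNormalForms hu hud
    (planeDegreeLE_mono ((hD₀ ⟨i, rfl⟩).trans hD) (hb i)), by rw [jets_modByMonic φ hφu, hG]⟩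

theorem finrank_planeNormalForms_le_finrank_ker_jets (hu : u.Monic)
    (hud : u ∈ planeDegreeLE k u.natDegree) {R : k[X][Y]} {r : ℕ} (hR : R ∈ planeDegreeLE k r)
    (hreg : ∀ g, u ∣ g * R → u ∣ g) (hφu : ∀ P, φ P u = 0) {M : ℕ}
    (hφR : ∀ P, PowerSeries.X ^ M ∣ φ P R) (D : ℕ) :
    Module.finrank k (planeNormalForms k u.natDegree D) ≤ Module.finrank k (LinearMap.ker
      ((jets φ M).domRestrict (planeNormalForms k u.natDegree (D + r)))) := by
  let mulR : planeNormalForms k u.natDegree D →ₗ[k] k[X][Y] :=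
    ((Polynomial.modByMonicHom u).restrictScalars k) ∘ₗ LinearMap.mulRight k R ∘ₗ
      Submodule.subtype _
  have hmulR (p) : mulR p = (p.1 * R) %ₘ u := rfl
  have hmem (p) : mulR p ∈ planeNormalForms k u.natDegree (D + r) :=
    modByMonic_mem_planeNormalForms hu hud
      (SetLike.mul_mem_graded (mem_planeNormalForms.1 p.2).2 hR)
  have hker (p) : mulR.codRestrict _ hmem p ∈ LinearMap.ker
      ((jets φ M).domRestrict (planeNormalForms k u.natDegree (D + r))) := by
    rw [LinearMap.mem_ker, LinearMap.domRestrict_apply, LinearMap.codRestrict_apply, hmulR,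
      jets_modByMonic φ hφu]
    ext x
    have := PowerSeries.X_pow_dvd_iff.1 ((hφR x.1).mul_left (φ x.1 p)) _ x.2.2
    simpa [jets] using this
  have : Module.Finite k (LinearMap.ker
      ((jets φ M).domRestrict (planeNormalForms k u.natDegree (D + r)))) :=
    FiniteDimensional.finiteDimensional_submodule
      (V := planeNormalForms k u.natDegree (D + r)) _
  refine LinearMap.finrank_le_finrank_of_injective
    (f := (mulR.codRestrict _ hmem).codRestrict _ hker) ?_
  rw [injective_iff_map_eq_zero]
  intro p hp
  have hmod : ((p : k[X][Y]) * R) %ₘ u = 0 := congrArg (fun z ↦ (z.1 : k[X][Y])) hp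
  have hdvd := hreg _ ((Polynomial.modByMonic_eq_zero_iff_dvd hu).1 hmod)
  refine Subtype.ext (Polynomial.eq_zero_of_dvd_of_degree_lt hdvd ?_)
  rw [Polynomial.degree_eq_natDegree hu.ne_zero]
  exact (mem_planeNormalForms.1 p.2).1

/-- Dimension count: for large `D`, the `M`-jets along the arcs `φ P` are independent conditions on
the normal forms of total degree at most `D + r`, and the multiples of `R` satisfy all of them. -/
theorem card_mul_le_natDegree_mul [Fintype ι] (hu : u.Monic)
    (hud : u ∈ planeDegreeLE k u.natDegree) {R : k[X][Y]} {r : ℕ} (hR : R ∈ planeDegreeLE k r)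
    (hreg : ∀ g, u ∣ g * R → u ∣ g)
    (hsep : Pairwise fun P Q ↦
      ∃ g, PowerSeries.constantCoeff (φ P g) ≠ PowerSeries.constantCoeff (φ Q g))
    (hX : ∀ P, ∃ t, φ P t = PowerSeries.X) (hφu : ∀ P, φ P u = 0) {M : ℕ}
    (hφR : ∀ P, PowerSeries.X ^ M ∣ φ P R) :
    Fintype.card ι * M ≤ u.natDegree * r := by
  obtain ⟨D₀, hD₀⟩ := map_jets_planeNormalForms φ hu hud hsep hX hφu M
  obtain ⟨D, hD, huD⟩ : ∃ D, D₀ ≤ D ∧ u.natDegree ≤ D := ⟨_, le_max_left .., le_max_right ..⟩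
  have hle := finrank_planeNormalForms_add_le (k := k) huD r
  have hker := finrank_planeNormalForms_le_finrank_ker_jets φ hu hud hR hreg hφu hφR D
  have hrank := LinearMap.finrank_range_add_finrank_ker (K := k)
    (V := planeNormalForms k u.natDegree (D + r)) (V₂ := ι × Fin M → k)
    ((jets φ M).domRestrict (planeNormalForms k u.natDegree (D + r)))
  rw [LinearMap.range_domRestrict, hD₀ _ (hD.trans (D.le_add_right r)), finrank_top,
    Module.finrank_fintype_fun_eq_card, Fintype.card_prod, Fintype.card_fin] at hrank
  omega

theorem exists_aevalAeval_eq_X (a : k) {c : k} (hc : c ≠ 0) (y : k⟦X⟧) : ∃ t : k[X][Y],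
    t.aevalAeval (PowerSeries.C a + PowerSeries.C c * PowerSeries.X) y = PowerSeries.X := by
  refine ⟨Polynomial.C (Polynomial.C c⁻¹ * (Polynomial.X - Polynomial.C a)), ?_⟩
  rw [Polynomial.aevalAeval_C]
  simp only [map_mul, map_sub, Polynomial.aeval_X, Polynomial.aeval_C, PowerSeries.algebraMap_eq,
    add_sub_cancel_left]
  rw [← mul_assoc, ← map_mul, inv_mul_cancel₀ hc, map_one, one_mul]

end Bezout

section Hensel

variable {A : Type*} [CommRing A]

theorem C_X_dvd_iff_map_constantCoeff_eq_zero (E : A⟦X⟧[X]) :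
    Polynomial.C PowerSeries.X ∣ E ↔ E.map PowerSeries.constantCoeff = 0 := by
  simp [Polynomial.C_dvd_iff_dvd_coeff, PowerSeries.X_dvd_iff, Polynomial.ext_iff]

theorem exists_eq_C_X_pow_mul {E : A⟦X⟧[X]} (hE : E ≠ 0) :
    ∃ k E', E = Polynomial.C (PowerSeries.X ^ k) * E' ∧ E'.map PowerSeries.constantCoeff ≠ 0 := by
  have hfin : FiniteMultiplicity (Polynomial.C PowerSeries.X) E := by
    obtain ⟨j, hj⟩ := Polynomial.ext_iff.not.1 hE |> not_forall.1
    obtain ⟨m, hm⟩ := PowerSeries.ext_iff.not.1 hj |> not_forall.1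
    refine ⟨m, fun h ↦ hm ?_⟩
    rw [← Polynomial.C_pow, Polynomial.C_dvd_iff_dvd_coeff] at h
    simpa using PowerSeries.X_pow_dvd_iff.1 (h j) m m.lt_succ_self
  obtain ⟨E', hE', hndvd⟩ := hfin.exists_eq_pow_mul_and_not_dvd
  exact ⟨_, E', by rwa [Polynomial.C_pow],
    (C_X_dvd_iff_map_constantCoeff_eq_zero E').not.1 hndvd⟩

-- Divide `Q - Q'` by the largest power of `T` it contains and compare constant terms.
theorem eq_of_mul_eq_mul_of_map_constantCoeff_eq [IsDomain A] {Q Q' S S' : A⟦X⟧[X]}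
    (hQ : Q.Monic) (hQ' : Q'.Monic) (h : Q * S = Q' * S')
    (hQ₀ : Q.map PowerSeries.constantCoeff = Q'.map PowerSeries.constantCoeff) {a b : A[X]} {r : A}
    (hr : r ≠ 0)
    (hab : Q.map PowerSeries.constantCoeff * a + S.map PowerSeries.constantCoeff * b =
      Polynomial.C r) :
    Q = Q' := by
  by_contra hne
  obtain ⟨k, E, hE, hE₀⟩ := exists_eq_C_X_pow_mul (sub_ne_zero.2 hne)
  have hXk : (PowerSeries.X ^ k : A⟦X⟧) ≠ 0 := pow_ne_zero _ PowerSeries.X_ne_zero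
  have hdegree : E.degree < (Q.map PowerSeries.constantCoeff).degree := by
    have hQQ' : Q.degree = Q'.degree := by
      rw [← hQ.degree_map PowerSeries.constantCoeff, hQ₀, hQ'.degree_map]
    have := Polynomial.degree_sub_lt_left hQQ' hQ.ne_zero
      (hQ.leadingCoeff.trans hQ'.leadingCoeff.symm)
    rwa [hE, Polynomial.degree_mul, Polynomial.degree_C hXk, zero_add,
      ← hQ.degree_map PowerSeries.constantCoeff] at this
  have hdvd : Q' ∣ E * S :=
    dvd_of_dvd_C_mul hQ' hXk (Dvd.intro (S' - S) (by
      rw [← mul_assoc, ← hE]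
      linear_combination -h))
  set Q₀ := Q.map PowerSeries.constantCoeff
  set S₀ := S.map PowerSeries.constantCoeff
  set E₀ := E.map PowerSeries.constantCoeff
  have hdvd₀ : Q₀ ∣ E₀ * S₀ := by
    rw [hQ₀, ← Polynomial.map_mul]
    exact Polynomial.map_dvd _ hdvd
  have hdvdE₀ : Q₀ ∣ Polynomial.C r * E₀ := by
    rw [← hab, show (Q₀ * a + S₀ * b) * E₀ = Q₀ * (a * E₀) + E₀ * S₀ * b by ring]
    exact dvd_add (dvd_mul_right _ _) (hdvd₀.mul_right b)
  exact hE₀ (Polynomial.eq_zero_of_dvd_of_degree_lt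
    (dvd_of_dvd_C_mul (hQ.map _) hr hdvdE₀) (Polynomial.degree_map_le.trans_lt hdegree))

end Hensel

section FirstIntegrals

variable {F R A : Type*} [CommRing F] [CommRing R] [Algebra F R] [CommRing A] [Algebra F A]

/-- The elements of `R` that are constant along the formal arc `κ : R → A⟦T⟧`. -/
noncomputable def firstIntegrals (κ : R →ₐ[F] A⟦X⟧) : Subalgebra F R :=
  ((⊥ : Subalgebra A A⟦X⟧).restrictScalars F).comap κ

variable {κ : R →ₐ[F] A⟦X⟧}

theorem mem_firstIntegrals {p : R} :
    p ∈ firstIntegrals κ ↔ κ p = PowerSeries.C (PowerSeries.constantCoeff (κ p)) := by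
  refine ⟨?_, fun h ↦ ⟨_, h.symm⟩⟩
  rintro ⟨a, ha⟩
  simp [← show (PowerSeries.C a : A⟦X⟧) = κ p from ha]

variable [IsDomain A]

theorem mem_firstIntegrals_of_mul_mem {p q : R} (hp : p ∈ firstIntegrals κ)
    (hp₀ : PowerSeries.constantCoeff (κ p) ≠ 0) (hpq : p * q ∈ firstIntegrals κ) :
    q ∈ firstIntegrals κ := by
  rw [mem_firstIntegrals] at *
  have hne : κ p ≠ 0 := fun h ↦ hp₀ (by simp [h])
  refine mul_left_cancel₀ hne ?_
  conv_rhs => rw [hp]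
  rw [← map_mul, hpq]
  simp

theorem coeff_mem_firstIntegrals {Q S a b : R[X]} {r : R} (hQ : Q.Monic)
    (hQS : ∀ j, (Q * S).coeff j ∈ firstIntegrals κ) (hab : Q * a + S * b = Polynomial.C r)
    (hr : PowerSeries.constantCoeff (κ r) ≠ 0) (j : ℕ) : Q.coeff j ∈ firstIntegrals κ := by
  set κ₀ : R →+* A := PowerSeries.constantCoeff.comp κ with hκ₀
  have hmap (P : R[X]) :
      (P.map (κ : R →+* A⟦X⟧)).map PowerSeries.constantCoeff = P.map κ₀ := by
    rw [Polynomial.map_map]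
  have hmapC (P : R[X]) :
      (P.map (PowerSeries.C.comp κ₀)).map PowerSeries.constantCoeff = P.map κ₀ := by
    rw [Polynomial.map_map, ← RingHom.comp_assoc]
    rfl
  have hprod : Q.map (κ : R →+* A⟦X⟧) * S.map (κ : R →+* A⟦X⟧) =
      Q.map (PowerSeries.C.comp κ₀) * S.map (PowerSeries.C.comp κ₀) := by
    rw [← Polynomial.map_mul, ← Polynomial.map_mul]
    ext1 i
    rw [Polynomial.coeff_map, Polynomial.coeff_map]
    exact mem_firstIntegrals.1 (hQS i)
  have h := eq_of_mul_eq_mul_of_map_constantCoeff_eq (hQ.map _) (hQ.map _) hprod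
    ((hmap Q).trans (hmapC Q).symm) hr (a := a.map κ₀) (b := b.map κ₀) (by
      rw [hmap, hmap, ← Polynomial.map_mul, ← Polynomial.map_mul, ← Polynomial.map_add, hab,
        Polynomial.map_C]
      rfl)
  simpa [mem_firstIntegrals, hκ₀] using congrArg (Polynomial.coeff · j) h

end FirstIntegrals

section MonicFactors

theorem exists_monic_irreducible_map_eq_zero {D T : Type*} [CommRing D] [IsDomain D]
    [UniqueFactorizationMonoid D] [CommRing T] [IsDomain T] (Φ : D[X] →+* T) {g : D[X]}
    (hg : g.Monic) (h0 : Φ g = 0) :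
    ∃ Q S : D[X], Q.Monic ∧ S.Monic ∧ Irreducible Q ∧ Φ Q = 0 ∧ g = Q * S := by
  obtain ⟨m, hm, u, hu⟩ := UniqueFactorizationMonoid.exists_prime_factors g hg.ne_zero
  have hprod : Φ m.prod = 0 :=
    (mul_eq_zero.1 (by rw [← map_mul, hu, h0])).resolve_right (u.isUnit.map Φ).ne_zero
  rw [map_multiset_prod, Multiset.prod_eq_zero_iff, Multiset.mem_map] at hprod
  obtain ⟨p, hp, hp0⟩ := hprod
  obtain ⟨s, rfl⟩ : p ∣ g := (Multiset.dvd_prod hp).trans ⟨u, hu.symm⟩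
  have hlc : p.leadingCoeff * s.leadingCoeff = 1 := by
    rw [← Polynomial.leadingCoeff_mul, hg.leadingCoeff]
  refine ⟨p * Polynomial.C s.leadingCoeff, s * Polynomial.C p.leadingCoeff, ?_, ?_, ?_, ?_, ?_⟩
  · rw [Polynomial.Monic, Polynomial.leadingCoeff_mul, Polynomial.leadingCoeff_C, hlc]
  · rw [Polynomial.Monic, Polynomial.leadingCoeff_mul, Polynomial.leadingCoeff_C, mul_comm, hlc]
  · have hunit : IsUnit (Polynomial.C s.leadingCoeff) :=
      Polynomial.isUnit_C.2 (.of_mul_eq_one _ ((mul_comm _ _).trans hlc))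
    exact (irreducible_mul_isUnit hunit).2 (hm p hp).irreducible
  · rw [map_mul, hp0, zero_mul]
  · rw [mul_mul_mul_comm, mul_comm (Polynomial.C _), ← map_mul, hlc, map_one, mul_one]

end MonicFactors

section Separability

-- Take `μ` monic with `p ∣ μ(g)`: then `μ(f) = μ(g) - (μ(g) - μ(f))` lies in the ideal.
theorem exists_map_sub_C_mul_add_map_mul_eq_C {F R : Type*} [Field F] [CommRing R] [Algebra F R]
    {f : R} (hf : Transcendental F f) (g : F[X]) {p : F[X]} (hp : p ≠ 0) :
    ∃ (a b : R[X]) (r : R), r ≠ 0 ∧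
      (g.map (algebraMap F R) - Polynomial.C f) * a + p.map (algebraMap F R) * b =
        Polynomial.C r := by
  have : Module.Finite F (AdjoinRoot p) := (AdjoinRoot.powerBasis hp).finite
  obtain ⟨μ, hμ, hroot⟩ := IsIntegral.of_finite F (AdjoinRoot.mk p g)
  obtain ⟨b, hb⟩ : p ∣ Polynomial.aeval g μ := by
    rw [← AdjoinRoot.mk_eq_zero, ← hroot, Polynomial.aeval_def, Polynomial.hom_eval₂]
    rfl
  obtain ⟨a, ha⟩ := Polynomial.sub_dvd_eval_sub (g.map (algebraMap F R)) (Polynomial.C f)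
    (μ.map (algebraMap F R[X]))
  have hg : (μ.map (algebraMap F R[X])).eval (g.map (algebraMap F R)) =
      (Polynomial.aeval g μ).map (algebraMap F R) := by
    rw [Polynomial.eval_map_algebraMap]
    exact Polynomial.aeval_algHom_apply (Polynomial.mapAlgHom (Algebra.ofId F R)) g μ
  have hCf : (μ.map (algebraMap F R[X])).eval (Polynomial.C f) =
      Polynomial.C (Polynomial.aeval f μ) := by
    rw [Polynomial.eval_map_algebraMap]
    exact Polynomial.aeval_algHom_apply (Polynomial.CAlgHom (R := F)) f μ
  rw [hg, hCf, hb, Polynomial.map_mul] at ha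
  exact ⟨-a, b.map (algebraMap F R), _, fun h ↦ hμ.ne_zero (transcendental_iff.1 hf μ h),
    by linear_combination ha⟩

end Separability

section OptionEquivLeft

variable {F τ : Type*} [CommRing F]

theorem natDegree_optionEquivLeft_le (p : MvPolynomial (Option τ) F) :
    (optionEquivLeft F τ p).natDegree ≤ p.totalDegree := by
  rw [natDegree_optionEquivLeft]
  exact degreeOf_le_totalDegree p none

theorem optionEquivLeft_rename_some (p : MvPolynomial τ F) :
    optionEquivLeft F τ (rename some p) = Polynomial.C p := by
  suffices ((optionEquivLeft F τ).toAlgHom.comp (rename some)) = Polynomial.CAlgHom from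
    DFunLike.congr_fun this p
  exact algHom_ext fun i ↦ by simp

theorem optionEquivLeft_pderiv_none (p : MvPolynomial (Option τ) F) :
    optionEquivLeft F τ (pderiv none p) = Polynomial.derivative (optionEquivLeft F τ p) := by
  induction p using MvPolynomial.induction_on with
  | C a => simp
  | add p q hp hq => simp only [map_add, hp, hq]
  | mul_X p i hp =>
    rw [pderiv_mul, map_mul, Polynomial.derivative_mul, map_add, map_mul, map_mul, hp]
    cases i <;> simp [pderiv_X_of_ne]

theorem eval_map_optionEquivLeft (x : Option τ → F) (p : MvPolynomial (Option τ) F) :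
    ((optionEquivLeft F τ p).map (eval (x ∘ some))).eval (x none) = eval x p := by
  rw [← optionEquivLeft_elim_eval]
  congr 2
  funext o
  cases o <;> rfl

/-- A polynomial of degree `d ≥ 1`, monic in the distinguished variable `none`, in which the power
`none ^ d` occurs. -/
structure IsNormalized (f : MvPolynomial (Option τ) F) (d : ℕ) : Prop where
  monic : (optionEquivLeft F τ f).Monic
  natDegree_eq : (optionEquivLeft F τ f).natDegree = d
  totalDegree_le : f.totalDegree ≤ d
  pos : 1 ≤ d

namespace IsNormalized

variable {f : MvPolynomial (Option τ) F} {d : ℕ}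

theorem natDegree_pos (hf : IsNormalized f d) : 0 < (optionEquivLeft F τ f).natDegree :=
  hf.natDegree_eq ▸ hf.pos

theorem sub_C [Nontrivial F] (hf : IsNormalized f d) (a : F) : IsNormalized (f - C a) d := by
  refine ⟨?_, ?_, (totalDegree_sub_C_le f a).trans hf.totalDegree_le, hf.pos⟩ <;>
    rw [map_sub, optionEquivLeft_C]
  · refine hf.monic.sub_of_left (Polynomial.degree_C_le.trans_lt ?_)
    exact Polynomial.natDegree_pos_iff_degree_pos.1 hf.natDegree_pos
  · rw [Polynomial.natDegree_sub_C, hf.natDegree_eq]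

theorem transcendental {F : Type*} [Field F] {f : MvPolynomial (Option τ) F}
    (hf : IsNormalized f d) : Transcendental F f := by
  rw [transcendental_iff]
  intro μ hμ
  have hcomp : (μ.map (algebraMap F (MvPolynomial τ F))).comp (optionEquivLeft F τ f) = 0 := by
    rw [Polynomial.comp, Polynomial.eval₂_map, ← map_zero (optionEquivLeft F τ), ← hμ,
      ← Polynomial.aeval_algHom_apply, Polynomial.aeval_def]
    rfl
  rcases Polynomial.comp_eq_zero_iff.1 hcomp with h | h
  · exact (Polynomial.map_eq_zero_iff (algebraMap F (MvPolynomial τ F)).injective).1 h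
  · exact absurd (by rw [h.2, Polynomial.natDegree_C]) hf.natDegree_pos.ne'

end IsNormalized

variable [IsDomain F]

theorem totalDegree_eq_natDegree_of_monic_mul {Q S : MvPolynomial (Option τ) F}
    (hQ : (optionEquivLeft F τ Q).Monic) (hS : (optionEquivLeft F τ S).Monic)
    (h : (Q * S).totalDegree ≤ (optionEquivLeft F τ (Q * S)).natDegree) :
    Q.totalDegree = (optionEquivLeft F τ Q).natDegree := by
  have hQ0 : Q ≠ 0 := fun h ↦ hQ.ne_zero (by rw [h, map_zero])
  have hS0 : S ≠ 0 := fun h ↦ hS.ne_zero (by rw [h, map_zero])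
  rw [totalDegree_mul_of_isDomain hQ0 hS0, map_mul, hQ.natDegree_mul hS] at h
  have := natDegree_optionEquivLeft_le Q
  have := natDegree_optionEquivLeft_le S
  omega

end OptionEquivLeft

section DifferencePolynomial

variable {F σ : Type*} [Field F]

/-- The polynomial `f(X) - f(x)`, as a univariate polynomial in `X none`: the indices `inl i` stand
for the other coordinates of `X`, the indices `inr o` for the coordinates of `x`. -/
noncomputable def differencePolynomial (f : MvPolynomial (Option σ) F) :
    (MvPolynomial (σ ⊕ Option σ) F)[X] :=
  Polynomial.mapAlgHom (rename Sum.inl) (optionEquivLeft F σ f) -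
    Polynomial.C (rename Sum.inr f)

section Eval₂

variable {B : Type*} [CommRing B] [Algebra F B]

/-- The evaluation of polynomials in the two points `X`, `x` of `differencePolynomial` at the
points `P`, `Q`. -/
noncomputable def evalPair (P Q : Option σ → B) : (MvPolynomial (σ ⊕ Option σ) F)[X] →+* B :=
  Polynomial.eval₂RingHom
    (aeval (Sum.elim (P ∘ some) Q) : MvPolynomial (σ ⊕ Option σ) F →ₐ[F] B) (P none)

theorem evalPair_C (P Q : Option σ → B) (r : MvPolynomial (σ ⊕ Option σ) F) :
    evalPair P Q (Polynomial.C r) = aeval (Sum.elim (P ∘ some) Q) r := by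
  simp [evalPair]

theorem evalPair_differencePolynomial (P Q : Option σ → B) (f : MvPolynomial (Option σ) F) :
    evalPair P Q (differencePolynomial f) = aeval P f - aeval Q f := by
  have hP : (evalPair P Q).comp ((Polynomial.mapAlgHom (rename Sum.inl)).comp
      (optionEquivLeft F σ).toAlgHom : MvPolynomial (Option σ) F →ₐ[F] _).toRingHom =
        (aeval P : MvPolynomial (Option σ) F →ₐ[F] B).toRingHom := by
    refine ringHom_ext (fun r ↦ by simp [evalPair]) fun o ↦ ?_
    cases o <;> simp [evalPair]
  rw [differencePolynomial, map_sub, evalPair_C, aeval_rename]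
  congr 1
  exact DFunLike.congr_fun hP f

end Eval₂

theorem natDegree_differencePolynomial (f : MvPolynomial (Option σ) F) :
    (differencePolynomial f).natDegree = (optionEquivLeft F σ f).natDegree := by
  rw [differencePolynomial, Polynomial.natDegree_sub_C]
  exact Polynomial.natDegree_map_eq_of_injective (rename_injective _ Sum.inl_injective) _

theorem leadingCoeff_differencePolynomial {f : MvPolynomial (Option σ) F}
    (hf : 0 < (optionEquivLeft F σ f).natDegree) :
    (differencePolynomial f).leadingCoeff =
      rename Sum.inl (optionEquivLeft F σ f).leadingCoeff := by
  rw [Polynomial.leadingCoeff, natDegree_differencePolynomial, differencePolynomial,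
    Polynomial.coeff_sub, Polynomial.coeff_C_of_ne_zero hf.ne', sub_zero,
    Polynomial.coe_mapAlgHom, Polynomial.coeff_map]
  rfl

theorem IsNormalized.differencePolynomial_monic {f : MvPolynomial (Option σ) F} {d : ℕ}
    (hf : IsNormalized f d) : (differencePolynomial f).Monic := by
  rw [Polynomial.Monic, leadingCoeff_differencePolynomial hf.natDegree_pos, hf.monic.leadingCoeff,
    map_one]

theorem totalDegree_optionEquivLeft_symm_differencePolynomial_le (f : MvPolynomial (Option σ) F) :
    ((optionEquivLeft F _).symm (differencePolynomial f)).totalDegree ≤ f.totalDegree := by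
  have h : (optionEquivLeft F _).symm (differencePolynomial f) =
      rename (Option.map Sum.inl) f - rename (some ∘ Sum.inr) f := by
    rw [AlgEquiv.symm_apply_eq, map_sub, ← rename_rename, optionEquivLeft_rename_some,
      differencePolynomial]
    congr 1
    suffices (Polynomial.mapAlgHom (rename Sum.inl)).comp (optionEquivLeft F σ).toAlgHom =
        ((optionEquivLeft F (σ ⊕ Option σ)).toAlgHom.comp (rename (Option.map Sum.inl))) from
      DFunLike.congr_fun this f
    refine algHom_ext fun o ↦ ?_
    cases o <;> simp
  rw [h]
  exact (totalDegree_sub _ _).trans (max_le (totalDegree_rename_le _ _) (totalDegree_rename_le _ _))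

/-- The specialization of the coordinates `X (some i)` to `P (some i)`. -/
noncomputable def specializeFirst (P : Option σ → F) :
    MvPolynomial (σ ⊕ Option σ) F →ₐ[F] MvPolynomial (Option σ) F :=
  aeval (Sum.elim (fun i ↦ C (P (some i))) X)

theorem differencePolynomial_map_specializeFirst (P : Option σ → F)
    (f : MvPolynomial (Option σ) F) :
    (differencePolynomial f).map (specializeFirst P : _ →+* MvPolynomial (Option σ) F) =
      ((optionEquivLeft F σ f).map (eval (P ∘ some))).map (algebraMap F _) - Polynomial.C f := by
  rw [differencePolynomial, Polynomial.coe_mapAlgHom, Polynomial.map_sub, Polynomial.map_map,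
    Polynomial.map_map, Polynomial.map_C]
  congr 2
  · refine ringHom_ext (fun r ↦ ?_) fun i ↦ ?_ <;> simp [specializeFirst, algebraMap_eq]
  · rw [RingHom.coe_coe, specializeFirst, aeval_rename]
    exact aeval_X_left_apply f

theorem totalDegree_specializeFirst_le (P : Option σ → F) (p : MvPolynomial (σ ⊕ Option σ) F) :
    (specializeFirst P p).totalDegree ≤ p.totalDegree := by
  refine (totalDegree_aeval_le (γ := 1) (fun o ↦ ?_) p).trans (mul_one _).le
  cases o <;> simp

end DifferencePolynomial

section GenericArc

variable {F σ : Type*} [Field F] {f : MvPolynomial (Option σ) F}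

local notation "R" => MvPolynomial (σ ⊕ Option σ) F
local notation "K" => FractionRing (MvPolynomial (σ ⊕ Option σ) F)

theorem injective_aeval_algebraMap_X_inr :
    Function.Injective (aeval (fun o ↦ algebraMap R K (X (Sum.inr o))) :
      MvPolynomial (Option σ) F →ₐ[F] K) := by
  have h : (aeval (fun o ↦ algebraMap R K (X (Sum.inr o))) : MvPolynomial (Option σ) F →ₐ[F] K) =
      (IsScalarTower.toAlgHom F R K).comp (rename Sum.inr) := algHom_ext fun o ↦ by simp
  rw [h]
  exact (IsFractionRing.injective R K).comp (rename_injective _ Sum.inr_injective)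

-- For `T = 1` the segment ends at the generic point.
theorem injective_aeval_segment :
    Function.Injective (aeval (Sum.elim
      (fun i ↦ PowerSeries.C (algebraMap R K (X (Sum.inr (some i)))) +
        PowerSeries.C (algebraMap R K (X (Sum.inl i) - X (Sum.inr (some i)))) * PowerSeries.X)
      fun o ↦ PowerSeries.C (algebraMap R K (X (Sum.inr o)))) : R →ₐ[F] K⟦X⟧) := by
  set ω : R →ₐ[F] K[X] := aeval (Sum.elim
    (fun i ↦ Polynomial.C (algebraMap R K (X (Sum.inr (some i)))) +
      Polynomial.C (algebraMap R K (X (Sum.inl i) - X (Sum.inr (some i)))) * Polynomial.X)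
    fun o ↦ Polynomial.C (algebraMap R K (X (Sum.inr o)))) with hω
  have hone : ((Polynomial.aeval (1 : K)).restrictScalars F).comp ω =
      IsScalarTower.toAlgHom F R K := by
    refine algHom_ext fun o ↦ ?_
    cases o <;> simp [hω]
  have hinj : Function.Injective ω := by
    refine Function.Injective.of_comp (f := Polynomial.aeval (1 : K)) ?_
    convert IsFractionRing.injective R K using 1
    exact congrArg DFunLike.coe hone
  convert (Polynomial.coe_injective K).comp hinj using 1
  change _ = ⇑(((Polynomial.coeToPowerSeries.algHom K).restrictScalars F).comp ω)
  refine congrArg DFunLike.coe (algHom_ext fun o ↦ ?_)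
  cases o <;> simp [hω]

theorem exists_arc_evalPair (hf : pderiv none f ≠ 0) :
    ∃ (P : Option σ → K⟦X⟧) (x : Option σ → K), (∀ o, PowerSeries.constantCoeff (P o) = x o) ∧
      Function.Injective (aeval x : MvPolynomial (Option σ) F →ₐ[F] K) ∧
      Function.Injective (aeval (Sum.elim (P ∘ some) fun o ↦ PowerSeries.C (x o)) :
        R →ₐ[F] K⟦X⟧) ∧
      aeval P f = PowerSeries.C (aeval x f) := by
  let x (o : Option σ) : K := algebraMap R K (X (Sum.inr o))
  set δ := aeval x (pderiv none f) with hδ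
  have hδ0 : δ ≠ 0 := fun h ↦ hf (injective_aeval_algebraMap_X_inr (h.trans (map_zero _).symm))
  let lam (i : σ) : K := algebraMap R K (X (Sum.inl i) - X (Sum.inr (some i))) / δ ^ 2
  let V : ℕ → Submodule F K := fun _ ↦ ⊤
  have : SetLike.GradedMonoid V := { one_mem := trivial, mul_mem := fun _ _ _ _ _ _ ↦ trivial }
  obtain ⟨v, -, hv0, hv⟩ := exists_powerSeries_aeval_planePoint_eq_C (V := V) (α := 0) (γ := 0)
    (x₀ := x) (lam := lam) (f := f) (fun _ _ _ ↦ le_rfl) (fun _ ↦ trivial) (fun _ ↦ trivial) le_rfl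
  refine ⟨_, x, fun o ↦ ?_, injective_aeval_algebraMap_X_inr, ?_, hv⟩
  · cases o <;> simp [planePoint, hv0]
  · convert injective_aeval_segment (F := F) (σ := σ) using 4
    funext i
    simp only [Function.comp_apply, planePoint, lam, PowerSeries.algebraMap_apply, ← mul_assoc,
      ← map_mul, Algebra.algebraMap_self_apply, ← hδ]
    rw [div_mul_cancel₀ _ (pow_ne_zero 2 hδ0)]

end GenericArc

section GenericIrreducibility

variable {F σ : Type*} [Field F]

theorem le_adjoin_singleton_of_forall_sub_dvd {τ : Type*}
    {S : Subalgebra F (MvPolynomial τ F)} {h : MvPolynomial τ F} (hh : h ∈ S)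
    (hdeg : h.totalDegree ≠ 0)
    (hdiv : ∀ p q, p ≠ 0 → p ∈ S → p * q ∈ S → q ∈ S)
    (hdvd : ∀ p ∈ S, h - C (constantCoeff h) ∣ p - C (constantCoeff p)) :
    S ≤ Algebra.adjoin F {h} := by
  set h₁ := h - C (constantCoeff h) with hh₁
  have hle : h.totalDegree ≤ h₁.totalDegree := by
    simpa [hh₁] using totalDegree_sub_C_le h₁ (-constantCoeff h)
  have hh₁0 : h₁ ≠ 0 := fun h0 ↦ hdeg (by simpa [h0] using hle)
  have hC (c : F) (T : Subalgebra F (MvPolynomial τ F)) : C c ∈ T := T.algebraMap_mem c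
  intro p
  induction hn : p.totalDegree using Nat.strong_induction_on generalizing p with
  | _ n ih =>
  intro hp
  obtain ⟨q, hq⟩ := hdvd p hp
  obtain rfl | hq0 := eq_or_ne q 0
  · rw [sub_eq_zero.1 (hq.trans (mul_zero _))]
    exact hC _ _
  have hqS : q ∈ S := hdiv h₁ q hh₁0 (S.sub_mem hh (hC _ _)) (hq ▸ S.sub_mem hp (hC _ _))
  have hdegq : h₁.totalDegree + q.totalDegree ≤ n := by
    rw [← totalDegree_mul_of_isDomain hh₁0 hq0, ← hq, ← hn]
    exact totalDegree_sub_C_le p _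
  rw [← sub_add_cancel p (C (constantCoeff p)), hq]
  refine add_mem (mul_mem (sub_mem (Algebra.self_mem_adjoin_singleton F h) (hC _ _)) ?_) (hC _ _)
  exact ih _ (by omega) rfl hqS

variable {f : MvPolynomial (Option σ) F} {d : ℕ}

theorem IsNormalized.natDegree_eq_and_isUnit_leadingCoeff (hf : IsNormalized f d)
    {h s : MvPolynomial (Option σ) F} {c : F} {e e' : ℕ} (hhs : h * s = C c - f)
    (he : h.totalDegree ≤ e) (he' : s.totalDegree ≤ e') (hd : e + e' = d) :
    (optionEquivLeft F σ h).natDegree = e ∧ IsUnit (optionEquivLeft F σ h).leadingCoeff := by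
  have hmul : optionEquivLeft F σ h * optionEquivLeft F σ (-s) = optionEquivLeft F σ (f - C c) := by
    rw [← map_mul]
    exact congrArg _ (by linear_combination -hhs)
  have hfc := hf.sub_C c
  have hlead := congrArg Polynomial.leadingCoeff hmul
  rw [Polynomial.leadingCoeff_mul, hfc.monic.leadingCoeff] at hlead
  refine ⟨?_, .of_mul_eq_one _ hlead⟩
  have hnat := congrArg Polynomial.natDegree hmul
  rw [hfc.natDegree_eq, Polynomial.natDegree_mul (fun h0 ↦ by simp [h0] at hlead)
    (fun h0 ↦ by simp [h0] at hlead)] at hnat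
  have := (natDegree_optionEquivLeft_le h).trans he
  have := (natDegree_optionEquivLeft_le (-s)).trans ((totalDegree_neg s).le.trans he')
  lia

variable {Q S : (MvPolynomial (σ ⊕ Option σ) F)[X]}

theorem IsNormalized.totalDegree_specializeFirst_coeff_le (hf : IsNormalized f d) (hQ : Q.Monic)
    (hS : S.Monic) (hQS : differencePolynomial f = Q * S) (P : Option σ → F) (j : ℕ) :
    (specializeFirst P (Q.coeff j)).totalDegree ≤ Q.natDegree := by
  set E := optionEquivLeft F (σ ⊕ Option σ)
  have hsymm (T) : E (E.symm T) = T := E.apply_symm_apply T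
  have htotal : (E.symm Q).totalDegree = Q.natDegree := by
    have h := totalDegree_eq_natDegree_of_monic_mul (Q := E.symm Q) (S := E.symm S)
      (by rwa [hsymm]) (by rwa [hsymm])
    rw [← map_mul, hsymm, hsymm, ← hQS, natDegree_differencePolynomial, hf.natDegree_eq] at h
    exact h ((totalDegree_optionEquivLeft_symm_differencePolynomial_le f).trans hf.totalDegree_le)
  calc (specializeFirst P (Q.coeff j)).totalDegree
      ≤ (Q.coeff j).totalDegree := totalDegree_specializeFirst_le P _
    _ = ((E (E.symm Q)).coeff j).totalDegree := by rw [hsymm]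
    _ ≤ (E.symm Q).totalDegree := totalDegree_coeff_optionEquivLeft_le _ _ _ _
    _ = Q.natDegree := htotal

theorem specializeFirst_coeff_mem_firstIntegrals {A : Type*} [CommRing A] [IsDomain A] [Algebra F A]
    {κ : MvPolynomial (Option σ) F →ₐ[F] A⟦X⟧}
    (hκ : ∀ p, PowerSeries.constantCoeff (κ p) = 0 → p = 0) (hfκ : f ∈ firstIntegrals κ)
    (hf : Transcendental F f) {P : Option σ → F} (hP : eval P (pderiv none f) ≠ 0) (hQ : Q.Monic)
    (hQS : differencePolynomial f = Q * S) (j : ℕ) :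
    specializeFirst P (Q.coeff j) ∈ firstIntegrals κ := by
  set g : F[X] := (optionEquivLeft F σ f).map (eval (P ∘ some)) with hg
  have hg' : g.derivative ≠ 0 := by
    intro h
    apply hP
    rw [← eval_map_optionEquivLeft, optionEquivLeft_pderiv_none, ← Polynomial.derivative_map, ← hg,
      h, Polynomial.eval_zero]
  set Q₁ := Q.map (specializeFirst P : _ →+* MvPolynomial (Option σ) F) with hQ₁
  set S₁ := S.map (specializeFirst P : _ →+* MvPolynomial (Option σ) F) with hS₁
  have hprod : Q₁ * S₁ = g.map (algebraMap F _) - Polynomial.C f := by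
    rw [hQ₁, hS₁, ← Polynomial.map_mul, ← hQS, differencePolynomial_map_specializeFirst]
  have hder : g.derivative.map (algebraMap F (MvPolynomial (Option σ) F)) =
      Q₁.derivative * S₁ + Q₁ * S₁.derivative := by
    rw [← Polynomial.derivative_mul, hprod, Polynomial.derivative_sub, Polynomial.derivative_C,
      sub_zero]
    exact (Polynomial.derivative_map _ _).symm
  obtain ⟨a, b, r, hr, hab⟩ := exists_map_sub_C_mul_add_map_mul_eq_C hf g hg'
  rw [hder, ← hprod] at hab
  have hcoeff (j) : (Q₁ * S₁).coeff j ∈ firstIntegrals κ := by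
    rw [hprod, Polynomial.coeff_sub, Polynomial.coeff_map, Polynomial.coeff_C]
    refine sub_mem (Subalgebra.algebraMap_mem _ _) ?_
    split_ifs
    exacts [hfκ, zero_mem _]
  have hQcoeff : Q₁.coeff j ∈ firstIntegrals κ :=
    coeff_mem_firstIntegrals (hQ.map _) hcoeff (a := S₁.derivative * b)
      (b := Q₁ * a + Q₁.derivative * b) (by rw [← hab]; ring) (fun h ↦ hr (hκ r h)) j
  rwa [hQ₁, Polynomial.coeff_map] at hQcoeff

theorem IsNormalized.exists_mem_firstIntegrals_differencePolynomial_dvd {A : Type*} [CommRing A]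
    [IsDomain A] [Algebra F A] (hf : IsNormalized f d) {κ : MvPolynomial (Option σ) F →ₐ[F] A⟦X⟧}
    (hκ : ∀ p, PowerSeries.constantCoeff (κ p) = 0 → p = 0) (hfκ : f ∈ firstIntegrals κ)
    {P : Option σ → F} (hP : eval P (pderiv none f) ≠ 0) (hQ : Q.Monic) (hQ₁ : Q ≠ 1) (hS : S.Monic)
    (hQS : differencePolynomial f = Q * S)
    (hdvd : ∀ p ∈ firstIntegrals κ, Q ∣ differencePolynomial p) :
    ∃ h ∈ firstIntegrals κ, h.totalDegree ≠ 0 ∧ h.totalDegree ≤ Q.natDegree ∧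
      differencePolynomial h ∣ Q := by
  have hh := specializeFirst_coeff_mem_firstIntegrals hκ hfκ hf.transcendental hP hQ hQS 0
  have hhs : specializeFirst P (Q.coeff 0) * specializeFirst P (S.coeff 0) =
      C (((optionEquivLeft F σ f).map (eval (P ∘ some))).coeff 0) - f := by
    have h := congrArg (Polynomial.coeff · 0) (differencePolynomial_map_specializeFirst P f)
    simpa [hQS, Polynomial.mul_coeff_zero, algebraMap_eq] using h
  set h := specializeFirst P (Q.coeff 0)
  have hle : h.totalDegree ≤ Q.natDegree := hf.totalDegree_specializeFirst_coeff_le hQ hS hQS P 0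
  have hd : Q.natDegree + S.natDegree = d := by
    rw [← hQ.natDegree_mul hS, ← hQS, natDegree_differencePolynomial, hf.natDegree_eq]
  obtain ⟨hnat, hunit⟩ := hf.natDegree_eq_and_isUnit_leadingCoeff hhs hle
    (hf.totalDegree_specializeFirst_coeff_le hS hQ (hQS.trans (mul_comm _ _)) P 0) hd
  have hpos : 0 < Q.natDegree := Nat.pos_of_ne_zero fun h0 ↦ hQ₁ (hQ.natDegree_eq_zero.1 h0)
  have heq := Polynomial.eq_leadingCoeff_mul_of_monic_of_dvd_of_natDegree_le hQ (hdvd h hh)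
    (by rw [natDegree_differencePolynomial, hnat])
  rw [leadingCoeff_differencePolynomial (hnat ▸ hpos)] at heq
  refine ⟨h, hh, ?_, hle, ?_⟩
  · exact (hpos.trans_le (hnat ▸ natDegree_optionEquivLeft_le h)).ne'
  · rw [heq, (Polynomial.isUnit_C.2 (hunit.map (rename Sum.inl))).mul_left_dvd]

theorem sub_C_constantCoeff_dvd_of_differencePolynomial_dvd {p q : MvPolynomial (Option σ) F}
    (h : differencePolynomial p ∣ differencePolynomial q) :
    p - C (constantCoeff p) ∣ q - C (constantCoeff q) := by
  have hmap := map_dvd (evalPair (X : Option σ → MvPolynomial (Option σ) F) 0) h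
  simpa only [evalPair_differencePolynomial, aeval_X_left_apply, aeval_zero, algebraMap_eq]
    using hmap

theorem constantCoeff_aeval {A τ : Type*} [CommRing A] [Algebra F A] {P : τ → A⟦X⟧} {x : τ → A}
    (hx : ∀ o, PowerSeries.constantCoeff (P o) = x o) (p : MvPolynomial τ F) :
    PowerSeries.constantCoeff (aeval P p) = aeval x p := by
  have hcomp : PowerSeries.constantCoeff.comp (algebraMap F A⟦X⟧) = algebraMap F A :=
    RingHom.ext fun r ↦ by simp [PowerSeries.algebraMap_apply]
  rw [map_aeval, hcomp, funext hx]
  rfl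

theorem powerSeriesC_aeval {A τ : Type*} [CommRing A] [Algebra F A] (x : τ → A)
    (p : MvPolynomial τ F) :
    PowerSeries.C (aeval x p) = aeval (fun o ↦ PowerSeries.C (x o)) p := by
  have hcomp : PowerSeries.C.comp (algebraMap F A) = algebraMap F A⟦X⟧ :=
    RingHom.ext fun r ↦ PowerSeries.algebraMap_apply.symm
  rw [map_aeval, hcomp]
  rfl

theorem evalPair_C_differencePolynomial_eq_zero {A : Type*} [CommRing A] [Algebra F A]
    {P : Option σ → A⟦X⟧} {x : Option σ → A} (hx : ∀ o, PowerSeries.constantCoeff (P o) = x o)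
    {p : MvPolynomial (Option σ) F}
    (hp : p ∈ firstIntegrals (aeval P : MvPolynomial (Option σ) F →ₐ[F] A⟦X⟧)) :
    evalPair P (fun o ↦ PowerSeries.C (x o)) (differencePolynomial p) = 0 := by
  rw [evalPair_differencePolynomial, sub_eq_zero, mem_firstIntegrals.1 hp, constantCoeff_aeval hx,
    powerSeriesC_aeval]

theorem IsNormalized.irreducible_differencePolynomial (hf : IsNormalized f d) {P₀ : Option σ → F}
    (hP₀ : eval P₀ (pderiv none f) ≠ 0)
    (hind : ∀ (g : F[X]) (h : MvPolynomial (Option σ) F), f = Polynomial.aeval h g →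
      g.natDegree ≤ 1) :
    Irreducible (differencePolynomial f) := by
  obtain ⟨P, x, hx, hxinj, hPinj, hPf⟩ :=
    exists_arc_evalPair (f := f) fun h ↦ hP₀ (by rw [h, map_zero])
  set κ : MvPolynomial (Option σ) F →ₐ[F] _ := aeval P
  have hinj (p) (hp : PowerSeries.constantCoeff (κ p) = 0) : p = 0 :=
    hxinj (by rw [← constantCoeff_aeval hx, hp, map_zero])
  have hfκ : f ∈ firstIntegrals κ := ⟨_, hPf.symm⟩
  obtain ⟨Q, S, hQ, hS, hQi, hQ0, hQS⟩ := exists_monic_irreducible_map_eq_zero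
    (evalPair P fun o ↦ PowerSeries.C (x o)) hf.differencePolynomial_monic
    (evalPair_C_differencePolynomial_eq_zero hx hfκ)
  have hdvd (p) (hp : p ∈ firstIntegrals κ) : Q ∣ differencePolynomial p := by
    refine dvd_of_map_eq_zero hQ hQi _ (fun r hr ↦ hPinj ?_) hQ0
      (evalPair_C_differencePolynomial_eq_zero hx hp)
    rw [← evalPair_C, hr, map_zero]
  obtain ⟨h, hhκ, hh0, hhQ, hdiff⟩ := hf.exists_mem_firstIntegrals_differencePolynomial_dvd hinj hfκ
    hP₀ hQ (fun h ↦ hQi.not_isUnit (h ▸ isUnit_one)) hS hQS hdvd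
  have hadjoin : f ∈ Algebra.adjoin F {h} :=
    le_adjoin_singleton_of_forall_sub_dvd hhκ hh0
      (fun p q hp hpκ hpq ↦ mem_firstIntegrals_of_mul_mem hpκ (mt (hinj p) hp) hpq)
      (fun p hp ↦ sub_C_constantCoeff_dvd_of_differencePolynomial_dvd (hdiff.trans (hdvd p hp)))
      hfκ
  rw [Algebra.adjoin_singleton_eq_range_aeval] at hadjoin
  obtain ⟨g, hg⟩ := hadjoin
  have hle : d ≤ Q.natDegree := by
    obtain ⟨a, b, rfl⟩ := Polynomial.exists_eq_X_add_C_of_natDegree_le_one (hind g h hg.symm)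
    rw [← hf.natDegree_eq]
    refine (natDegree_optionEquivLeft_le f).trans (le_trans ?_ hhQ)
    rw [← show Polynomial.aeval h (Polynomial.C a * Polynomial.X + Polynomial.C b) = f from hg]
    simp only [map_add, map_mul, Polynomial.aeval_C, Polynomial.aeval_X, ← Algebra.smul_def]
    refine (totalDegree_add _ _).trans (max_le (totalDegree_smul_le a h) ?_)
    rw [algebraMap_eq, totalDegree_C]
    exact Nat.zero_le _
  have hS1 : S = 1 := by
    refine hS.natDegree_eq_zero.1 ?_
    have := natDegree_differencePolynomial f
    rw [hQS, hQ.natDegree_mul hS, hf.natDegree_eq] at this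
    omega
  rwa [hQS, hS1, mul_one]

end GenericIrreducibility

section ContactBound

theorem map_mem_planeDegreeLE {A B : Type*} [CommRing A] [CommRing B] (f : A →+* B) {n : ℕ}
    {p : A[X][Y]} (hp : p ∈ planeDegreeLE A n) :
    p.map (Polynomial.mapRingHom f) ∈ planeDegreeLE B n := fun i j hij ↦ by
  refine hp i j fun h ↦ hij ?_
  rw [Polynomial.coeff_map, Polynomial.coe_mapRingHom, Polynomial.coeff_map, h, map_zero]

theorem aevalAeval_map {A B : Type*} [CommRing A] [CommRing B] (f : A →+* B) (s y : A⟦X⟧)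
    (p : A[X][Y]) :
    (p.map (Polynomial.mapRingHom f)).aevalAeval (PowerSeries.map f s) (PowerSeries.map f y) =
      PowerSeries.map f (p.aevalAeval s y) := by
  suffices (Polynomial.aevalAeval (PowerSeries.map f s) (PowerSeries.map f y) :
        B[X][Y] →ₐ[B] B⟦X⟧).toRingHom.comp (Polynomial.mapRingHom (Polynomial.mapRingHom f)) =
      (PowerSeries.map f).comp (Polynomial.aevalAeval s y : A[X][Y] →ₐ[A] A⟦X⟧).toRingHom from
    DFunLike.congr_fun this p
  refine Polynomial.ringHom_ext' (Polynomial.ringHom_ext (fun a ↦ ?_) ?_) ?_ <;>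
    simp

theorem dvd_of_X_pow_dvd_aevalAeval {A : Type*} [CommRing A] [IsDomain A]
    [UniqueFactorizationMonoid A] {u R : A[X][Y]} (hu : u.Monic) (hi : Irreducible u)
    (hud : u ∈ planeDegreeLE A u.natDegree) {r M : ℕ} (hR : R ∈ planeDegreeLE A r) (a : A) {c : A}
    (hc : c ≠ 0) {y : A⟦X⟧}
    (h0 : u.aevalAeval (PowerSeries.C a + PowerSeries.C c * PowerSeries.X) y = 0)
    (hdvd : PowerSeries.X ^ M ∣ R.aevalAeval (PowerSeries.C a + PowerSeries.C c * PowerSeries.X) y)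
    (hM : u.natDegree * r < M) : u ∣ R := by
  by_contra hnd
  obtain ⟨p, q, t, ht, hpq⟩ := exists_mul_add_mul_eq_C hu hi hnd
  obtain ⟨K, _, ι, hι⟩ : ∃ (K : Type _) (_ : Field K) (ι : A →+* K), Function.Injective ι :=
    ⟨FractionRing A, inferInstance, algebraMap _ _, IsFractionRing.injective _ _⟩
  let s : K⟦X⟧ := PowerSeries.C (ι a) + PowerSeries.C (ι c) * PowerSeries.X
  have hmap (g : A[X][Y]) : (g.map (Polynomial.mapRingHom ι)).aevalAeval s (PowerSeries.map ι y) =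
      PowerSeries.map ι
        (g.aevalAeval (PowerSeries.C a + PowerSeries.C c * PowerSeries.X) y) := by
    rw [← aevalAeval_map, map_add, map_mul, PowerSeries.map_C, PowerSeries.map_C,
      PowerSeries.map_X]
  have hreg (g : K[X][Y]) (hg : u.map (Polynomial.mapRingHom ι) ∣
      g * R.map (Polynomial.mapRingHom ι)) : u.map (Polynomial.mapRingHom ι) ∣ g := by
    have hpq' := congrArg (Polynomial.map (Polynomial.mapRingHom ι)) hpq
    rw [Polynomial.map_add, Polynomial.map_mul, Polynomial.map_mul, Polynomial.map_C,
      Polynomial.coe_mapRingHom] at hpq'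
    exact dvd_of_dvd_mul_of_mul_add_mul_eq_C (hu.map _) ((Polynomial.map_ne_zero_iff hι).2 ht)
      hpq' hg
  have hcount := card_mul_le_natDegree_mul (ι := Unit)
    (fun _ ↦ Polynomial.aevalAeval s (PowerSeries.map ι y)) (hu.map (Polynomial.mapRingHom ι))
    (by rw [hu.natDegree_map]; exact map_mem_planeDegreeLE ι hud) (map_mem_planeDegreeLE ι hR)
    hreg (fun _ _ h ↦ (h rfl).elim)
    (fun _ ↦ exists_aevalAeval_eq_X (ι a) ((map_ne_zero_iff ι hι).2 hc) _)
    (fun _ ↦ by rw [hmap, h0, map_zero])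
    (M := M) (fun _ ↦ by
      rw [hmap, ← PowerSeries.map_X ι, ← map_pow]
      exact map_dvd _ hdvd)
  rw [hu.natDegree_map, Fintype.card_unit, one_mul] at hcount
  omega

end ContactBound

section JetMatrix

theorem exists_det_submatrix_ne_zero {K m n : Type*} [Field K] [Finite m] [Fintype n]
    [DecidableEq n] {M : Matrix m n K} (hM : LinearIndependent K M.col) :
    ∃ ρ : n → m, (M.submatrix ρ id).det ≠ 0 := by
  obtain ⟨κ, a, ha, hspan, hli⟩ := exists_linearIndependent' K M.row
  have := Fintype.ofFinite m
  have : Fintype κ := @Fintype.ofFinite κ (.of_injective a ha)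
  have hcard : Fintype.card n = Fintype.card κ := by
    rw [← finrank_span_eq_card hli, hspan, ← Matrix.rank_eq_finrank_span_row,
      ← Matrix.rank_transpose, LinearIndependent.rank_matrix (M := M.transpose) hM]
  let E := Fintype.equivOfCardEq hcard
  have hrows : LinearIndependent K (M.submatrix (a ∘ E) id).row := hli.comp E E.injective
  exact ⟨a ∘ E, ((Matrix.isUnit_iff_isUnit_det _).1
    (Matrix.linearIndependent_rows_iff_isUnit.1 hrows)).ne_zero⟩

variable {A : Type*} [CommRing A] {m n e : ℕ}

/-- The monomial `s ^ i * y ^ j`, indexed by the pair `(i, j)` of exponents. -/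
noncomputable def boxMonomial (A : Type*) [CommRing A] (z : Fin m × Fin n) : A[X][Y] :=
  Polynomial.monomial z.2 (Polynomial.monomial z.1 1)

theorem boxMonomial_eq (z : Fin m × Fin n) :
    boxMonomial A z = Polynomial.C Polynomial.X ^ (z.1 : ℕ) * Polynomial.X ^ (z.2 : ℕ) := by
  rw [boxMonomial, ← Polynomial.C_mul_X_pow_eq_monomial, ← Polynomial.X_pow_eq_monomial, map_pow]

theorem coeff_coeff_boxMonomial (z : Fin m × Fin n) (i j : ℕ) :
    ((boxMonomial A z).coeff j).coeff i = if (z.1 : ℕ) = i ∧ (z.2 : ℕ) = j then 1 else 0 := by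
  rw [boxMonomial, Polynomial.coeff_monomial]
  split_ifs with h₁ h₂ h₂ <;> simp_all [Polynomial.coeff_monomial]

theorem boxMonomial_mem_planeDegreeLE (z : Fin m × Fin n) :
    boxMonomial A z ∈ planeDegreeLE A (m + n) := fun i j hij ↦ by
  rw [coeff_coeff_boxMonomial] at hij
  have := z.1.2
  have := z.2.2
  split_ifs at hij with h
  · omega
  · exact (hij rfl).elim

theorem sum_smul_boxMonomial_mem_planeDegreeLE (a : Fin m × Fin n → A) :
    ∑ z, a z • boxMonomial A z ∈ planeDegreeLE A (m + n) :=
  sum_mem fun z _ ↦ Submodule.smul_mem _ _ (boxMonomial_mem_planeDegreeLE z)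

theorem coeff_coeff_sum_smul_boxMonomial (a : Fin m × Fin n → A) (z : Fin m × Fin n) :
    ((∑ x, a x • boxMonomial A x).coeff z.2).coeff z.1 = a z := by
  simp only [Polynomial.finsetSum_coeff, Polynomial.coeff_smul, coeff_coeff_boxMonomial,
    smul_eq_mul, mul_ite, mul_one, mul_zero, Fin.val_inj, ← Prod.ext_iff]
  simp

theorem eq_zero_of_dvd_sum_smul_boxMonomial [Nontrivial A] {u : A[X][Y]} (hu : u.Monic)
    (hn : n ≤ u.natDegree) {a : Fin m × Fin n → A} (h : u ∣ ∑ z, a z • boxMonomial A z) :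
    a = 0 := by
  have hdegree : (∑ z, a z • boxMonomial A z).degree < u.degree := by
    rw [Polynomial.degree_eq_natDegree hu.ne_zero, ← Polynomial.mem_degreeLT]
    refine sum_mem fun z _ ↦ Submodule.smul_of_tower_mem _ _ (Polynomial.mem_degreeLT.2 ?_)
    exact (Polynomial.degree_monomial_le _ _).trans_lt (by exact_mod_cast z.2.2.trans_le hn)
  have hzero : ∑ z, a z • boxMonomial A z = 0 := by
    by_contra h0
    exact hu.not_dvd_of_degree_lt h0 hdegree h
  funext z
  rw [← coeff_coeff_sum_smul_boxMonomial a z, hzero]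
  simp

theorem eq_sum_smul_boxMonomial {p : A[X][Y]}
    (hp : ∀ i j, (p.coeff j).coeff i ≠ 0 → i < e ∧ j < e) :
    p = ∑ z : Fin e × Fin e, (p.coeff z.2).coeff z.1 • boxMonomial A z := by
  ext j i
  by_cases h : i < e ∧ j < e
  · exact (coeff_coeff_sum_smul_boxMonomial (fun z ↦ (p.coeff z.2).coeff z.1)
      (⟨i, h.1⟩, ⟨j, h.2⟩)).symm
  · rw [not_imp_comm.1 (hp i j) h]
    simp only [Polynomial.finsetSum_coeff, Polynomial.coeff_smul, coeff_coeff_boxMonomial]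
    refine (Finset.sum_eq_zero fun z _ ↦ ?_).symm
    rw [if_neg (by rintro ⟨rfl, rfl⟩; exact h ⟨z.1.2, z.2.2⟩), smul_zero]

/-- The matrix of the coefficients of orders `ρ x` of the expansions of the monomials
`boxMonomial A z` along the formal arc `φ`. -/
noncomputable def jetMatrix (φ : A[X][Y] →ₐ[A] A⟦X⟧) (ρ : Fin e × Fin e → ℕ) :
    Matrix (Fin e × Fin e) (Fin e × Fin e) A :=
  Matrix.of fun x z ↦ PowerSeries.coeff (ρ x) (φ (boxMonomial A z))

theorem exists_det_jetMatrix_ne_zero_of_forall [IsDomain A] {φ : A[X][Y] →ₐ[A] A⟦X⟧} {M : ℕ}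
    (hφ : ∀ a : Fin e × Fin e → A, PowerSeries.X ^ M ∣ φ (∑ z, a z • boxMonomial A z) → a = 0) :
    ∃ ρ : Fin e × Fin e → ℕ, (∀ x, ρ x < M) ∧ (jetMatrix φ ρ).det ≠ 0 := by
  obtain ⟨K, _, _, _⟩ : ∃ (K : Type _) (_ : Field K) (_ : Algebra A K), IsFractionRing A K :=
    ⟨FractionRing A, inferInstance, inferInstance, inferInstance⟩
  let N : Matrix (Fin M) (Fin e × Fin e) A :=
    Matrix.of fun k z ↦ PowerSeries.coeff k (φ (boxMonomial A z))
  have hN : LinearIndependent A N.col := by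
    refine Fintype.linearIndependent_iff.2 fun a ha ↦ congrFun (hφ a ?_)
    refine PowerSeries.X_pow_dvd_iff.2 fun k hk ↦ ?_
    simpa [N, Finset.sum_apply] using congrFun ha ⟨k, hk⟩
  have hinj : Function.Injective ((Algebra.linearMap A K).compLeft (Fin M)) :=
    (IsFractionRing.injective A K).comp_left
  have hNK : LinearIndependent K (N.map (algebraMap A K)).col :=
    (LinearIndependent.iff_fractionRing A K).1 (hN.map' _ (LinearMap.ker_eq_bot.2 hinj))
  obtain ⟨ρ, hρ⟩ := exists_det_submatrix_ne_zero hNK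
  refine ⟨fun x ↦ ρ x, fun x ↦ (ρ x).2, fun hdet ↦ hρ ?_⟩
  have hmap : (N.map (algebraMap A K)).submatrix ρ id =
      (algebraMap A K).mapMatrix (jetMatrix φ fun x ↦ ρ x) := rfl
  rw [hmap, ← RingHom.map_det, hdet, map_zero]

theorem exists_det_jetMatrix_ne_zero [IsDomain A] [UniqueFactorizationMonoid A] {u : A[X][Y]}
    (hu : u.Monic) (hi : Irreducible u) (hud : u ∈ planeDegreeLE A u.natDegree) (a : A) {c : A}
    (hc : c ≠ 0) {y : A⟦X⟧}
    (h0 : u.aevalAeval (PowerSeries.C a + PowerSeries.C c * PowerSeries.X) y = 0) :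
    ∃ ρ : Fin u.natDegree × Fin u.natDegree → ℕ, (∀ x, ρ x ≤ 2 * u.natDegree ^ 2) ∧
      (jetMatrix (Polynomial.aevalAeval (PowerSeries.C a + PowerSeries.C c * PowerSeries.X) y)
        ρ).det ≠ 0 := by
  simp_rw [← Nat.lt_succ_iff]
  refine exists_det_jetMatrix_ne_zero_of_forall fun b hb ↦ ?_
  have hmem := sum_smul_boxMonomial_mem_planeDegreeLE b
  exact eq_zero_of_dvd_sum_smul_boxMonomial hu le_rfl
    (dvd_of_X_pow_dvd_aevalAeval hu hi hud hmem a hc h0 hb (by grind))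

end JetMatrix

section JetMatrix

variable {A : Type*} [CommRing A]

theorem det_coeff_coeff_eq_one {d : ℕ} {p : Fin d × Fin d → A[X][Y]}
    (hlead : ∀ z, (p z).coeff z.2 = Polynomial.X ^ (z.1 : ℕ))
    (hdeg : ∀ z, (p z).natDegree ≤ z.2) :
    (Matrix.of fun x z ↦ ((p z).coeff (x.2 : ℕ)).coeff (x.1 : ℕ) :
      Matrix (Fin d × Fin d) (Fin d × Fin d) A).det = 1 := by
  set T : Matrix (Fin d × Fin d) (Fin d × Fin d) A :=
    Matrix.of fun x z ↦ ((p z).coeff (x.2 : ℕ)).coeff (x.1 : ℕ) with hT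
  have htri : T.BlockTriangular Prod.snd := fun x z hxz ↦ by
    rw [hT, Matrix.of_apply, Polynomial.coeff_eq_zero_of_natDegree_lt ((hdeg z).trans_lt hxz),
      Polynomial.coeff_zero]
  rw [htri.det]
  refine Finset.prod_eq_one fun j _ ↦ ?_
  suffices T.toSquareBlock Prod.snd j = 1 by rw [this, Matrix.det_one]
  ext ⟨⟨x₁, x₂⟩, hx⟩ ⟨⟨z₁, z₂⟩, hz⟩
  obtain rfl : x₂ = j := hx
  obtain rfl : z₂ = x₂ := hz
  simp [hT, Matrix.toSquareBlock_def, hlead (z₁, z₂), Polynomial.coeff_X_pow, Matrix.one_apply,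
    Fin.val_inj]

theorem det_jetMatrix_eq {d : ℕ} (φ : A[X][Y] →ₐ[A] A⟦X⟧) (ρ : Fin d × Fin d → ℕ)
    {p : Fin d × Fin d → A[X][Y]} (hlead : ∀ z, (p z).coeff z.2 = Polynomial.X ^ (z.1 : ℕ))
    (hdeg : ∀ z, (p z).natDegree ≤ z.2) (hbox : ∀ z j, ((p z).coeff j).natDegree < d) :
    (jetMatrix φ ρ).det = (Matrix.of fun x z ↦ PowerSeries.coeff (ρ x) (φ (p z))).det := by
  have hmul : (Matrix.of fun x z ↦ PowerSeries.coeff (ρ x) (φ (p z))) =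
      jetMatrix φ ρ * Matrix.of fun x z ↦ ((p z).coeff (x.2 : ℕ)).coeff (x.1 : ℕ) := by
    ext x z
    conv_lhs => rw [Matrix.of_apply, eq_sum_smul_boxMonomial (e := d) (p := p z) fun i j hij ↦
      ⟨(Polynomial.le_natDegree_of_ne_zero hij).trans_lt (hbox z j),
        (Polynomial.le_natDegree_of_ne_zero fun h ↦ hij (by rw [h, Polynomial.coeff_zero])).trans_lt
          ((hdeg z).trans_lt z.2.2)⟩]
    simp [jetMatrix, Matrix.mul_apply, mul_comm]
  rw [hmul, Matrix.det_mul, det_coeff_coeff_eq_one hlead hdeg, mul_one]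

/-- The monomials `boxMonomial A z`, replaced by multiples of `U` in the `(d - deg U) ^ 2` degrees
where this is possible. The change of basis is unitriangular, hence preserves jet determinants. -/
noncomputable def adaptedBasis (U : A[X][Y]) {d : ℕ} (z : Fin d × Fin d) : A[X][Y] :=
  if (z.1 : ℕ) < d - U.natDegree ∧ U.natDegree ≤ z.2 then
    Polynomial.C (Polynomial.X ^ (z.1 : ℕ)) * Polynomial.X ^ (z.2 - U.natDegree) * U
  else boxMonomial A z

variable {U : A[X][Y]} {d : ℕ}

theorem adaptedBasis_coeff_snd [Nontrivial A] (hU : U.Monic) (z : Fin d × Fin d) :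
    (adaptedBasis U z).coeff z.2 = Polynomial.X ^ (z.1 : ℕ) := by
  rw [adaptedBasis]
  split_ifs with h
  · rw [mul_assoc, Polynomial.coeff_C_mul, ← (Nat.sub_add_cancel h.2 : _ = (z.2 : ℕ))]
    conv_lhs => rw [Nat.add_sub_cancel, add_comm, Polynomial.coeff_X_pow_mul, hU.coeff_natDegree]
    rw [mul_one]
  · rw [boxMonomial, Polynomial.coeff_monomial_same, ← Polynomial.X_pow_eq_monomial]

theorem natDegree_adaptedBasis_le (z : Fin d × Fin d) :
    (adaptedBasis U z).natDegree ≤ z.2 := by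
  rw [adaptedBasis]
  split_ifs with h
  · rw [mul_assoc]
    refine (Polynomial.natDegree_C_mul_le _ _).trans (Polynomial.natDegree_mul_le.trans ?_)
    have := Polynomial.natDegree_X_pow_le (R := A[X]) (z.2 - U.natDegree)
    omega
  · exact Polynomial.natDegree_monomial_le _

theorem natDegree_adaptedBasis_coeff_lt (hU : U ∈ planeDegreeLE A U.natDegree)
    (z : Fin d × Fin d) (j : ℕ) : ((adaptedBasis U z).coeff j).natDegree < d := by
  rw [adaptedBasis]
  split_ifs with h
  · rw [mul_assoc, Polynomial.coeff_C_mul, Polynomial.coeff_X_pow_mul']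
    have hX := Polynomial.natDegree_X_pow_le (R := A) z.1
    have hcoeff (i : ℕ) : (U.coeff i).natDegree ≤ U.natDegree :=
      Polynomial.natDegree_le_iff_coeff_eq_zero.2 fun k hk ↦ by
        by_contra hne
        have := hU k i hne
        omega
    split_ifs
    · refine Polynomial.natDegree_mul_le.trans_lt ?_
      have := hcoeff (j - (z.2 - U.natDegree))
      omega
    · have := z.1.2
      simp only [mul_zero, Polynomial.natDegree_zero]
      omega
  · rw [boxMonomial, Polynomial.coeff_monomial]
    split_ifs
    · exact (Polynomial.natDegree_monomial_le _).trans_lt z.1.2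
    · simpa using Nat.zero_lt_of_lt z.1.2

theorem sq_sub_le_card_filter (d e : ℕ) :
    (d - e) ^ 2 ≤ (Finset.univ.filter fun z : Fin d × Fin d ↦
      (z.1 : ℕ) < d - e ∧ e ≤ (z.2 : ℕ)).card := by
  have hcard := Finset.card_le_card_of_injOn (s := Finset.univ)
    (t := Finset.univ.filter fun z : Fin d × Fin d ↦ (z.1 : ℕ) < d - e ∧ e ≤ (z.2 : ℕ))
    (fun x : Fin (d - e) × Fin (d - e) ↦ ((⟨x.1, by omega⟩, ⟨x.2 + e, by omega⟩) : Fin d × Fin d))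
    (fun x _ ↦ by simp) (fun x _ y _ hxy ↦ by
      simpa [Fin.val_inj, ← Prod.ext_iff] using hxy)
  simpa [sq] using hcard

theorem pow_dvd_det_jetMatrix [Nontrivial A] (hU : U.Monic) (hUd : U ∈ planeDegreeLE A U.natDegree)
    (φ : A[X][Y] →ₐ[A] A⟦X⟧) (ρ : Fin d × Fin d → ℕ) {π : A}
    (hπ : ∀ k, π ∣ PowerSeries.coeff k (φ U)) :
    π ^ ((d - U.natDegree) ^ 2) ∣ (jetMatrix φ ρ).det := by
  have hentry (x z : Fin d × Fin d) : ∃ w, PowerSeries.coeff (ρ x) (φ (adaptedBasis U z)) =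
      (if (z.1 : ℕ) < d - U.natDegree ∧ U.natDegree ≤ z.2 then π else 1) * w := by
    rw [adaptedBasis]
    split_ifs
    · rw [map_mul, PowerSeries.coeff_mul]
      exact Finset.dvd_sum fun y _ ↦ (hπ _).mul_left _
    · exact ⟨_, (one_mul _).symm⟩
  choose w hw using hentry
  rw [det_jetMatrix_eq φ ρ (adaptedBasis_coeff_snd hU) natDegree_adaptedBasis_le
    (natDegree_adaptedBasis_coeff_lt hUd)]
  simp_rw [hw]
  have hrow := Matrix.det_mul_row (fun z : Fin d × Fin d ↦
    if (z.1 : ℕ) < d - U.natDegree ∧ U.natDegree ≤ z.2 then π else 1) (Matrix.of w)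
  simp only [Matrix.of_apply] at hrow
  rw [hrow, Finset.prod_ite, Finset.prod_const,
    Finset.prod_const_one, mul_one]
  exact (pow_dvd_pow π (sq_sub_le_card_filter d U.natDegree)).mul_right _

end JetMatrix

section JetMatrixDegree

theorem totalDegree_det_le {F ι n : Type*} [CommRing F] [Fintype n] [DecidableEq n]
    {M : Matrix n n (MvPolynomial ι F)} {D : ℕ} (hM : ∀ x z, (M x z).totalDegree ≤ D) :
    M.det.totalDegree ≤ Fintype.card n * D := by
  rw [Matrix.det_apply]
  refine totalDegree_finsetSum_le fun s _ ↦ (totalDegree_smul_le _ _).trans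
    ((totalDegree_finsetProd _ _).trans ((Finset.sum_le_sum fun x _ ↦ hM _ _).trans ?_))
  simp

theorem totalDegree_det_jetMatrix_le {F ι : Type*} [Field F] {d B K : ℕ}
    {c : MvPolynomial ι F} (hc : c.totalDegree ≤ B) {y : (MvPolynomial ι F)⟦X⟧}
    (hy : y ∈ powerSeriesFiltration (restrictTotalDegree ι F) B 0) {ρ : Fin d × Fin d → ℕ}
    (hρ : ∀ x, ρ x ≤ K) :
    (jetMatrix (Polynomial.aevalAeval (PowerSeries.C c * PowerSeries.X) y) ρ).det.totalDegree ≤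
      d ^ 2 * (B * K) := by
  have hs : PowerSeries.C c * PowerSeries.X ∈
      powerSeriesFiltration (restrictTotalDegree ι F) B 0 := by
    rw [mul_comm]
    exact X_mul_mem_powerSeriesFiltration (C_mem_powerSeriesFiltration restrictTotalDegree_mono
      ((mem_restrictTotalDegree ..).2 hc))
  refine (totalDegree_det_le fun x z ↦ ?_).trans_eq
    (by rw [Fintype.card_prod, Fintype.card_fin, sq])
  have hmem : (boxMonomial (MvPolynomial ι F) z).aevalAeval (PowerSeries.C c * PowerSeries.X) y ∈
      powerSeriesFiltration (restrictTotalDegree ι F) B 0 := by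
    have h := SetLike.mul_mem_graded (SetLike.pow_mem_graded z.2 hy)
      (SetLike.pow_mem_graded z.1 hs)
    rw [smul_zero, smul_zero, add_zero] at h
    rwa [boxMonomial_eq, map_mul, map_pow, map_pow, Polynomial.aevalAeval_X,
      Polynomial.aevalAeval_Y, mul_comm]
  refine ((mem_restrictTotalDegree ..).1 (hmem (ρ x))).trans ?_
  exact Nat.mul_le_mul_left _ (hρ x)

end JetMatrixDegree

section PlaneSectionMonic

variable {F A σ : Type*} [CommRing F] [CommRing A] [Algebra F A] {x₀ : Option σ → A} {lam : σ → A}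
  {f : MvPolynomial (Option σ) F} {d : ℕ}

theorem planeSection_eq_taylor (x₀ : Option σ → A) (lam : σ → A) (f : MvPolynomial (Option σ) F) :
    planeSection x₀ lam f = Polynomial.taylor (Polynomial.C (x₀ none))
      (Polynomial.mapAlgHom (aeval fun i ↦
        Polynomial.C (x₀ (some i)) + Polynomial.C (lam i) * Polynomial.X)
          (optionEquivLeft F σ f)) := by
  rw [← Polynomial.coe_taylorAlgHom]
  suffices planeSection x₀ lam =
      ((Polynomial.taylorAlgHom (Polynomial.C (x₀ none))).restrictScalars F).comp
        ((Polynomial.mapAlgHom (aeval fun i ↦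
          Polynomial.C (x₀ (some i)) + Polynomial.C (lam i) * Polynomial.X)).comp
            (optionEquivLeft F σ).toAlgHom) from DFunLike.congr_fun this f
  refine algHom_ext fun o ↦ ?_
  cases o with
  | none => simp [planeSection_X_none, add_comm]
  | some i => simp [planeSection_X_some]

theorem map_planeSection_eq_taylor {B : Type*} [CommRing B] [Algebra F B] (χ : A →ₐ[F] B) :
    (planeSection x₀ lam f).map (Polynomial.eval₂RingHom (χ : A →+* B) 1) =
      Polynomial.taylor (χ (x₀ none)) (Polynomial.mapAlgHom
        (aeval fun i ↦ χ (x₀ (some i)) + χ (lam i)) (optionEquivLeft F σ f)) := by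
  have hcomp : ((Polynomial.eval₂RingHom (χ : A →+* B) 1).comp
      ((aeval fun i ↦ Polynomial.C (x₀ (some i)) + Polynomial.C (lam i) * Polynomial.X :
        MvPolynomial σ F →ₐ[F] A[X]) : MvPolynomial σ F →+* A[X])) =
      (aeval fun i ↦ χ (x₀ (some i)) + χ (lam i) : MvPolynomial σ F →ₐ[F] B) :=
    ringHom_ext (fun r ↦ by simp [Polynomial.algebraMap_apply]) fun i ↦ by simp
  rw [planeSection_eq_taylor, Polynomial.map_taylor, Polynomial.coe_mapAlgHom, Polynomial.map_map,
    hcomp]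
  simp

theorem planeSection_monic (hf : (optionEquivLeft F σ f).Monic) :
    (planeSection x₀ lam f).Monic := by
  rw [Polynomial.Monic, planeSection_eq_taylor, Polynomial.leadingCoeff_taylor]
  exact hf.map _

theorem natDegree_planeSection [Nontrivial A] (hf : (optionEquivLeft F σ f).Monic) :
    (planeSection x₀ lam f).natDegree = (optionEquivLeft F σ f).natDegree := by
  rw [planeSection_eq_taylor, Polynomial.natDegree_taylor]
  exact hf.natDegree_map _

theorem planeSection_mem_planeDegreeLE (hf : f.totalDegree ≤ d) :
    planeSection x₀ lam f ∈ planeDegreeLE A d := by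
  let V (n : ℕ) : Submodule F A[X][Y] := (planeDegreeLE A n).restrictScalars F
  have : SetLike.GradedMonoid V :=
    { one_mem := (planeDegreeLE.gradedMonoid (k := A)).one_mem
      mul_mem := (planeDegreeLE.gradedMonoid (k := A)).mul_mem }
  have hmem : planeSection x₀ lam f ∈ V (f.totalDegree * 1) := by
    refine aeval_mem_graded V (fun m n h ↦ planeDegreeLE_mono h) (fun o ↦ ?_) f
    have hC (p : A) : (Polynomial.C (Polynomial.C p)) ∈ planeDegreeLE A 1 :=
      C_mem_planeDegreeLE (by simp)
    cases o with
    | none => exact add_mem (hC _) X_mem_planeDegreeLE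
    | some i =>
      refine add_mem (hC _) ?_
      change Polynomial.C (Polynomial.C (lam i)) * Polynomial.C Polynomial.X ∈ _
      rw [← Polynomial.C_mul]
      exact C_mem_planeDegreeLE ((Polynomial.natDegree_C_mul_le _ _).trans
        Polynomial.natDegree_X_le)
  exact planeDegreeLE_mono (by rwa [mul_one]) hmem

theorem map_planeSection {B : Type*} [CommRing B] [Algebra F B] (φ : A →ₐ[F] B)
    (x₀ : Option σ → A) (lam : σ → A) (f : MvPolynomial (Option σ) F) :
    (planeSection x₀ lam f).map (Polynomial.mapRingHom φ) =
      planeSection (φ ∘ x₀) (φ ∘ lam) f := by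
  suffices (Polynomial.mapAlgHom (Polynomial.mapAlgHom φ)).comp (planeSection x₀ lam) =
      planeSection (φ ∘ x₀) (φ ∘ lam) from DFunLike.congr_fun this f
  refine algHom_ext fun o ↦ ?_
  cases o <;> simp [planeSection_X_none, planeSection_X_some]

end PlaneSectionMonic

section Factors

variable {F σ : Type*} [Field F] {f u : MvPolynomial (Option σ) F} {d : ℕ}

theorem IsNormalized.ne_zero (hf : IsNormalized f d) : f ≠ 0 := by
  rintro rfl
  exact hf.monic.ne_zero (map_zero _)

theorem IsNormalized.of_dvd (hf : IsNormalized f d) (hu : (optionEquivLeft F σ u).Monic)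
    (hi : Irreducible u) (h : u ∣ f) : IsNormalized u (optionEquivLeft F σ u).natDegree := by
  obtain ⟨w, rfl⟩ := h
  have hw : (optionEquivLeft F σ w).Monic :=
    hu.of_mul_monic_left (by rw [← map_mul]; exact hf.monic)
  refine ⟨hu, rfl, (totalDegree_eq_natDegree_of_monic_mul hu hw ?_).le, ?_⟩
  · exact hf.natDegree_eq ▸ hf.totalDegree_le
  · refine Nat.one_le_iff_ne_zero.2 fun h ↦ hi.not_isUnit ?_
    rw [← MulEquiv.isUnit_map (optionEquivLeft F σ), hu.natDegree_eq_zero.1 h]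
    exact isUnit_one

theorem IsNormalized.natDegree_le_of_dvd (hf : IsNormalized f d) (h : u ∣ f) :
    (optionEquivLeft F σ u).natDegree ≤ d :=
  hf.natDegree_eq ▸ Polynomial.natDegree_le_of_dvd (map_dvd _ h) hf.monic.ne_zero

end Factors

section GenericPoint

theorem prime_rename {R σ τ : Type*} [CommRing R] {g : σ → τ} (hg : Function.Injective g)
    {p : MvPolynomial σ R} (hp : Prime p) : Prime (rename g p) := by
  have h : rename g p = rename (↑) (renameEquiv R (Equiv.ofInjective g hg) p) := by
    rw [renameEquiv_apply, rename_rename]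
    rfl
  rw [h, prime_rename_iff]
  exact (MulEquiv.prime_iff (renameEquiv R (Equiv.ofInjective g hg))).2 hp

theorem dvd_of_rename_dvd_rename {R σ τ : Type*} [CommRing R] {g : σ → τ}
    (hg : Function.Injective g) {p q : MvPolynomial σ R} (h : rename g p ∣ rename g q) : p ∣ q := by
  simpa only [killCompl_rename_app] using map_dvd (killCompl hg) h

-- If the irreducible factor `u` occurs `m` times in `p`, then `κ p` is `ι p`, which is divisible by
-- `ι u`, while the cofactor stays prime to `ι u`; so `κ u ^ m` vanishes modulo `ι u`.
theorem dvd_coeff_of_dvd {R A : Type*} [CommRing R] [IsDomain R] [WfDvdMonoid R] [CommRing A]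
    {ι : R →+* A} {κ : R →+* A⟦X⟧} (hι : ∀ p, PowerSeries.constantCoeff (κ p) = ι p) {u p : R}
    (hu : ¬ IsUnit u) (hprime : Prime (ι u)) (hdvd : ∀ w, ι u ∣ ι w → u ∣ w) (hp : p ≠ 0)
    (hup : u ∣ p) (hκp : κ p = PowerSeries.C (ι p)) (k : ℕ) :
    ι u ∣ PowerSeries.coeff k (κ u) := by
  obtain ⟨w, hw, huw⟩ :=
    (FiniteMultiplicity.of_not_isUnit hu hp).exists_eq_pow_mul_and_not_dvd
  have : (Ideal.span {ι u}).IsPrime := (Ideal.span_singleton_prime hprime.ne_zero).2 hprime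
  set ψ := Ideal.Quotient.mk (Ideal.span {ι u})
  have hψ (x : A) : ψ x = 0 ↔ ι u ∣ x := by
    rw [Ideal.Quotient.eq_zero_iff_mem, Ideal.mem_span_singleton]
  have hw0 : PowerSeries.map ψ (κ w) ≠ 0 := fun h ↦ huw (hdvd w ((hψ _).1 (by
    rw [← hι w, ← PowerSeries.coeff_zero_eq_constantCoeff_apply, ← PowerSeries.coeff_map, h,
      map_zero])))
  have hpow : PowerSeries.map ψ (κ u) ^ multiplicity u p * PowerSeries.map ψ (κ w) = 0 := by
    rw [← map_pow, ← map_pow, ← map_mul, ← map_mul, ← hw, hκp, PowerSeries.map_C,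
      (hψ _).2 (map_dvd ι hup), map_zero]
  have hzero : PowerSeries.map ψ (κ u) = 0 :=
    eq_zero_of_pow_eq_zero ((mul_eq_zero.1 hpow).resolve_right hw0)
  rw [← hψ, ← PowerSeries.coeff_map, hzero, map_zero]

variable {F σ : Type*} [Field F] {f : MvPolynomial (Option σ) F} {d : ℕ}

/-- The section of `f - f(x₀)` by the generic plane through the generic point `x₀`, whose
coordinates are the variables `inr o`; the direction has the variables `inl i` as coordinates. -/
noncomputable def genericSection (f : MvPolynomial (Option σ) F) :
    (MvPolynomial (σ ⊕ Option σ) F)[X][Y] :=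
  planeSection (X ∘ Sum.inr) (X ∘ Sum.inl) f - Polynomial.C (Polynomial.C (rename Sum.inr f))

theorem IsNormalized.genericSection_monic (hf : IsNormalized f d) : (genericSection f).Monic :=
  (planeSection_monic hf.monic).sub_of_left (Polynomial.degree_C_le.trans_lt
    (Polynomial.natDegree_pos_iff_degree_pos.1
      (by rw [natDegree_planeSection hf.monic]; exact hf.natDegree_pos)))

theorem IsNormalized.natDegree_genericSection (hf : IsNormalized f d) :
    (genericSection f).natDegree = d := by
  rw [genericSection, Polynomial.natDegree_sub_C, natDegree_planeSection hf.monic, hf.natDegree_eq]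

theorem IsNormalized.genericSection_mem_planeDegreeLE (hf : IsNormalized f d) :
    genericSection f ∈ planeDegreeLE (MvPolynomial (σ ⊕ Option σ) F) d :=
  sub_mem (planeSection_mem_planeDegreeLE hf.totalDegree_le) (C_mem_planeDegreeLE (by simp))

theorem aevalAeval_genericSection (f : MvPolynomial (Option σ) F)
    (s y : (MvPolynomial (σ ⊕ Option σ) F)⟦X⟧) :
    (genericSection f).aevalAeval s y =
      aeval (planePoint (A := MvPolynomial (σ ⊕ Option σ) F) (X ∘ Sum.inr) (X ∘ Sum.inl) s y) f -
        PowerSeries.C (rename Sum.inr f) := by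
  refine (map_sub _ _ _).trans (congrArg₂ _ (aevalAeval_planeSection _ _ s y f) ?_)
  simp

theorem IsNormalized.irreducible_genericSection (hf : IsNormalized f d)
    (h : Irreducible (differencePolynomial f)) : Irreducible (genericSection f) := by
  -- Specializing `s` to `1` and the direction to `X - x₀` recovers `f(X) - f(x₀)`.
  set χ : MvPolynomial (σ ⊕ Option σ) F →ₐ[F] MvPolynomial (σ ⊕ Option σ) F :=
    aeval (Sum.elim (fun i ↦ X (.inl i) - X (.inr (some i))) fun o ↦ X (.inr o)) with hχ
  have hχf : χ (rename Sum.inr f) = rename Sum.inr f := by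
    rw [hχ, aeval_rename, Sum.elim_comp_inr, rename_eq_aeval]
    rfl
  have hmap : (genericSection f).map (Polynomial.eval₂RingHom χ 1) =
      Polynomial.taylor (X (Sum.inr none)) (differencePolynomial f) := by
    have hline : (fun i ↦ χ ((X ∘ Sum.inr) (some i)) + χ ((X ∘ Sum.inl) i)) = X ∘ Sum.inl := by
      ext1 i
      simp [hχ]
    rw [genericSection, Polynomial.map_sub, map_planeSection_eq_taylor, Polynomial.map_C,
      Polynomial.coe_eval₂RingHom, Polynomial.eval₂_C, differencePolynomial,
      map_sub (Polynomial.taylor _), Polynomial.taylor_C, rename_eq_aeval Sum.inl, hline]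
    exact congrArg₂ _ (by simp [hχ]) (congrArg _ hχf)
  have hirr : Irreducible (Polynomial.taylor (X (Sum.inr none)) (differencePolynomial f)) :=
    (MulEquiv.irreducible_iff (Polynomial.taylorEquiv _)).2 h
  rw [← hmap] at hirr
  exact hf.genericSection_monic.irreducible_of_irreducible_map _ _ hirr

end GenericPoint

section SmallFactors

variable {F σ : Type*} [Field F] {f : MvPolynomial (Option σ) F} {d : ℕ}

theorem X_comp_mem_restrictTotalDegree {ι τ : Type*} (g : τ → ι) (o : τ) :
    ((X ∘ g : τ → MvPolynomial ι F) o) ∈ restrictTotalDegree ι F 1 :=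
  (mem_restrictTotalDegree ..).2 (totalDegree_X (R := F) (g o)).le

theorem exists_generic_arc (hfd : f.totalDegree ≤ d) :
    ∃ v : (MvPolynomial (σ ⊕ Option σ) F)⟦X⟧,
      v ∈ powerSeriesFiltration (restrictTotalDegree (σ ⊕ Option σ) F) (2 * d) 0 ∧
      PowerSeries.constantCoeff v = 0 ∧
      aeval (planePoint (A := MvPolynomial (σ ⊕ Option σ) F) (X ∘ Sum.inr) (X ∘ Sum.inl)
        (PowerSeries.C (rename Sum.inr (pderiv none f) ^ 2) * PowerSeries.X) v) f =
           PowerSeries.C (rename Sum.inr f) := by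
  obtain ⟨v, hv, hv0, hvf⟩ := exists_powerSeries_aeval_planePoint_eq_C (α := 0)
    restrictTotalDegree_mono (X_comp_mem_restrictTotalDegree (F := F) (Sum.inr (α := σ)))
    (by simpa using X_comp_mem_restrictTotalDegree Sum.inl) hfd
  rw [← rename_eq_aeval] at hvf
  exact ⟨v, by simpa using hv, hv0, hvf⟩

theorem pow_dvd_det_jetMatrix_planeSection {A : Type*} [CommRing A] [Nontrivial A] [Algebra F A]
    {x₀ : Option σ → A} {lam : σ → A} {u : MvPolynomial (Option σ) F} {e : ℕ}
    (hu : IsNormalized u e) {s y : A⟦X⟧} (ρ : Fin d × Fin d → ℕ) {π : A}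
    (hπ : ∀ k, π ∣ PowerSeries.coeff k (aeval (planePoint x₀ lam s y) u)) :
    π ^ ((d - e) ^ 2) ∣ (jetMatrix (Polynomial.aevalAeval s y) ρ).det := by
  have hnat : (planeSection x₀ lam u).natDegree = e :=
    (natDegree_planeSection hu.monic).trans hu.natDegree_eq
  rw [← hnat]
  refine pow_dvd_det_jetMatrix (planeSection_monic hu.monic) ?_ _ ρ fun k ↦ ?_
  · exact planeSection_mem_planeDegreeLE (hnat ▸ hu.totalDegree_le)
  · rw [aevalAeval_planeSection]
    exact hπ k

theorem rename_dvd_coeff_of_dvd {u : MvPolynomial (Option σ) F} {a : F} (hi : Irreducible u)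
    (hfa : f - C a ≠ 0) (hua : u ∣ f - C a) {P : Option σ → (MvPolynomial (σ ⊕ Option σ) F)⟦X⟧}
    (hP : ∀ o, PowerSeries.constantCoeff (P o) = X (Sum.inr o))
    (hPf : aeval P f = PowerSeries.C (rename Sum.inr f)) (k : ℕ) :
    rename Sum.inr u ∣ PowerSeries.coeff k (aeval P u) := by
  have hinj : Function.Injective (Sum.inr : Option σ → σ ⊕ Option σ) := Sum.inr_injective
  refine dvd_coeff_of_dvd (ι := (rename Sum.inr : MvPolynomial (Option σ) F →ₐ[F] _).toRingHom)
    (κ := (aeval P : MvPolynomial (Option σ) F →ₐ[F] _).toRingHom)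
    (fun p ↦ ?_) hi.not_isUnit (prime_rename hinj hi.prime)
    (fun _ ↦ dvd_of_rename_dvd_rename hinj) hfa hua ?_ k
  · rw [rename_eq_aeval]
    exact constantCoeff_aeval hP p
  · change aeval P (f - C a) = PowerSeries.C (rename Sum.inr (f - C a))
    rw [map_sub, map_sub, map_sub, hPf, rename_C, ← algebraMap_eq, ← algebraMap_eq,
      AlgHom.commutes, PowerSeries.algebraMap_apply]

theorem IsNormalized.exists_jetDeterminant (hf : IsNormalized f d) (hfy : pderiv none f ≠ 0)
    (hirr : Irreducible (differencePolynomial f)) :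
    ∃ Δ : MvPolynomial (σ ⊕ Option σ) F, Δ ≠ 0 ∧ Δ.totalDegree ≤ 4 * d ^ 5 ∧
      ∀ u a, (optionEquivLeft F σ u).Monic → Irreducible u → u ∣ f - C a →
        rename Sum.inr u ^ ((d - (optionEquivLeft F σ u).natDegree) ^ 2) ∣ Δ := by
  obtain ⟨v, hv, hv0, hvf⟩ := exists_generic_arc hf.totalDegree_le
  set δ : MvPolynomial (σ ⊕ Option σ) F := rename Sum.inr (pderiv none f)
  have hδ0 : δ ≠ 0 := (map_ne_zero_iff _ (rename_injective _ Sum.inr_injective)).2 hfy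
  have hδd : (δ ^ 2).totalDegree ≤ 2 * d := (totalDegree_pow _ _).trans (Nat.mul_le_mul_left _
    ((totalDegree_rename_le _ _).trans ((totalDegree_pderiv_le _ _).trans
      ((Nat.sub_le _ _).trans hf.totalDegree_le))))
  have harc := aevalAeval_genericSection f (PowerSeries.C (δ ^ 2) * PowerSeries.X) v
  rw [hvf, sub_self] at harc
  have hd := hf.natDegree_genericSection
  have hjet := exists_det_jetMatrix_ne_zero hf.genericSection_monic
    (hf.irreducible_genericSection hirr) (hd.symm ▸ hf.genericSection_mem_planeDegreeLE) 0
    (pow_ne_zero 2 hδ0) (y := v) (by rwa [map_zero, zero_add])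
  rw [hd, map_zero, zero_add] at hjet
  obtain ⟨ρ, hρ, hdet⟩ := hjet
  refine ⟨_, hdet, ?_, fun u a hu hi hua ↦ ?_⟩
  · exact (totalDegree_det_jetMatrix_le hδd hv hρ).trans_eq (by ring)
  · refine pow_dvd_det_jetMatrix_planeSection ((hf.sub_C a).of_dvd hu hi hua) ρ
      (rename_dvd_coeff_of_dvd hi (hf.sub_C a).ne_zero hua (fun o ↦ ?_) hvf)
    cases o <;> simp [planePoint, hv0]

theorem totalDegree_finsetProd_pow_of_isDomain {ι τ R : Type*} [CommRing R] [IsDomain R]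
    {s : Finset ι} {p : ι → MvPolynomial τ R} (m : ι → ℕ) (hp : ∀ i ∈ s, p i ≠ 0) :
    (∏ i ∈ s, p i ^ m i).totalDegree = ∑ i ∈ s, m i * (p i).totalDegree := by
  have hpow (q : MvPolynomial τ R) (hq : q ≠ 0) (n : ℕ) :
      (q ^ n).totalDegree = n * q.totalDegree := by
    induction n with
    | zero => simp
    | succ n ih => rw [pow_succ, totalDegree_mul_of_isDomain (pow_ne_zero _ hq) hq, ih]; ring
  induction s using Finset.cons_induction with
  | empty => simp
  | cons i s hi ih =>
    simp only [Finset.forall_mem_cons] at hp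
    rw [Finset.prod_cons, Finset.sum_cons, totalDegree_mul_of_isDomain (pow_ne_zero _ hp.1)
      (Finset.prod_ne_zero_iff.2 fun j hj ↦ pow_ne_zero _ (hp.2 j hj)), hpow _ hp.1, ih hp.2]

theorem totalDegree_rename_of_injective {ι τ R : Type*} [CommSemiring R] {g : ι → τ}
    (hg : Function.Injective g) (p : MvPolynomial ι R) :
    (rename g p).totalDegree = p.totalDegree := by
  classical
  refine (totalDegree_rename_le g p).antisymm (Finset.sup_le fun m hm ↦ ?_)
  rw [← Finsupp.sum_mapDomain_index_inj (h := fun _ n ↦ n) hg]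
  refine le_totalDegree ?_
  rw [support_rename_of_injective hg]
  exact Finset.mem_image_of_mem _ hm

theorem eq_of_monic_of_dvd {u w : MvPolynomial (Option σ) F}
    (hu : (optionEquivLeft F σ u).Monic) (hw : (optionEquivLeft F σ w).Monic)
    (hui : Irreducible u) (hwi : Irreducible w) (h : u ∣ w) : u = w :=
  (optionEquivLeft F σ).injective <| Polynomial.eq_of_monic_of_associated hu hw <|
    ((hui.dvd_irreducible_iff_associated hwi).1 h).map (optionEquivLeft F σ)

theorem finsetProd_rename_pow_dvd {τ : Type*} {g : Option σ → τ} (hg : Function.Injective g)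
    {U : Finset (MvPolynomial (Option σ) F)} (m : MvPolynomial (Option σ) F → ℕ)
    (hU : ∀ u ∈ U, (optionEquivLeft F σ u).Monic ∧ Irreducible u) {Δ : MvPolynomial τ F}
    (hΔ : ∀ u ∈ U, rename g u ^ m u ∣ Δ) : ∏ u ∈ U, rename g u ^ m u ∣ Δ := by
  refine Finset.prod_dvd_of_isRelPrime (fun u hu w hw huw ↦ ?_) hΔ
  refine IsRelPrime.pow ((prime_rename hg (hU u hu).2.prime).irreducible.isRelPrime_iff_not_dvd.2
    fun h ↦ huw ?_)
  exact eq_of_monic_of_dvd (hU u hu).1 (hU w hw).1 (hU u hu).2 (hU w hw).2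
    (dvd_of_rename_dvd_rename hg h)

theorem IsNormalized.sum_natDegree_le (hf : IsNormalized f d) (hfy : pderiv none f ≠ 0)
    (hirr : Irreducible (differencePolynomial f)) {U : Finset (MvPolynomial (Option σ) F)}
    (hU : ∀ u ∈ U, (optionEquivLeft F σ u).Monic ∧ Irreducible u)
    (hdvd : ∀ u ∈ U, ∃ a, u ∣ f - C a)
    (hsmall : ∀ u ∈ U, 2 * (optionEquivLeft F σ u).natDegree ≤ d) :
    ∑ u ∈ U, (optionEquivLeft F σ u).natDegree ≤ 16 * d ^ 3 := by
  obtain ⟨Δ, hΔ0, hΔd, hΔ⟩ := hf.exists_jetDeterminant hfy hirr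
  set m : MvPolynomial (Option σ) F → ℕ := fun u ↦ (d - (optionEquivLeft F σ u).natDegree) ^ 2
  have hinj : Function.Injective (Sum.inr : Option σ → σ ⊕ Option σ) := Sum.inr_injective
  have hprod : ∏ u ∈ U, rename (Sum.inr : Option σ → σ ⊕ Option σ) u ^ m u ∣ Δ := by
    refine finsetProd_rename_pow_dvd hinj m hU fun u hu ↦ ?_
    obtain ⟨a, ha⟩ := hdvd u hu
    exact hΔ u a (hU u hu).1 (hU u hu).2 ha
  have hsum : ∑ u ∈ U, m u * (rename (Sum.inr : Option σ → σ ⊕ Option σ) u).totalDegree ≤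
      4 * d ^ 5 := by
    rw [← totalDegree_finsetProd_pow_of_isDomain m fun u hu ↦
      (map_ne_zero_iff _ (rename_injective _ hinj)).2 (hU u hu).2.ne_zero]
    exact (totalDegree_le_of_dvd_of_isDomain hprod hΔ0).trans hΔd
  refine Nat.le_of_mul_le_mul_left (c := d ^ 2) ?_ (pow_pos hf.pos 2)
  calc d ^ 2 * ∑ u ∈ U, (optionEquivLeft F σ u).natDegree
      ≤ 4 * ∑ u ∈ U, m u * (rename (Sum.inr : Option σ → σ ⊕ Option σ) u).totalDegree := by
        simp only [Finset.mul_sum, ← mul_assoc]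
        refine Finset.sum_le_sum fun u hu ↦ Nat.mul_le_mul ?_ ?_
        · have hd : d ≤ 2 * (d - (optionEquivLeft F σ u).natDegree) := by
            have := hsmall u hu
            omega
          exact (Nat.pow_le_pow_left hd 2).trans_eq (by ring)
        · rw [totalDegree_rename_of_injective hinj]
          exact natDegree_optionEquivLeft_le u
    _ ≤ d ^ 2 * (16 * d ^ 3) := (Nat.mul_le_mul_left 4 hsum).trans_eq (by ring)

end SmallFactors

section Bertini

theorem jetMatrix_map {A B : Type*} [CommRing A] [CommRing B] (φ : A →+* B) {e : ℕ} (s y : A⟦X⟧)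
    (ρ : Fin e × Fin e → ℕ) :
    jetMatrix (Polynomial.aevalAeval (PowerSeries.map φ s) (PowerSeries.map φ y)) ρ =
      φ.mapMatrix (jetMatrix (Polynomial.aevalAeval s y) ρ) := by
  ext x z
  have hz : (boxMonomial A z).map (Polynomial.mapRingHom φ) = boxMonomial B z := by
    simp [boxMonomial]
  rw [jetMatrix, Matrix.of_apply, ← hz, aevalAeval_map, PowerSeries.coeff_map]
  rfl

theorem irreducible_of_det_jetMatrix_ne_zero {k : Type*} [Field k] {H : k[X][Y]} (hH : H.Monic)
    {e : ℕ} (he : H.natDegree = e) (hHd : H ∈ planeDegreeLE k e) {s y : k⟦X⟧}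
    (h0 : H.aevalAeval s y = 0) {ρ : Fin e × Fin e → ℕ}
    (hdet : (jetMatrix (Polynomial.aevalAeval s y) ρ).det ≠ 0) : Irreducible H := by
  obtain ⟨Q, S, hQ, hS, hQi, hQ0, rfl⟩ := exists_monic_irreducible_map_eq_zero
    (Polynomial.aevalAeval s y : k[X][Y] →ₐ[k] k⟦X⟧).toRingHom hH h0
  have hQd : Q ∈ planeDegreeLE k Q.natDegree := mem_planeDegreeLE_of_mul hQ hS (he ▸ hHd)
  have hS0 : S.natDegree = 0 := by
    by_contra hS0
    have hzero := pow_dvd_det_jetMatrix hQ hQd (Polynomial.aevalAeval s y) ρ (π := 0) fun k ↦ by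
      rw [show Polynomial.aevalAeval s y Q = 0 from hQ0, map_zero]
    have hpos : e - Q.natDegree ≠ 0 := by
      rwa [← he, hQ.natDegree_mul hS, Nat.add_sub_cancel_left]
    rw [zero_pow (pow_ne_zero 2 hpos), zero_dvd_iff] at hzero
    exact hdet hzero
  rwa [hS.natDegree_eq_zero.1 hS0, mul_one]

variable {F σ : Type*} [Field F] {f u : MvPolynomial (Option σ) F} {d e : ℕ} {a : F}
  {P : Option σ → F}

theorem eval_ne_zero_of_sub_C_eq_mul {τ : Type*} {f u w : MvPolynomial τ F} {P : τ → F} {i : τ}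
    (h : f - C a = u * w) (hP : eval P u = 0) (hPi : eval P (pderiv i f) ≠ 0) : eval P w ≠ 0 := by
  rintro hw
  have hderiv : pderiv i f = pderiv i (u * w) := by rw [← h, map_sub, pderiv_C, sub_zero]
  refine hPi ?_
  rw [hderiv, (pderiv i).leibniz]
  simp [hP, hw]

theorem aeval_eq_zero_of_aeval_eq_C {τ A : Type*} [CommRing A] [IsDomain A] [Algebra F A]
    {f u : MvPolynomial τ F} {P : τ → F} {i : τ} (hua : u ∣ f - C a) (hP : eval P u = 0)
    (hPi : eval P (pderiv i f) ≠ 0) {p : τ → A⟦X⟧}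
    (hp : ∀ o, PowerSeries.constantCoeff (p o) = algebraMap F A (P o))
    (hpf : aeval p f = PowerSeries.C (algebraMap F A (eval P f))) : aeval p u = 0 := by
  obtain ⟨w, hw⟩ := hua
  have hconst (g : MvPolynomial τ F) :
      PowerSeries.constantCoeff (aeval p g) = algebraMap F A (eval P g) := by
    rw [constantCoeff_aeval hp]
    exact aeval_algebraMap_apply A P g
  have hfa : eval P f = a := by
    simpa [hP, sub_eq_zero] using congrArg (eval P) hw
  have hmul : aeval p u * aeval p w = 0 := by
    rw [← map_mul, ← hw, map_sub, hpf, hfa, ← algebraMap_eq, AlgHom.commutes,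
      PowerSeries.algebraMap_apply, sub_self]
  refine (mul_eq_zero.1 hmul).resolve_right fun hw0 ↦ ?_
  have := hconst w
  rw [hw0, map_zero, eq_comm, map_eq_zero] at this
  exact eval_ne_zero_of_sub_C_eq_mul hw hP hPi this

theorem irreducible_planeSection_generic (hu : (optionEquivLeft F σ u).Monic) (hi : Irreducible u)
    (P : Option σ → F) :
    Irreducible (planeSection (A := MvPolynomial σ F) (C ∘ P) X u) := by
  set χ : MvPolynomial σ F →ₐ[F] MvPolynomial σ F := aeval fun i ↦ X i - C (P (some i)) with hχ
  refine (planeSection_monic hu).irreducible_of_irreducible_map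
    (Polynomial.eval₂RingHom (χ : MvPolynomial σ F →+* MvPolynomial σ F) 1) _ ?_
  have hline : (fun i ↦ χ ((C ∘ P) (some i)) + χ (X i)) = (X : σ → MvPolynomial σ F) := by
    ext1 i
    rw [Function.comp_apply, ← algebraMap_eq, AlgHom.commutes, algebraMap_eq, hχ, aeval_X,
      add_sub_cancel]
  rw [map_planeSection_eq_taylor, hline, aeval_X_left, Polynomial.coe_mapAlgHom]
  refine (MulEquiv.irreducible_iff (Polynomial.taylorEquiv _)).2 ?_
  exact Polynomial.map_id (R := MvPolynomial σ F) ▸ (MulEquiv.irreducible_iff _).2 hi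

theorem exists_smooth_arc (hfd : f.totalDegree ≤ d) (hua : u ∣ f - C a) (hP : eval P u = 0)
    (hPy : eval P (pderiv none f) ≠ 0) :
    ∃ v ∈ powerSeriesFiltration (restrictTotalDegree σ F) 1 0,
      aeval (planePoint (A := MvPolynomial σ F) (C ∘ P) X
        (PowerSeries.C (C (eval P (pderiv none f) ^ 2)) * PowerSeries.X) v) u = 0 := by
  obtain ⟨v, hv, hv0, hvf⟩ := exists_powerSeries_aeval_planePoint_eq_C (A := MvPolynomial σ F)
    (V := restrictTotalDegree σ F) (x₀ := C ∘ P) (lam := X) (α := 1) (γ := 0)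
    restrictTotalDegree_mono (fun o ↦ (mem_restrictTotalDegree ..).2 (totalDegree_C _).le)
    (fun i ↦ (mem_restrictTotalDegree ..).2 (totalDegree_X i).le) hfd
  have hC (p : MvPolynomial (Option σ) F) :
      aeval (C ∘ P : Option σ → MvPolynomial σ F) p = C (eval P p) :=
    aeval_algebraMap_apply _ P p
  rw [hC, hC, ← C_pow] at hvf
  refine ⟨v, by simpa using hv, aeval_eq_zero_of_aeval_eq_C hua hP hPy (fun o ↦ ?_) hvf⟩
  cases o <;> simp [planePoint, hv0, algebraMap_eq]

theorem IsNormalized.exists_forall_irreducible_planeSection (hfd : f.totalDegree ≤ d)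
    (hu : IsNormalized u e) (hi : Irreducible u) (hua : u ∣ f - C a) (hP : eval P u = 0)
    (hPy : eval P (pderiv none f) ≠ 0) :
    ∃ Δ : MvPolynomial σ F, Δ ≠ 0 ∧ Δ.totalDegree ≤ 2 * e ^ 4 ∧
      ∀ l : σ → F, eval l Δ ≠ 0 → Irreducible (planeSection P l u) := by
  obtain ⟨v, hv, hvu⟩ := exists_smooth_arc hfd hua hP hPy
  set c : MvPolynomial σ F := C (eval P (pderiv none f) ^ 2) with hc
  have hc0 : c ≠ 0 := C_ne_zero.2 (pow_ne_zero 2 hPy)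
  have hnat : (planeSection (A := MvPolynomial σ F) (C ∘ P) X u).natDegree = e :=
    (natDegree_planeSection hu.monic).trans hu.natDegree_eq
  have hjet := exists_det_jetMatrix_ne_zero (planeSection_monic hu.monic)
    (irreducible_planeSection_generic hu.monic hi P)
    (planeSection_mem_planeDegreeLE (hnat.symm ▸ hu.totalDegree_le)) 0 hc0 (y := v)
    (by rwa [map_zero, zero_add, aevalAeval_planeSection])
  rw [hnat, map_zero, zero_add] at hjet
  obtain ⟨ρ, hρ, hdet⟩ := hjet
  refine ⟨_, hdet, ?_, fun l hl ↦ ?_⟩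
  · refine (totalDegree_det_jetMatrix_le (B := 1) ?_ hv hρ).trans_eq (by ring)
    rw [hc, totalDegree_C]
    exact zero_le_one
  · set φ : MvPolynomial σ F →ₐ[F] F := aeval l
    have hmap : (planeSection (A := MvPolynomial σ F) (C ∘ P) X u).map
        (Polynomial.mapRingHom φ) = planeSection P l u := by
      rw [map_planeSection]
      congr 2 <;> ext <;> simp [φ]
    refine irreducible_of_det_jetMatrix_ne_zero (planeSection_monic hu.monic)
      ((natDegree_planeSection hu.monic).trans hu.natDegree_eq)
      (planeSection_mem_planeDegreeLE hu.totalDegree_le)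
      (s := PowerSeries.map (φ : MvPolynomial σ F →+* F) (PowerSeries.C c * PowerSeries.X))
      (y := PowerSeries.map (φ : MvPolynomial σ F →+* F) v) (ρ := ρ) ?_ ?_
    · rw [← hmap, aevalAeval_map, aevalAeval_planeSection, hvu, map_zero]
    · rw [jetMatrix_map, ← RingHom.map_det]
      exact hl

end Bertini

section AuxiliaryPolynomial

variable {k : Type*} [Field k]

theorem finrank_planeNormalForms_le (e N : ℕ) :
    Module.finrank k (planeNormalForms k e N) ≤ e * (N + 1) := by
  let coeffs : planeNormalForms k e N →ₗ[k] (Fin e × Fin (N + 1) → k) := (LinearMap.pi fun x ↦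
    Polynomial.lcoeff k x.2 ∘ₗ (Polynomial.lcoeff k[X] x.1).restrictScalars k) ∘ₗ
      Submodule.subtype _
  have hinj : Function.Injective coeffs := by
    rw [injective_iff_map_eq_zero]
    rintro ⟨p, hp⟩ h
    obtain ⟨hpe, hpN⟩ := mem_planeNormalForms.1 hp
    refine Subtype.ext (Polynomial.ext fun j ↦ Polynomial.ext fun i ↦ ?_)
    by_contra hij
    have hj : j < e := by
      by_contra! hj
      rw [Polynomial.coeff_eq_zero_of_degree_lt (hpe.trans_le (by exact_mod_cast hj))] at hij
      simp at hij
    have hi := hpN i j (by simpa using hij)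
    exact hij (congrFun h (⟨j, hj⟩, ⟨i, by omega⟩))
  simpa using LinearMap.finrank_le_finrank_of_injective hinj

theorem exists_ne_zero_forall_sum_smul_eq_zero {ι κ V : Type*} [Fintype ι] [Fintype κ]
    [AddCommGroup V] [Module k V] [FiniteDimensional k V] (v : κ → ι → V)
    (hcard : Fintype.card κ * Module.finrank k V < Fintype.card ι) :
    ∃ a : ι → k, a ≠ 0 ∧ ∀ j, ∑ i, a i • v j i = 0 := by
  have hrank : Module.finrank k (κ → V) = Fintype.card κ * Module.finrank k V := by
    simp [Module.finrank_pi_fintype]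
  have hdep : ¬ LinearIndependent k (fun i j ↦ v j i) := fun hli ↦
    (hli.fintype_card_le_finrank.trans_eq hrank).not_gt hcard
  obtain ⟨a, ha, i, hi⟩ := Fintype.not_linearIndependent_iff.1 hdep
  exact ⟨a, fun h ↦ hi (congrFun h i), fun j ↦ by simpa using congrFun ha j⟩

theorem exists_ne_zero_forall_dvd_sum_smul {ι : Type*} [Fintype ι] {u : k[X][Y]} (hu : u.Monic)
    (hud : u ∈ planeDegreeLE k u.natDegree) {M N : ℕ} {g : Fin M → ι → k[X][Y]}
    (hg : ∀ m i, g m i ∈ planeDegreeLE k N)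
    (hcard : M * (u.natDegree * (N + 1)) < Fintype.card ι) :
    ∃ a : ι → k, a ≠ 0 ∧ ∀ m, u ∣ ∑ i, a i • g m i := by
  have hrank := Nat.mul_le_mul_left M (finrank_planeNormalForms_le (k := k) u.natDegree N)
  obtain ⟨a, ha, hsum⟩ := exists_ne_zero_forall_sum_smul_eq_zero
    (V := planeNormalForms k u.natDegree N)
    (fun m i ↦ ⟨g m i %ₘ u, modByMonic_mem_planeNormalForms hu hud (hg m i)⟩)
    (by rw [Fintype.card_fin]; exact hrank.trans_lt hcard)
  refine ⟨a, ha, fun m ↦ (Polynomial.modByMonic_eq_zero_iff_dvd hu).1 ?_⟩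
  calc (∑ i, a i • g m i) %ₘ u
      = ((Polynomial.modByMonicHom u).restrictScalars k) (∑ i, a i • g m i) := rfl
    _ = ∑ i, a i • (g m i %ₘ u) := by rw [map_sum]; simp only [map_smul]; rfl
    _ = 0 := by simpa using congrArg Subtype.val (hsum m)

theorem exists_forall_eq_X_pow_mul {ι : Type*} [Finite ι] {h : ι → k⟦X⟧} (hh : h ≠ 0) :
    ∃ (r : ℕ) (g : ι → k⟦X⟧), (∀ i, h i = PowerSeries.X ^ r * g i) ∧
      ∃ i, PowerSeries.constantCoeff (g i) ≠ 0 := by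
  obtain ⟨i₀, hi₀⟩ := Function.ne_iff.1 hh
  have : Nonempty ι := ⟨i₀⟩
  obtain ⟨j, hj⟩ := Finite.exists_min fun i ↦ (h i).order
  have hj0 : (h j).order ≠ ⊤ := fun htop ↦
    hi₀ (PowerSeries.order_eq_top.1 (top_le_iff.1 (htop ▸ hj i₀)))
  have hdvd (i : ι) : PowerSeries.X ^ (h j).order.toNat ∣ h i :=
    PowerSeries.X_pow_dvd_iff.2 fun n hn ↦ PowerSeries.coeff_of_lt_order n
      (((ENat.natCast_lt_natCast.2 hn).trans_eq (ENat.natCast_toNat hj0)).trans_le (hj i))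
  choose g hg using hdvd
  refine ⟨_, g, hg, j, fun hg0 ↦
    PowerSeries.coeff_order (fun hj ↦ hj0 (PowerSeries.order_eq_top.2 hj)) ?_⟩
  calc PowerSeries.coeff (h j).order.toNat (h j)
      = PowerSeries.coeff (h j).order.toNat (PowerSeries.X ^ (h j).order.toNat * g j) := by
        rw [← hg j]
    _ = 0 := by rw [PowerSeries.coeff_X_pow_mul', if_pos le_rfl, Nat.sub_self,
      PowerSeries.coeff_zero_eq_constantCoeff_apply, hg0]

theorem eq_zero_of_aevalAeval_C_eq_zero (a : k) {c : k} (hc : c ≠ 0) (y : k⟦X⟧) {r : k[X]}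
    (h : (Polynomial.C r).aevalAeval (PowerSeries.C a + PowerSeries.C c * PowerSeries.X) y = 0) :
    r = 0 := by
  set p : k[X] := Polynomial.C a + Polynomial.C c * Polynomial.X
  have hp : (PowerSeries.C a + PowerSeries.C c * PowerSeries.X : k⟦X⟧) =
      Polynomial.coeToPowerSeries.algHom k p := by
    simp [p, Polynomial.coeToPowerSeries.algHom_apply]
  rw [Polynomial.aevalAeval_C, hp, Polynomial.aeval_algHom_apply,
    Polynomial.coeToPowerSeries.algHom_apply, Algebra.algebraMap_self, PowerSeries.map_id,
    id_eq, Polynomial.coe_eq_zero_iff] at h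
  rcases Polynomial.comp_eq_zero_iff.1 h with h | ⟨-, h⟩
  · exact h
  · exact (hc (by simpa [p] using congrArg (Polynomial.coeff · 1) h)).elim

end AuxiliaryPolynomial

section Frobenius

variable {F : Type*} [Field F] [Fintype F]

theorem X_pow_card_dvd_pow_card_sub_C (h : F⟦X⟧) : PowerSeries.X ^ Fintype.card F ∣
    h ^ Fintype.card F - PowerSeries.C (PowerSeries.constantCoeff h) := by
  have hX : PowerSeries.X ∣ h - PowerSeries.C (PowerSeries.constantCoeff h) := by
    simp [PowerSeries.X_dvd_iff]
  have hfrob := map_sub (FiniteField.frobeniusAlgHom F F⟦X⟧) h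
    (PowerSeries.C (PowerSeries.constantCoeff h))
  simp only [FiniteField.coe_frobeniusAlgHom, ← map_pow,
    FiniteField.pow_card] at hfrob
  exact hfrob ▸ pow_dvd_pow_of_dvd hX _

theorem exists_ne_zero_X_pow_card_dvd_sum_smul {ι : Type*} [Fintype ι] {g h : ι → F⟦X⟧}
    (hh : h ≠ 0) (hgh : ∑ i, g i * h i ^ Fintype.card F = 0) :
    ∃ b : ι → F, b ≠ 0 ∧ PowerSeries.X ^ Fintype.card F ∣ ∑ i, b i • g i := by
  obtain ⟨r, h', hr, i₀, hi₀⟩ := exists_forall_eq_X_pow_mul hh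
  have hzero : ∑ i, g i * h' i ^ Fintype.card F = 0 := by
    simp_rw [hr, mul_pow, mul_left_comm _ ((PowerSeries.X ^ r : F⟦X⟧) ^ _), ← Finset.mul_sum]
      at hgh
    exact (mul_eq_zero.1 hgh).resolve_left (pow_ne_zero _ (pow_ne_zero _ PowerSeries.X_ne_zero))
  refine ⟨fun i ↦ PowerSeries.constantCoeff (h' i), fun h0 ↦ hi₀ (congrFun h0 i₀), ?_⟩
  have hsum : ∑ i, PowerSeries.constantCoeff (h' i) • g i = -∑ i, g i *
      (h' i ^ Fintype.card F - PowerSeries.C (PowerSeries.constantCoeff (h' i))) := by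
    simp_rw [mul_sub, Finset.sum_sub_distrib, hzero, zero_sub, neg_neg,
      PowerSeries.smul_eq_C_mul, mul_comm]
  rw [hsum, dvd_neg]
  exact Finset.dvd_sum fun i _ ↦ (X_pow_card_dvd_pow_card_sub_C (h' i)).mul_left _

theorem not_dvd_sum_boxMonomial_mul_pow_card {u : F[X][Y]} (hu : u.Monic) (hi : Irreducible u)
    (hud : u ∈ planeDegreeLE F u.natDegree) {A B e : ℕ} (he : e = u.natDegree)
    (hA : e * (A + e) < Fintype.card F) (s : F) {c : F} (hc : c ≠ 0) {y : F⟦X⟧}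
    (h0 : u.aevalAeval (PowerSeries.C s + PowerSeries.C c * PowerSeries.X) y = 0)
    {a : Fin A × Fin e → Fin B × Fin e → F} (ha : a ≠ 0) :
    ¬ u ∣ ∑ x, boxMonomial F x * (∑ z, a x z • boxMonomial F z) ^ Fintype.card F := by
  intro hdvd
  set φ : F[X][Y] →ₐ[F] F⟦X⟧ :=
    Polynomial.aevalAeval (PowerSeries.C s + PowerSeries.C c * PowerSeries.X) y
  have hker {g : F[X][Y]} (hg : φ g = 0) : u ∣ g :=
    dvd_of_map_eq_zero hu hi φ.toRingHom (fun _ ↦ eq_zero_of_aevalAeval_C_eq_zero s hc y) h0 hg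
  have hne : (fun x ↦ φ (∑ z, a x z • boxMonomial F z)) ≠ 0 := fun h ↦ ha <| funext fun x ↦
    eq_zero_of_dvd_sum_smul_boxMonomial hu he.le (hker (congrFun h x))
  have hzero : ∑ x, φ (boxMonomial F x) * φ (∑ z, a x z • boxMonomial F z) ^ Fintype.card F =
      0 := by
    obtain ⟨w, hw⟩ := hdvd
    simp_rw [← map_pow, ← map_mul, ← map_sum, hw, map_mul]
    rw [h0, zero_mul]
  obtain ⟨b, hb, hXb⟩ := exists_ne_zero_X_pow_card_dvd_sum_smul hne hzero
  simp_rw [← map_smul, ← map_sum] at hXb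
  exact hb (eq_zero_of_dvd_sum_smul_boxMonomial hu he.le (dvd_of_X_pow_dvd_aevalAeval hu hi hud
    (sum_smul_boxMonomial_mem_planeDegreeLE b) s hc h0 hXb (he ▸ hA)))

end Frobenius

section Arcs

variable {F : Type*} [Field F]

/-- The formal arc `T ↦ (s + c * T, y)` through the generic point `(s, y)` of the plane. -/
noncomputable def genericArc (c : F[X][Y]) (y : F[X][Y]⟦X⟧) : F[X][Y] →ₐ[F] F[X][Y]⟦X⟧ :=
  Polynomial.aevalAeval
    (PowerSeries.C (Polynomial.C Polynomial.X) + PowerSeries.C c * PowerSeries.X) y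

/-- The specialization of `genericArc c y` at the point `P` of the plane. -/
noncomputable def arcAt (c : F[X][Y]) (y : F[X][Y]⟦X⟧) (P : F × F) : F[X][Y] →ₐ[F] F⟦X⟧ :=
  (PowerSeries.mapAlgHom (Polynomial.aevalAeval P.1 P.2)).comp (genericArc c y)

variable {c : F[X][Y]} {y : F[X][Y]⟦X⟧}

theorem arcAt_eq (P : F × F) : arcAt c y P = Polynomial.aevalAeval
    (PowerSeries.C P.1 + PowerSeries.C (c.aevalAeval P.1 P.2) * PowerSeries.X)
    (PowerSeries.mapAlgHom (Polynomial.aevalAeval P.1 P.2) y) := by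
  have hext {φ ψ : F[X][Y] →ₐ[F] F⟦X⟧} (hs : φ (Polynomial.C Polynomial.X) =
      ψ (Polynomial.C Polynomial.X)) (hy : φ Polynomial.X = ψ Polynomial.X) : φ = ψ :=
    Polynomial.algHom_ext' (Polynomial.algHom_ext hs) hy
  refine hext ?_ ?_ <;> simp [arcAt, genericArc, PowerSeries.mapAlgHom_apply]

theorem constantCoeff_genericArc (hy : PowerSeries.constantCoeff y = Polynomial.X) (p : F[X][Y]) :
    PowerSeries.constantCoeff (genericArc c y p) = p := by
  suffices (PowerSeries.constantCoeff.comp (genericArc c y).toRingHom) = RingHom.id _ from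
    DFunLike.congr_fun this p
  refine Polynomial.ringHom_ext' (Polynomial.ringHom_ext (fun a ↦ ?_) ?_) ?_ <;>
    simp [genericArc, hy, Polynomial.algebraMap_apply, PowerSeries.algebraMap_apply]

theorem constantCoeff_arcAt (hy : PowerSeries.constantCoeff y = Polynomial.X) (P : F × F)
    (p : F[X][Y]) : PowerSeries.constantCoeff (arcAt c y P p) = p.aevalAeval P.1 P.2 := by
  refine Eq.trans ?_ (congrArg (Polynomial.aevalAeval P.1 P.2)
    (constantCoeff_genericArc (c := c) hy p))
  rw [arcAt, AlgHom.comp_apply, PowerSeries.mapAlgHom_apply,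
    ← PowerSeries.coeff_zero_eq_constantCoeff_apply, PowerSeries.coeff_map,
    PowerSeries.coeff_zero_eq_constantCoeff_apply]
  rfl

theorem genericArc_boxMonomial_mem {d m n : ℕ} (hc : c ∈ planeDegreeLE F (d + 1))
    (hy : y ∈ powerSeriesFiltration (planeDegreeLE F) d 1) (z : Fin m × Fin n) :
    genericArc c y (boxMonomial F z) ∈ powerSeriesFiltration (planeDegreeLE F) d (m + n) := by
  have hmono := planeDegreeLE_mono (k := F)
  have hs : PowerSeries.C (Polynomial.C Polynomial.X) + PowerSeries.C c * PowerSeries.X ∈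
      powerSeriesFiltration (planeDegreeLE F) d 1 := by
    refine add_mem (C_mem_powerSeriesFiltration hmono (C_mem_planeDegreeLE
      Polynomial.natDegree_X_le)) ?_
    rw [mul_comm]
    exact X_mul_mem_powerSeriesFiltration (C_mem_powerSeriesFiltration hmono hc)
  have hmul := SetLike.mul_mem_graded (SetLike.pow_mem_graded z.1 hs)
    (SetLike.pow_mem_graded z.2 hy)
  rw [boxMonomial_eq, map_mul, map_pow, map_pow, genericArc, Polynomial.aevalAeval_X,
    Polynomial.aevalAeval_Y]
  refine powerSeriesFiltration_mono hmono ?_ hmul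
  simpa using add_le_add z.1.2.le z.2.2.le

theorem X_pow_dvd_arcAt_sum_mul_pow_card [Fintype F] {ι : Type*} [Fintype ι] {u : F[X][Y]} {M : ℕ}
    (hy : PowerSeries.constantCoeff y = Polynomial.X) {P : F × F} (hP : arcAt c y P u = 0)
    (hM : M ≤ Fintype.card F) {m r : ι → F[X][Y]}
    (hdvd : ∀ k < M, u ∣ ∑ i, PowerSeries.coeff k (genericArc c y (m i)) * r i) :
    PowerSeries.X ^ M ∣ arcAt c y P (∑ i, m i * r i ^ Fintype.card F) := by
  have hsplit : arcAt c y P (∑ i, m i * r i ^ Fintype.card F) =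
      ∑ i, arcAt c y P (m i) * PowerSeries.C ((r i).aevalAeval P.1 P.2) +
      ∑ i, arcAt c y P (m i) * (arcAt c y P (r i) ^ Fintype.card F -
        PowerSeries.C (PowerSeries.constantCoeff (arcAt c y P (r i)))) := by
    simp_rw [← Finset.sum_add_distrib, ← mul_add, constantCoeff_arcAt hy, add_sub_cancel,
      map_sum, map_mul, map_pow]
  rw [hsplit]
  refine dvd_add (PowerSeries.X_pow_dvd_iff.2 fun k hk ↦ ?_) (Finset.dvd_sum fun i _ ↦
    ((pow_dvd_pow _ hM).trans (X_pow_card_dvd_pow_card_sub_C _)).mul_left _)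
  have hu : u.aevalAeval P.1 P.2 = 0 := by rw [← constantCoeff_arcAt hy P u, hP, map_zero]
  obtain ⟨w, hw⟩ := hdvd k hk
  calc PowerSeries.coeff k (∑ i, arcAt c y P (m i) * PowerSeries.C ((r i).aevalAeval P.1 P.2))
      = (∑ i, PowerSeries.coeff k (genericArc c y (m i)) * r i).aevalAeval P.1 P.2 := by
        simp only [map_sum, PowerSeries.coeff_mul_C, map_mul]
        rfl
    _ = 0 := by rw [hw, map_mul, hu, zero_mul]

theorem exists_ne_zero_forall_dvd_sum_coeff_genericArc {u : F[X][Y]} (hu : u.Monic)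
    (hud : u ∈ planeDegreeLE F u.natDegree) {A B M d : ℕ} (hc : c ∈ planeDegreeLE F (d + 1))
    (hy : y ∈ powerSeriesFiltration (planeDegreeLE F) d 1) {e : ℕ} (he : e = u.natDegree)
    (hM : M * (A + B + 2 * e + d * M + 1) < e * A * B) :
    ∃ a : Fin A × Fin e → Fin B × Fin e → F, a ≠ 0 ∧ ∀ k < M,
      u ∣ ∑ x, PowerSeries.coeff k (genericArc c y (boxMonomial F x)) *
        ∑ z, a x z • boxMonomial F z := by
  let g (k : Fin M) (p : (Fin A × Fin e) × (Fin B × Fin e)) : F[X][Y] :=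
    PowerSeries.coeff k (genericArc c y (boxMonomial F p.1)) * boxMonomial F p.2
  have hg (k : Fin M) (p) : g k p ∈ planeDegreeLE F (A + B + 2 * e + d * M) := by
    refine planeDegreeLE_mono ?_ (SetLike.mul_mem_graded
      (genericArc_boxMonomial_mem hc hy p.1 k) (boxMonomial_mem_planeDegreeLE p.2))
    have := Nat.mul_le_mul_left d k.2.le
    omega
  have hcard : M * (u.natDegree * (A + B + 2 * e + d * M + 1)) <
      Fintype.card ((Fin A × Fin e) × (Fin B × Fin e)) := by
    have he0 : 0 < e := by
      by_contra! h
      simp [Nat.le_zero.1 h] at hM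
    simp only [Fintype.card_prod, Fintype.card_fin, ← he]
    calc M * (e * (A + B + 2 * e + d * M + 1))
        = e * (M * (A + B + 2 * e + d * M + 1)) := mul_left_comm ..
      _ < e * (e * A * B) := Nat.mul_lt_mul_of_pos_left hM he0
      _ = A * e * (B * e) := by ring
  obtain ⟨a, ha, hdvd⟩ := exists_ne_zero_forall_dvd_sum_smul hu hud hg hcard
  refine ⟨fun x z ↦ a (x, z), fun h ↦ ha (funext fun p ↦ congrFun (congrFun h p.1) p.2),
    fun k hk ↦ ?_⟩
  simp_rw [Finset.mul_sum, mul_smul_comm]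
  rw [← Fintype.sum_prod_type (fun p : (Fin A × Fin e) × (Fin B × Fin e) ↦ a p • g ⟨k, hk⟩ p)]
  exact hdvd ⟨k, hk⟩

theorem card_mul_le_of_arcAt_eq_zero [Fintype F] {u : F[X][Y]} (hu : u.Monic) (hi : Irreducible u)
    (hud : u ∈ planeDegreeLE F u.natDegree) {A B M d e : ℕ} (he : e = u.natDegree)
    (hc : c ∈ planeDegreeLE F (d + 1)) (hy : y ∈ powerSeriesFiltration (planeDegreeLE F) d 1)
    (hy0 : PowerSeries.constantCoeff y = Polynomial.X) {S : Finset (F × F)}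
    (hcS : ∀ P ∈ S, c.aevalAeval P.1 P.2 ≠ 0) (huS : ∀ P ∈ S, arcAt c y P u = 0)
    (hMq : M ≤ Fintype.card F) (hA : e * (A + e) < Fintype.card F)
    (hM : M * (A + B + 2 * e + d * M + 1) < e * A * B) :
    S.card * M ≤ e * (A + e + Fintype.card F * (B + e)) := by
  rcases S.eq_empty_or_nonempty with rfl | ⟨P₀, hP₀⟩
  · simp
  obtain ⟨a, ha, hdvd⟩ := exists_ne_zero_forall_dvd_sum_coeff_genericArc hu hud hc hy he hM
  set R := ∑ x, boxMonomial F x * (∑ z, a x z • boxMonomial F z) ^ Fintype.card F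
  have hR : R ∈ planeDegreeLE F (A + e + Fintype.card F * (B + e)) := sum_mem fun x _ ↦
    SetLike.mul_mem_graded (boxMonomial_mem_planeDegreeLE x)
      (SetLike.pow_mem_graded _ (sum_smul_boxMonomial_mem_planeDegreeLE (a x)))
  have hndvd : ¬ u ∣ R := not_dvd_sum_boxMonomial_mul_pow_card hu hi hud he hA P₀.1 (hcS P₀ hP₀)
    (by rw [← arcAt_eq, huS P₀ hP₀]) ha
  rw [← Fintype.card_coe, he]
  rw [he] at hR
  refine card_mul_le_natDegree_mul (fun P : S ↦ arcAt c y P.1) hu hud hR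
    (fun g hg ↦ (hi.prime.dvd_or_dvd hg).resolve_right hndvd) (fun P Q hPQ ↦ ?_)
    (fun P ↦ ?_) (fun P ↦ huS P P.2)
    fun P ↦ X_pow_dvd_arcAt_sum_mul_pow_card hy0 (huS P P.2) hMq hdvd
  · simp_rw [constantCoeff_arcAt hy0]
    by_contra! h
    exact hPQ (Subtype.ext (Prod.ext (by simpa using h (Polynomial.C Polynomial.X))
      (by simpa using h Polynomial.X)))
  · rw [arcAt_eq]
    exact exists_aevalAeval_eq_X _ (hcS P P.2) _

end Arcs

section CurvePoints

variable {F σ : Type*} [Field F] {f u : MvPolynomial (Option σ) F} {d e : ℕ} {a : F}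

theorem planePoint_planePoint {A B : Type*} [CommRing A] [Algebra F A] [CommRing B] [Algebra F B]
    [Algebra A B] [IsScalarTower F A B] (x₀ : Option σ → F) (l : σ → F) (s y : A) (s' y' : B) :
    planePoint (planePoint x₀ l s y) (algebraMap F A ∘ l) s' y' =
      planePoint x₀ l (algebraMap A B s + s') (algebraMap A B y + y') := by
  funext o
  cases o <;> simp [planePoint, ← IsScalarTower.algebraMap_apply, mul_add, add_assoc]

theorem exists_aeval_planePoint_add_eq_C {A : Type*} [CommRing A] [Algebra F A]
    {V : ℕ → Submodule F A} [SetLike.GradedMonoid V] (hV : Monotone V) {s y : A} (hs : s ∈ V 1)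
    (hy : y ∈ V 1) (x₀ : Option σ → F) (l : σ → F) (hf : f.totalDegree ≤ d) :
    ∃ v ∈ powerSeriesFiltration V (2 * d) 0, PowerSeries.constantCoeff v = 0 ∧
      aeval (planePoint x₀ l (PowerSeries.C s + PowerSeries.C
        (aeval (planePoint x₀ l s y) (pderiv none f) ^ 2) * PowerSeries.X) (PowerSeries.C y + v)) f
        = PowerSeries.C (aeval (planePoint x₀ l s y) f) := by
  have hC (a : F) : algebraMap F A a ∈ V 0 := by
    rw [Algebra.algebraMap_eq_smul_one]
    exact Submodule.smul_mem _ _ SetLike.GradedOne.one_mem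
  have hx₀ (o) : planePoint x₀ l s y o ∈ V 1 := by
    cases o with
    | none => exact add_mem (hV zero_le_one (hC _)) hy
    | some i =>
      exact add_mem (hV zero_le_one (hC _)) (by simpa using SetLike.mul_mem_graded (hC _) hs)
  obtain ⟨v, hv, hv0, hvf⟩ := exists_powerSeries_aeval_planePoint_eq_C (α := 0) hV hx₀
    (lam := algebraMap F A ∘ l) (fun i ↦ hV zero_le_one (hC _)) hf
  refine ⟨v, by simpa using hv, hv0, ?_⟩
  rwa [planePoint_planePoint] at hvf

theorem exists_genericArc_planeSection_eq_C (x₀ : Option σ → F) (l : σ → F)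
    (hf : f.totalDegree ≤ d) :
    ∃ y ∈ powerSeriesFiltration (planeDegreeLE F) (2 * d) 1,
      PowerSeries.constantCoeff y = Polynomial.X ∧
      genericArc (planeSection x₀ l (pderiv none f) ^ 2) y (planeSection x₀ l f) =
        PowerSeries.C (planeSection x₀ l f) := by
  have hmono := planeDegreeLE_mono (k := F)
  obtain ⟨v, hv, hv0, hvf⟩ := exists_aeval_planePoint_add_eq_C hmono
    (C_mem_planeDegreeLE Polynomial.natDegree_X_le) X_mem_planeDegreeLE x₀ l hf
  refine ⟨PowerSeries.C Polynomial.X + v, add_mem (C_mem_powerSeriesFiltration hmono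
    X_mem_planeDegreeLE) (powerSeriesFiltration_mono hmono zero_le_one hv), ?_,
    (aevalAeval_planeSection ..).trans hvf⟩
  rw [map_add, hv0, add_zero, PowerSeries.constantCoeff_C]

theorem constantCoeff_arcAt_planeSection {x₀ : Option σ → F} {l : σ → F} {c : F[X][Y]}
    {y : F[X][Y]⟦X⟧} (hy : PowerSeries.constantCoeff y = Polynomial.X) (P : F × F)
    (p : MvPolynomial (Option σ) F) :
    PowerSeries.constantCoeff (arcAt c y P (planeSection x₀ l p)) =
      eval (planePoint x₀ l P.1 P.2) p :=
  (constantCoeff_arcAt hy P _).trans (aevalAeval_planeSection ..)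

theorem arcAt_planeSection_eq_C {x₀ : Option σ → F} {l : σ → F} {c : F[X][Y]} {y : F[X][Y]⟦X⟧}
    (hf : genericArc c y (planeSection x₀ l f) = PowerSeries.C (planeSection x₀ l f))
    (P : F × F) :
    arcAt c y P (planeSection x₀ l f) = PowerSeries.C (eval (planePoint x₀ l P.1 P.2) f) := by
  rw [arcAt, AlgHom.comp_apply, hf, PowerSeries.mapAlgHom_apply, PowerSeries.map_C]
  exact congrArg _ (aevalAeval_planeSection ..)

theorem arcAt_planeSection_eq_zero {x₀ : Option σ → F} {l : σ → F} {c : F[X][Y]} {y : F[X][Y]⟦X⟧}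
    (hy : PowerSeries.constantCoeff y = Polynomial.X)
    (hf : genericArc c y (planeSection x₀ l f) = PowerSeries.C (planeSection x₀ l f))
    (hua : u ∣ f - C a) {P : F × F} (hP : eval (planePoint x₀ l P.1 P.2) u = 0)
    (hPy : eval (planePoint x₀ l P.1 P.2) (pderiv none f) ≠ 0) :
    arcAt c y P (planeSection x₀ l u) = 0 := by
  have harc (p : MvPolynomial (Option σ) F) :
      aeval (fun o ↦ arcAt c y P (planeSection (F := F) x₀ l (X o))) p =
        arcAt c y P (planeSection x₀ l p) :=
    (DFunLike.congr_fun (aeval_unique ((arcAt c y P).comp (planeSection (F := F) x₀ l))) p).symm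
  refine (harc u).symm.trans (aeval_eq_zero_of_aeval_eq_C (A := F) hua hP hPy (fun o ↦ ?_)
    ((harc f).trans (arcAt_planeSection_eq_C hf P)))
  exact (constantCoeff_arcAt_planeSection hy P _).trans (eval_X o)

theorem IsNormalized.card_planePoint_mul_le [Fintype F] (hf : f.totalDegree ≤ d)
    (hu : IsNormalized u e) (hua : u ∣ f - C a) {x₀ : Option σ → F} {l : σ → F}
    (hi : Irreducible (planeSection x₀ l u)) {A B M : ℕ} {S : Finset (F × F)}
    (hS : ∀ P ∈ S, eval (planePoint x₀ l P.1 P.2) u = 0 ∧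
      eval (planePoint x₀ l P.1 P.2) (pderiv none f) ≠ 0)
    (hMq : M ≤ Fintype.card F) (hA : e * (A + e) < Fintype.card F)
    (hM : M * (A + B + 2 * e + 2 * d * M + 1) < e * A * B) :
    S.card * M ≤ e * (A + e + Fintype.card F * (B + e)) := by
  obtain ⟨y, hy, hy0, hyf⟩ := exists_genericArc_planeSection_eq_C x₀ l hf
  have he : (planeSection x₀ l u).natDegree = e := by
    rw [natDegree_planeSection hu.monic, hu.natDegree_eq]
  refine card_mul_le_of_arcAt_eq_zero (c := planeSection x₀ l (pderiv none f) ^ 2) (y := y)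
    (planeSection_monic hu.monic) hi (he ▸ planeSection_mem_planeDegreeLE hu.totalDegree_le) he.symm
    ?_ hy hy0 (fun P hP ↦ ?_) (fun P hP ↦ arcAt_planeSection_eq_zero hy0 hyf hua (hS P hP).1
      (hS P hP).2) hMq hA hM
  · exact planeDegreeLE_mono (by grind) (SetLike.pow_mem_graded 2
      (planeSection_mem_planeDegreeLE ((totalDegree_pderiv_le none f).trans
        ((Nat.sub_le _ 1).trans hf))))
  · rw [map_pow, aevalAeval_planeSection]
    exact pow_ne_zero 2 (hS P hP).2

end CurvePoints

theorem exists_lt_mul_le_add {e : ℕ} (he : 0 < e) (x : ℕ) : ∃ k, x < e * k ∧ e * k ≤ x + e :=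
  ⟨x / e + 1, Nat.lt_mul_div_succ x he, by
    rw [mul_add, mul_one]
    exact Nat.add_le_add_right (Nat.mul_div_le x e) e⟩

theorem mul_add_lt_mul_of_sqrt {q D M E H : ℕ} (hM : M * M ≤ q) (hM16 : 16 ≤ M) (hD : 0 < D)
    (hE : q ≤ 2 * E) (hH : M + 8 * D ≤ H) (hH' : H ≤ M + 9 * D) :
    M * (E + H + 2 * D + 2 * D * M + D) < E * H := by
  have hMq : 16 * M ≤ q := (Nat.mul_le_mul_right M hM16).trans hM
  have : 0 < D * q := Nat.mul_pos hD (by omega)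
  have : q ≤ D * q := Nat.le_mul_of_pos_left q hD
  have hDM : 16 * (D * M) ≤ D * q := by
    simpa only [mul_left_comm] using Nat.mul_le_mul_left D hMq
  calc M * (E + H + 2 * D + 2 * D * M + D)
      ≤ M * (E + (M + 9 * D) + 2 * D + 2 * D * M + D) := by gcongr
    _ = M * E + M * M + 12 * (D * M) + 2 * (D * (M * M)) := by ring
    _ ≤ M * E + q + 12 * (D * M) + 2 * (D * q) := by gcongr
    _ < M * E + 4 * (D * q) := by omega
    _ ≤ M * E + 4 * (D * (2 * E)) := by gcongr
    _ = E * (M + 8 * D) := by ring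
    _ ≤ E * H := by gcongr

-- Taking `e * A ≈ q / 2` and `e * B ≈ √q + 8 * d ^ 2` balances the two error terms.
theorem exists_stepanov_parameters {q d e : ℕ} (hq : 256 * d ^ 4 ≤ q) (he : 1 ≤ e) (hed : e ≤ d) :
    ∃ A B : ℕ, e * (A + e) < q ∧
      q.sqrt * (A + B + 2 * e + 2 * d * q.sqrt + 1) < e * A * B ∧
      e * (A + e + q * (B + e)) ≤ q * q.sqrt + 11 * d ^ 2 * q := by
  have hd : 1 ≤ d := he.trans hed
  obtain ⟨A, hA, hA'⟩ := exists_lt_mul_le_add he (q / 2)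
  obtain ⟨B, hB, hB'⟩ := exists_lt_mul_le_add he (q.sqrt + 8 * d ^ 2)
  have hdD : d ≤ d ^ 2 := Nat.le_self_pow two_ne_zero d
  have hee : e * e ≤ d ^ 2 := by simpa only [sq] using Nat.mul_le_mul hed hed
  have hed' : e * d ≤ d ^ 2 := by simpa only [sq] using Nat.mul_le_mul_right d hed
  have hDq : 256 * d ^ 2 ≤ q := (Nat.mul_le_mul_left _ (Nat.pow_le_pow_right hd (by simp))).trans hq
  have hsqrt : 16 ≤ q.sqrt := by
    have : 1 ≤ d ^ 4 := Nat.one_le_pow _ _ hd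
    exact Nat.le_sqrt.2 (by omega)
  refine ⟨A, B, by rw [mul_add]; omega, ?_, ?_⟩
  · refine lt_of_mul_lt_mul_left ?_ (Nat.zero_le e)
    calc e * (q.sqrt * (A + B + 2 * e + 2 * d * q.sqrt + 1))
        = q.sqrt * (e * A + e * B + 2 * (e * e) + 2 * (e * d) * q.sqrt + e) := by ring
      _ ≤ q.sqrt * (e * A + e * B + 2 * d ^ 2 + 2 * d ^ 2 * q.sqrt + d ^ 2) := by
        gcongr
        exact hed.trans hdD
      _ < e * A * (e * B) := mul_add_lt_mul_of_sqrt (Nat.sqrt_le q) hsqrt (by omega) (by omega)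
        hB.le (by omega)
      _ = e * (e * A * B) := mul_left_comm ..
  · calc e * (A + e + q * (B + e)) = e * A + e * e + q * (e * B + e * e) := by ring
      _ ≤ q + q * (q.sqrt + 8 * d ^ 2 + d ^ 2 + d ^ 2) := by
        gcongr
        · omega
        · omega
      _ = q * q.sqrt + 10 * d ^ 2 * q + 1 * q := by ring
      _ ≤ q * q.sqrt + 10 * d ^ 2 * q + d ^ 2 * q := by
        gcongr
        exact Nat.one_le_pow _ _ hd
      _ = q * q.sqrt + 11 * d ^ 2 * q := by ring

theorem IsNormalized.card_planePoint_mul_sqrt_le {F σ : Type*} [Field F] [Fintype F]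
    {f u : MvPolynomial (Option σ) F} {d e : ℕ} {a : F} (hf : f.totalDegree ≤ d)
    (hu : IsNormalized u e) (hed : e ≤ d) (hua : u ∣ f - C a) {x₀ : Option σ → F} {l : σ → F}
    (hi : Irreducible (planeSection x₀ l u)) (hq : 256 * d ^ 4 ≤ Fintype.card F)
    {S : Finset (F × F)} (hS : ∀ P ∈ S, eval (planePoint x₀ l P.1 P.2) u = 0 ∧
      eval (planePoint x₀ l P.1 P.2) (pderiv none f) ≠ 0) :
    S.card * (Fintype.card F).sqrt ≤
      Fintype.card F * (Fintype.card F).sqrt + 11 * d ^ 2 * Fintype.card F := by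
  obtain ⟨A, B, hA, hM, hbound⟩ := exists_stepanov_parameters hq hu.pos hed
  exact (hu.card_planePoint_mul_le hf hua hi hS (Nat.sqrt_le_self _) hA hM).trans hbound

section LineSums

variable {F V : Type*} [Field F] [AddCommGroup V] [Module F V] [Fintype V]

theorem sum_mul_sum_add_smul {R : Type*} [CommSemiring R] [DecidableEq F] {g : V → R}
    (hg : ∑ z, g z = 0) (s t : F) :
    ∑ z, ∑ l, g (z + s • l) * g (z + t • l) =
      if s = t then Fintype.card V * ∑ z, g z ^ 2 else 0 := by
  have htranslate : ∑ z, ∑ l, g (z + s • l) * g (z + t • l) =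
      ∑ l, ∑ z, g z * g (z + (t - s) • l) := by
    rw [Finset.sum_comm]
    refine Finset.sum_congr rfl fun l _ ↦ Fintype.sum_equiv (Equiv.addRight (s • l)) _ _ fun z ↦ ?_
    rw [Equiv.coe_addRight, add_assoc z, ← add_smul, add_sub_cancel]
  rw [htranslate]
  split_ifs with h
  · simp [h, pow_two]
  · have hne : t - s ≠ 0 := sub_ne_zero.2 (Ne.symm h)
    rw [Finset.sum_comm]
    refine Finset.sum_eq_zero fun z _ ↦ ?_
    have hline : ∑ l, g (z + (t - s) • l) = ∑ w, g w :=
      Fintype.sum_equiv ((MulAction.toPerm (Units.mk0 _ hne)).trans (Equiv.addLeft z)) _ _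
        fun l ↦ by simp [Units.smul_def]
    rw [← Finset.mul_sum, hline, hg, mul_zero]

variable [Fintype F]

theorem sum_sum_sq_line {R : Type*} [CommSemiring R] {g : V → R} (hg : ∑ z, g z = 0) :
    ∑ z, ∑ l, (∑ s : F, g (z + s • l)) ^ 2 = Fintype.card F * Fintype.card V * ∑ z, g z ^ 2 := by
  classical
  calc ∑ z, ∑ l, (∑ s : F, g (z + s • l)) ^ 2
      = ∑ z, ∑ s : F, ∑ t : F, ∑ l, g (z + s • l) * g (z + t • l) := by
        simp_rw [pow_two, Finset.sum_mul_sum]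
        refine Finset.sum_congr rfl fun z _ ↦ ?_
        rw [Finset.sum_comm]
        exact Finset.sum_congr rfl fun s _ ↦ Finset.sum_comm
    _ = ∑ s : F, ∑ t : F, ∑ z, ∑ l, g (z + s • l) * g (z + t • l) := by
        rw [Finset.sum_comm]
        exact Finset.sum_congr rfl fun s _ ↦ Finset.sum_comm
    _ = Fintype.card F * Fintype.card V * ∑ z, g z ^ 2 := by
        simp [sum_mul_sum_add_smul hg, mul_assoc]

theorem sum_sub_average_sq_le {ι : Type*} [Fintype ι] (c : ι → ℝ) :
    ∑ z, (c z - (∑ w, c w) / Fintype.card ι) ^ 2 ≤ ∑ z, c z ^ 2 := by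
  rcases isEmpty_or_nonempty ι with _ | _
  · simp
  set μ := (∑ w, c w) / Fintype.card ι with hμ
  have hcard : ∑ w, c w = Fintype.card ι * μ := by
    rw [hμ, mul_div_cancel₀ _ (by exact_mod_cast Fintype.card_ne_zero)]
  calc ∑ z, (c z - μ) ^ 2 = ∑ z, c z ^ 2 - Fintype.card ι * μ ^ 2 := by
        simp only [sub_sq, Finset.sum_add_distrib, Finset.sum_sub_distrib, ← Finset.sum_mul,
          ← Finset.mul_sum, hcard, Finset.sum_const, Finset.card_univ, nsmul_eq_mul]
        ring
    _ ≤ ∑ z, c z ^ 2 := sub_le_self _ (by positivity)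

theorem mul_sq_le_sum_sq_of_line_sums_le {c : V → ℝ} {D T μ : ℝ} {z : V} (hc0 : 0 ≤ c z)
    (hcD : c z ≤ D) {G : Finset V} (hG : c z ≠ 0 → Fintype.card V ≤ 2 * #G)
    (hT : c z ≠ 0 → ∀ l ∈ G, ∑ s : F, c (z + s • l) ≤ T) (hgap : T ≤ Fintype.card F * μ) :
    c z * (Fintype.card V * (Fintype.card F * μ - T) ^ 2) ≤
      2 * D * ∑ l, (∑ s : F, (c (z + s • l) - μ)) ^ 2 := by
  have hD : 0 ≤ D := hc0.trans hcD
  obtain h0 | h0 := eq_or_ne (c z) 0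
  · rw [h0, zero_mul]
    positivity
  set X := Fintype.card F * μ - T
  have hGz : (Fintype.card V : ℝ) ≤ 2 * #G := by exact_mod_cast hG h0
  have hdeviation : ∀ l ∈ G, X ^ 2 ≤ (∑ s : F, (c (z + s • l) - μ)) ^ 2 := by
    intro l hl
    rw [Finset.sum_sub_distrib, Finset.sum_const, Finset.card_univ, nsmul_eq_mul]
    refine (pow_le_pow_left₀ (sub_nonneg.2 hgap) ?_ 2).trans_eq (sub_sq_comm _ _)
    exact sub_le_sub_left (hT h0 l hl) _
  calc c z * (Fintype.card V * X ^ 2) ≤ D * (2 * #G * X ^ 2) := by gcongr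
    _ = 2 * D * ∑ l ∈ G, X ^ 2 := by
        rw [Finset.sum_const, nsmul_eq_mul]
        ring
    _ ≤ 2 * D * ∑ l, (∑ s : F, (c (z + s • l) - μ)) ^ 2 := by
        gcongr
        exact (Finset.sum_le_sum hdeviation).trans (Finset.sum_le_sum_of_subset_of_nonneg
          (Finset.subset_univ _) fun _ _ _ ↦ sq_nonneg _)

/- Every point of the support of `c` sees at least half of its lines with a sum below `T`; if `T`
were much less than the expected line sum `q μ`, then these lines would contradict the variance. -/
theorem sum_mul_sq_le_of_line_sums_le {c : V → ℝ} {D T : ℝ} (hc0 : ∀ z, 0 ≤ c z)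
    (hcD : ∀ z, c z ≤ D) {G : V → Finset V}
    (hG : ∀ z, c z ≠ 0 → Fintype.card V ≤ 2 * #(G z))
    (hT : ∀ z, c z ≠ 0 → ∀ l ∈ G z, ∑ s : F, c (z + s • l) ≤ T)
    (hgap : T ≤ Fintype.card F * ((∑ z, c z) / Fintype.card V)) :
    (∑ z, c z) * (Fintype.card F * ((∑ z, c z) / Fintype.card V) - T) ^ 2 ≤
      2 * D ^ 2 * Fintype.card F * ∑ z, c z := by
  set N := ∑ z, c z with hN
  set μ := N / Fintype.card V with hμ
  set X := Fintype.card F * μ - T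
  have hV : (0 : ℝ) < Fintype.card V := by exact_mod_cast Fintype.card_pos
  have hD : 0 ≤ D := (hc0 0).trans (hcD 0)
  have hcentered : ∑ z, (c z - μ) = 0 := by
    rw [Finset.sum_sub_distrib, Finset.sum_const, Finset.card_univ, nsmul_eq_mul, hμ,
      mul_div_cancel₀ _ hV.ne', ← hN, sub_self]
  refine le_of_mul_le_mul_left ?_ hV
  calc Fintype.card V * (N * X ^ 2) = ∑ z, c z * (Fintype.card V * X ^ 2) := by
        rw [← Finset.sum_mul, ← hN]
        ring
    _ ≤ 2 * D * (Fintype.card F * Fintype.card V * ∑ z, (c z - μ) ^ 2) := by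
        rw [← sum_sum_sq_line hcentered, Finset.mul_sum]
        exact Finset.sum_le_sum fun z _ ↦
          mul_sq_le_sum_sq_of_line_sums_le (hc0 z) (hcD z) (hG z) (hT z) hgap
    _ ≤ 2 * D * (Fintype.card F * Fintype.card V * ∑ z, D * c z) := by
        gcongr 2 * D * (_ * ?_)
        refine (sum_sub_average_sq_le c).trans (Finset.sum_le_sum fun z _ ↦ ?_)
        rw [pow_two]
        exact mul_le_mul_of_nonneg_right (hcD z) (hc0 z)
    _ = Fintype.card V * (2 * D ^ 2 * Fintype.card F * N) := by
        rw [← Finset.mul_sum, ← hN]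
        ring

theorem card_mul_sum_le_of_line_sums_le {c : V → ℝ} {D T : ℝ} (hc0 : ∀ z, 0 ≤ c z)
    (hcD : ∀ z, c z ≤ D) (hT0 : 0 ≤ T) {G : V → Finset V}
    (hG : ∀ z, c z ≠ 0 → Fintype.card V ≤ 2 * #(G z))
    (hT : ∀ z, c z ≠ 0 → ∀ l ∈ G z, ∑ s : F, c (z + s • l) ≤ T) :
    Fintype.card F * ∑ z, c z ≤ Fintype.card V * (T + 2 * D * √(Fintype.card F)) := by
  have hV : (0 : ℝ) < Fintype.card V := by exact_mod_cast Fintype.card_pos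
  have hD : 0 ≤ D := (hc0 0).trans (hcD 0)
  rw [← div_le_iff₀' hV, mul_div_assoc, ← sub_le_iff_le_add']
  set X := Fintype.card F * ((∑ z, c z) / Fintype.card V) - T with hX
  rcases le_total X 0 with hneg | hpos
  · exact hneg.trans (by positivity)
  rcases (Finset.sum_nonneg fun z _ ↦ hc0 z).eq_or_lt with hN | hN
  · rw [hX, ← hN, zero_div, mul_zero, zero_sub]
    exact (neg_nonpos.2 hT0).trans (by positivity)
  have hsq := sum_mul_sq_le_of_line_sums_le hc0 hcD hG hT (sub_nonneg.1 hpos)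
  rw [mul_comm] at hsq
  refine abs_le_of_sq_le_sq' ((le_of_mul_le_mul_right hsq hN).trans ?_) (by positivity) |>.2
  rw [mul_pow, Real.sq_sqrt (Nat.cast_nonneg _)]
  nlinarith [mul_nonneg (sq_nonneg D) (Nat.cast_nonneg (α := ℝ) (Fintype.card F))]

end LineSums

section SchwartzZippel

variable {F σ : Type*} [Field F] [Fintype F] [DecidableEq F] [Fintype σ] [DecidableEq σ]
  {p : MvPolynomial σ F}

theorem card_zeros_mul_card_le (hp : p ≠ 0) :
    #{x : σ → F | eval x p = 0} * Fintype.card F ≤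
      p.totalDegree * Fintype.card F ^ Fintype.card σ := by
  let ε := Fintype.equivFin σ
  have hcard : #{x : σ → F | eval x p = 0} =
      #{x ∈ Fintype.piFinset fun _ : Fin (Fintype.card σ) ↦ (Finset.univ : Finset F) |
        eval x (rename ε p) = 0} := by
    refine Finset.card_equiv (ε.arrowCongr (Equiv.refl F)) fun x ↦ ?_
    have hx : ε.arrowCongr (Equiv.refl F) x ∘ ε = x := by
      ext i
      simp
    simp [eval_rename, hx]
  have hSZ := schwartz_zippel_totalDegree ((rename_injective ε ε.injective).ne_iff.2 hp)
    (Finset.univ : Finset F)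
  rw [← hcard, Finset.card_univ, div_le_div_iff₀ (by positivity)
    (by exact_mod_cast Fintype.card_pos), totalDegree_rename_of_injective ε.injective] at hSZ
  exact_mod_cast hSZ

theorem card_le_two_mul_card_nonzeros (hp : p ≠ 0) (hq : 2 * p.totalDegree ≤ Fintype.card F) :
    Fintype.card (σ → F) ≤ 2 * #{x : σ → F | eval x p ≠ 0} := by
  have hzeros : 2 * #{x : σ → F | eval x p = 0} ≤ Fintype.card (σ → F) := by
    refine Nat.le_of_mul_le_mul_right ?_ (Fintype.card_pos (α := F))
    calc 2 * #{x : σ → F | eval x p = 0} * Fintype.card F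
        ≤ 2 * (p.totalDegree * Fintype.card F ^ Fintype.card σ) := by
          rw [mul_assoc]
          exact Nat.mul_le_mul_left 2 (card_zeros_mul_card_le hp)
      _ ≤ Fintype.card (σ → F) * Fintype.card F := by
          rw [← mul_assoc, mul_comm, Fintype.card_fun]
          exact Nat.mul_le_mul_left _ hq
  have hsplit := Finset.card_filter_add_card_filter_not (s := Finset.univ)
    (fun x : σ → F ↦ eval x p = 0)
  rw [Finset.card_univ] at hsplit
  simp only [ne_eq]
  omega

end SchwartzZippel

theorem exists_eval_ne_zero {F σ : Type*} [Field F] [Fintype F] [Finite σ] {p : MvPolynomial σ F}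
    (hp : p ≠ 0) (hq : p.totalDegree < Fintype.card F) : ∃ x, eval x p ≠ 0 := by
  classical
  have := Fintype.ofFinite σ
  by_contra! h
  have hSZ := card_zeros_mul_card_le hp
  rw [Finset.filter_true_of_mem fun x _ ↦ h x, Finset.card_univ, Fintype.card_fun, mul_comm] at hSZ
  exact hq.not_ge (Nat.le_of_mul_le_mul_right hSZ (pow_pos Fintype.card_pos _))

section SmoothZeros

variable {F σ : Type*} [Field F] [Fintype F] [DecidableEq F]
  {f u : MvPolynomial (Option σ) F} {d e : ℕ} {a : F}

/-- The number of zeros of `u` over the point `z` at which the derivative of `f` in the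
distinguished variable `none` does not vanish. `Option.elim' y z` is the point over `z` with
distinguished coordinate `y`. -/
noncomputable def smoothZeroCount (f u : MvPolynomial (Option σ) F) (z : σ → F) : ℕ :=
  #{y : F | eval (Option.elim' y z) u = 0 ∧ eval (Option.elim' y z) (pderiv none f) ≠ 0}

theorem smoothZeroCount_le (hu : (optionEquivLeft F σ u).Monic) (z : σ → F) :
    smoothZeroCount f u z ≤ (optionEquivLeft F σ u).natDegree := by
  have hmonic := hu.map (eval z)
  have hroots : ({y : F | eval (Option.elim' y z) u = 0 ∧
      eval (Option.elim' y z) (pderiv none f) ≠ 0} : Finset F) ⊆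
      ((optionEquivLeft F σ u).map (eval z)).roots.toFinset := by
    intro y hy
    rw [Multiset.mem_toFinset, Polynomial.mem_roots hmonic.ne_zero, Polynomial.IsRoot.def,
      ← (Finset.mem_filter.1 hy).2.1]
    exact eval_map_optionEquivLeft (Option.elim' y z) u
  calc smoothZeroCount f u z ≤ _ := Finset.card_le_card hroots
    _ ≤ _ := Multiset.toFinset_card_le _
    _ ≤ _ := Polynomial.card_roots' _
    _ = (optionEquivLeft F σ u).natDegree := hu.natDegree_map _

theorem sum_smoothZeroCount_line (z l : σ → F) (y : F) :
    ∑ s : F, smoothZeroCount f u (z + s • l) =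
      #{P : F × F | eval (planePoint (Option.elim' y z) l P.1 P.2) u = 0 ∧
        eval (planePoint (Option.elim' y z) l P.1 P.2) (pderiv none f) ≠ 0} := by
  have hpoint (s y' : F) : planePoint (Option.elim' y z) l s y' =
      Option.elim' (y + y') (z + s • l) := by
    funext o
    cases o <;> simp [planePoint, mul_comm]
  simp_rw [smoothZeroCount, Finset.card_filter, Fintype.sum_prod_type, hpoint]
  exact Finset.sum_congr rfl fun s _ ↦ (Fintype.sum_equiv (Equiv.addLeft y) _ _ fun y' ↦ rfl).symm

theorem le_add_sqrt_of_mul_natSqrt_le {x q c : ℕ} (hq : 0 < q)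
    (h : x * q.sqrt ≤ q * q.sqrt + c * q) : (x : ℝ) ≤ q + 2 * c * √q := by
  have hM : 0 < q.sqrt := Nat.sqrt_pos.2 hq
  have hM1 : (1 : ℝ) ≤ q.sqrt := by exact_mod_cast hM
  have hsqrt : √(q : ℝ) ≤ 2 * q.sqrt := by linarith [Real.real_sqrt_lt_nat_sqrt_succ (a := q)]
  refine le_of_mul_le_mul_right ?_ (zero_lt_one.trans_le hM1)
  calc (x : ℝ) * q.sqrt ≤ q * q.sqrt + c * q := by exact_mod_cast h
    _ = q * q.sqrt + c * √q * √q := by rw [mul_assoc _ √_, Real.mul_self_sqrt q.cast_nonneg]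
    _ ≤ q * q.sqrt + c * √q * (2 * q.sqrt) := by gcongr
    _ = (q + 2 * c * √q) * q.sqrt := by ring

variable [Fintype σ] [DecidableEq σ]

theorem IsNormalized.exists_forall_line_sum_le (hf : f.totalDegree ≤ d) (hu : IsNormalized u e)
    (hed : e ≤ d) (hi : Irreducible u) (hua : u ∣ f - C a) (hq : 256 * d ^ 4 ≤ Fintype.card F)
    {z : σ → F} (hz : smoothZeroCount f u z ≠ 0) :
    ∃ G : Finset (σ → F), Fintype.card (σ → F) ≤ 2 * #G ∧
      ∀ l ∈ G, (∑ s : F, smoothZeroCount f u (z + s • l) : ℝ) ≤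
        Fintype.card F + 22 * d ^ 2 * √(Fintype.card F) := by
  obtain ⟨y, hy⟩ := Finset.card_ne_zero.1 hz
  obtain ⟨hyu, hyf⟩ := (Finset.mem_filter.1 hy).2
  obtain ⟨Δ, hΔ, hΔdegree, hirr⟩ :=
    hu.exists_forall_irreducible_planeSection hf hi hua hyu hyf
  have hed4 : e ^ 4 ≤ d ^ 4 := Nat.pow_le_pow_left hed 4
  refine ⟨({l | eval l Δ ≠ 0} : Finset _), card_le_two_mul_card_nonzeros hΔ (by omega),
    fun l hl ↦ ?_⟩
  have hcurve := hu.card_planePoint_mul_sqrt_le hf hed hua (hirr l (Finset.mem_filter.1 hl).2) hq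
    fun P (hP : P ∈ Finset.univ.filter _) ↦ (Finset.mem_filter.1 hP).2
  rw [← sum_smoothZeroCount_line] at hcurve
  refine mod_cast (le_add_sqrt_of_mul_natSqrt_le Fintype.card_pos hcurve).trans_eq ?_
  push_cast
  ring

theorem IsNormalized.sum_smoothZeroCount_le (hf : f.totalDegree ≤ d) (hu : IsNormalized u e)
    (hed : e ≤ d) (hi : Irreducible u) (hua : u ∣ f - C a) (hq : 256 * d ^ 4 ≤ Fintype.card F) :
    ∑ z, (smoothZeroCount f u z : ℝ) ≤
      (1 + 24 * d ^ 2 / √(Fintype.card F)) * Fintype.card F ^ Fintype.card σ := by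
  choose! G hG hline using fun z ↦ hu.exists_forall_line_sum_le (z := z) hf hed hi hua hq
  have hsecond := card_mul_sum_le_of_line_sums_le (F := F) (D := d)
    (c := fun z ↦ (smoothZeroCount f u z : ℝ)) (fun z ↦ Nat.cast_nonneg _)
    (fun z ↦ mod_cast (smoothZeroCount_le hu.monic z).trans (hu.natDegree_eq.trans_le hed))
    (by positivity) (fun z hz ↦ hG z (mod_cast hz)) (fun z hz ↦ hline z (mod_cast hz))
  have hq0 : (0 : ℝ) < Fintype.card F := by exact_mod_cast Fintype.card_pos
  have hd : (d : ℝ) ≤ d ^ 2 := mod_cast Nat.le_self_pow two_ne_zero d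
  refine le_of_mul_le_mul_left (hsecond.trans ?_) hq0
  set q : ℝ := (Fintype.card F : ℝ)
  calc (Fintype.card (σ → F) : ℝ) * (q + 22 * d ^ 2 * √q + 2 * d * √q)
      ≤ q ^ Fintype.card σ * (q + 22 * d ^ 2 * √q + 2 * d ^ 2 * √q) := by
        rw [Fintype.card_fun, Nat.cast_pow]
        gcongr
    _ = q ^ Fintype.card σ * (q + 24 * d ^ 2 * (q / √q)) := by
        rw [Real.div_sqrt]
        ring
    _ = q * ((1 + 24 * d ^ 2 / √q) * q ^ Fintype.card σ) := by ring

end SmoothZeros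

section Fibres

theorem exists_monic_associated_of_dvd {F σ : Type*} [Field F] {v g : MvPolynomial (Option σ) F}
    (hg : (optionEquivLeft F σ g).Monic) (h : v ∣ g) :
    ∃ u, (optionEquivLeft F σ u).Monic ∧ Associated u v := by
  have hunit : IsUnit (optionEquivLeft F σ v).leadingCoeff :=
    isUnit_of_dvd_one (hg.leadingCoeff ▸ Polynomial.leadingCoeff_dvd_leadingCoeff (map_dvd _ h))
  obtain ⟨c, hc⟩ := hunit.exists_left_inv
  have hcunit : IsUnit ((optionEquivLeft F σ).symm (Polynomial.C c)) :=
    (Polynomial.isUnit_C.2 (IsUnit.of_mul_eq_one _ hc)).map _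
  refine ⟨(optionEquivLeft F σ).symm (Polynomial.C c) * v, ?_, associated_unit_mul_left _ _ hcunit⟩
  rw [map_mul, AlgEquiv.apply_symm_apply]
  exact Polynomial.monic_C_mul_of_mul_leadingCoeff_eq_one hc

theorem exists_finset_monic_irreducible_dvd {F σ : Type*} [Field F]
    {g : MvPolynomial (Option σ) F} (hg : (optionEquivLeft F σ g).Monic) :
    ∃ U : Finset (MvPolynomial (Option σ) F),
      (∀ u ∈ U, (optionEquivLeft F σ u).Monic ∧ Irreducible u ∧ u ∣ g) ∧
      ∀ P, eval P g = 0 → ∃ u ∈ U, eval P u = 0 := by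
  classical
  have hg0 : g ≠ 0 := (map_ne_zero_iff _ (optionEquivLeft F σ).injective).1 hg.ne_zero
  have hmonic : ∀ v ∈ UniqueFactorizationMonoid.factors g, ∃ u,
      (optionEquivLeft F σ u).Monic ∧ Associated u v := fun v hv ↦
    exists_monic_associated_of_dvd hg (UniqueFactorizationMonoid.dvd_of_mem_factors hv)
  choose! ν hν hνv using hmonic
  refine ⟨(UniqueFactorizationMonoid.factors g).toFinset.image ν, fun u hu ↦ ?_, fun P hP ↦ ?_⟩
  · obtain ⟨v, hv, rfl⟩ := Finset.mem_image.1 hu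
    rw [Multiset.mem_toFinset] at hv
    exact ⟨hν v hv,
      (hνv v hv).symm.irreducible (UniqueFactorizationMonoid.irreducible_of_factor v hv),
      (hνv v hv).dvd.trans (UniqueFactorizationMonoid.dvd_of_mem_factors hv)⟩
  · have hprod := map_dvd (eval P) (UniqueFactorizationMonoid.factors_prod hg0).symm.dvd
    rw [hP, zero_dvd_iff, map_multiset_prod, Multiset.prod_eq_zero_iff, Multiset.mem_map] at hprod
    obtain ⟨v, hv, hv0⟩ := hprod
    refine ⟨ν v, Finset.mem_image_of_mem _ (Multiset.mem_toFinset.2 hv), ?_⟩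
    have hνP := map_dvd (eval P) (hνv v hv).symm.dvd
    rwa [hv0, zero_dvd_iff] at hνP

theorem IsNormalized.eq_of_lt_two_mul_natDegree {F σ : Type*} [Field F]
    {g u v : MvPolynomial (Option σ) F} {d : ℕ} (hg : IsNormalized g d)
    (hu : (optionEquivLeft F σ u).Monic) (hv : (optionEquivLeft F σ v).Monic)
    (hui : Irreducible u) (hvi : Irreducible v) (hug : u ∣ g) (hvg : v ∣ g)
    (hud : d < 2 * (optionEquivLeft F σ u).natDegree)
    (hvd : d < 2 * (optionEquivLeft F σ v).natDegree) : u = v := by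
  by_contra hne
  obtain ⟨w, hw⟩ : u * v ∣ g :=
    (hui.isRelPrime_iff_not_dvd.2 fun h ↦ hne (eq_of_monic_of_dvd hu hv hui hvi h)).mul_dvd hug hvg
  have huv : optionEquivLeft F σ g =
      optionEquivLeft F σ u * optionEquivLeft F σ v * optionEquivLeft F σ w := by
    rw [hw, map_mul, map_mul]
  have hwmonic : (optionEquivLeft F σ w).Monic :=
    (hu.mul hv).of_mul_monic_left (huv ▸ hg.monic)
  have hdegree := hg.natDegree_eq
  rw [huv, (hu.mul hv).natDegree_mul hwmonic, hu.natDegree_mul hv] at hdegree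
  omega

variable {F σ : Type*} [Field F] {f : MvPolynomial (Option σ) F} {d : ℕ}

theorem IsNormalized.sum_sum_natDegree_le [Fintype F] (hf : IsNormalized f d)
    (hfy : pderiv none f ≠ 0) (hirr : Irreducible (differencePolynomial f))
    {U : F → Finset (MvPolynomial (Option σ) F)}
    (hU : ∀ a, ∀ u ∈ U a, (optionEquivLeft F σ u).Monic ∧ Irreducible u ∧ u ∣ f - C a) :
    ∑ a, ∑ u ∈ U a with 2 * (optionEquivLeft F σ u).natDegree ≤ d,
      (optionEquivLeft F σ u).natDegree ≤ 16 * d ^ 3 := by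
  classical
  rw [← Finset.sum_biUnion]
  · refine hf.sum_natDegree_le hfy hirr ?_ ?_ ?_ <;> intro u hu <;>
      obtain ⟨a, -, hua⟩ := Finset.mem_biUnion.1 hu <;>
      obtain ⟨hua, hsmall⟩ := Finset.mem_filter.1 hua <;>
      obtain ⟨hmonic, hi, hdvd⟩ := hU a u hua
    exacts [⟨hmonic, hi⟩, ⟨a, hdvd⟩, hsmall]
  · refine fun a _ b _ hab ↦ Finset.disjoint_left.2 fun u hua hub ↦ ?_
    obtain ⟨-, hi, hdvd⟩ := hU a u (Finset.mem_filter.1 hua).1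
    have hdvdC := dvd_sub (hU b u (Finset.mem_filter.1 hub).1).2.2 hdvd
    rw [sub_sub_sub_cancel_left, ← map_sub] at hdvdC
    exact hi.not_isUnit
      (isUnit_of_dvd_unit hdvdC ((IsUnit.mk0 _ (sub_ne_zero.2 hab)).map C))

variable [Fintype F] [DecidableEq F] [Fintype σ] [DecidableEq σ] {a : F}

theorem sum_smoothZeroCount_eq_card (u : MvPolynomial (Option σ) F) :
    ∑ z, smoothZeroCount f u z =
      #{x : Option σ → F | eval x u = 0 ∧ eval x (pderiv none f) ≠ 0} := by
  simp_rw [smoothZeroCount, Finset.card_filter]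
  rw [Fintype.sum_equiv (Equiv.piOptionEquivProd (β := fun _ ↦ F)) _
    (fun p ↦ if eval (Option.elim' p.1 p.2) u = 0 ∧
      eval (Option.elim' p.1 p.2) (pderiv none f) ≠ 0 then 1 else 0), Fintype.sum_prod_type_right]
  intro x
  have hx : Option.elim' (x none) (fun i ↦ x (some i)) = x := by
    funext o
    cases o <;> rfl
  simp [Equiv.piOptionEquivProd, hx]

theorem card_eval_eq_le {U : Finset (MvPolynomial (Option σ) F)}
    (hU : ∀ x, eval x (f - C a) = 0 → ∃ u ∈ U, eval x u = 0) :
    #{x | eval x f = a} ≤ #{x | eval x f = a ∧ eval x (pderiv none f) = 0} +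
      ∑ u ∈ U, ∑ z, smoothZeroCount f u z := by
  classical
  have hcover : ({x | eval x f = a} : Finset _) ⊆
      ({x | eval x f = a ∧ eval x (pderiv none f) = 0} : Finset _) ∪
        U.biUnion fun u ↦ {x | eval x u = 0 ∧ eval x (pderiv none f) ≠ 0} := by
    intro x hx
    have hxa := (Finset.mem_filter.1 hx).2
    by_cases hy : eval x (pderiv none f) = 0
    · exact Finset.mem_union_left _ (by simp [hxa, hy])
    · obtain ⟨u, hu, hxu⟩ := hU x (by simp [hxa])
      exact Finset.mem_union_right _ (Finset.mem_biUnion.2 ⟨u, hu, by simp [hxu, hy]⟩)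
  simp_rw [sum_smoothZeroCount_eq_card]
  exact (Finset.card_le_card hcover).trans
    ((Finset.card_union_le _ _).trans (Nat.add_le_add_left Finset.card_biUnion_le _))

theorem sum_smoothZeroCount_le_natDegree_mul {u : MvPolynomial (Option σ) F}
    (hu : (optionEquivLeft F σ u).Monic) :
    ∑ z, smoothZeroCount f u z ≤
      (optionEquivLeft F σ u).natDegree * Fintype.card F ^ Fintype.card σ := by
  refine (Finset.sum_le_sum fun z _ ↦ smoothZeroCount_le hu z).trans_eq ?_
  rw [Finset.sum_const, Finset.card_univ, Fintype.card_fun, smul_eq_mul, mul_comm]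

/- At most one factor has degree larger than `d / 2`, and it contributes the main term. -/
theorem IsNormalized.sum_sum_smoothZeroCount_le (hf : IsNormalized f d)
    (hq : 256 * d ^ 4 ≤ Fintype.card F) {U : Finset (MvPolynomial (Option σ) F)}
    (hU : ∀ u ∈ U, (optionEquivLeft F σ u).Monic ∧ Irreducible u ∧ u ∣ f - C a) :
    (↑(∑ u ∈ U, ∑ z, smoothZeroCount f u z) : ℝ) ≤
      (1 + 24 * d ^ 2 / √(Fintype.card F) +
        ↑(∑ u ∈ U with 2 * (optionEquivLeft F σ u).natDegree ≤ d,
          (optionEquivLeft F σ u).natDegree)) * Fintype.card F ^ Fintype.card σ := by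
  rw [← Finset.sum_filter_add_sum_filter_not U
    fun u ↦ 2 * (optionEquivLeft F σ u).natDegree ≤ d, add_comm, Nat.cast_add, add_mul]
  refine add_le_add ?_ ?_
  · rcases (U.filter fun u ↦ ¬2 * (optionEquivLeft F σ u).natDegree ≤ d).eq_empty_or_nonempty
      with hempty | ⟨u, hu⟩
    · rw [hempty, Finset.sum_empty, Nat.cast_zero]
      positivity
    obtain ⟨huU, hularge⟩ := Finset.mem_filter.1 hu
    obtain ⟨hmonic, hi, hdvd⟩ := hU u huU
    rw [Finset.eq_singleton_iff_unique_mem.2 ⟨hu, fun v hv ↦ ?_⟩, Finset.sum_singleton,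
      Nat.cast_sum]
    · exact ((hf.sub_C a).of_dvd hmonic hi hdvd).sum_smoothZeroCount_le hf.totalDegree_le
        ((hf.sub_C a).natDegree_le_of_dvd hdvd) hi hdvd hq
    · obtain ⟨hvU, hvlarge⟩ := Finset.mem_filter.1 hv
      obtain ⟨hvmonic, hvi, hvdvd⟩ := hU v hvU
      exact (hf.sub_C a).eq_of_lt_two_mul_natDegree hvmonic hmonic hvi hi hvdvd hdvd
        (not_le.1 hvlarge) (not_le.1 hularge)
  · norm_cast
    rw [Finset.sum_mul]
    exact Finset.sum_le_sum fun u hu ↦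
      sum_smoothZeroCount_le_natDegree_mul (hU u (Finset.mem_filter.1 hu).1).1

theorem card_pderiv_zeros_le (hf : f.totalDegree ≤ d) (hfy : pderiv none f ≠ 0) :
    #{x | eval x (pderiv none f) = 0} ≤ d * Fintype.card F ^ Fintype.card σ := by
  have hdegree : (pderiv none f).totalDegree ≤ d :=
    (totalDegree_pderiv_le none f).trans ((Nat.sub_le _ 1).trans hf)
  refine Nat.le_of_mul_le_mul_right ?_ (Fintype.card_pos (α := F))
  calc _ ≤ (pderiv none f).totalDegree * Fintype.card F ^ Fintype.card (Option σ) :=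
        card_zeros_mul_card_le hfy
    _ ≤ d * Fintype.card F ^ Fintype.card (Option σ) := Nat.mul_le_mul_right _ hdegree
    _ = d * Fintype.card F ^ Fintype.card σ * Fintype.card F := by
        rw [Fintype.card_option, pow_succ, mul_assoc]

theorem add_mul_sqrt_add_pow_le {d q : ℕ} (hd : 1 ≤ d) (hq : d ^ 4 ≤ q) :
    (d + 24 * d ^ 2 * √q + 16 * d ^ 3 : ℝ) ≤ 41 * d ^ 2 * √q := by
  have hd1 : (1 : ℝ) ≤ d := by exact_mod_cast hd
  have hsqrt : (d : ℝ) ^ 2 ≤ √q :=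
    Real.le_sqrt_of_sq_le (by rw [← pow_mul]; exact_mod_cast hq)
  have hdsqrt : (d : ℝ) ≤ √q := (le_self_pow₀ hd1 two_ne_zero).trans hsqrt
  have hsmall : (d : ℝ) ^ 3 ≤ d ^ 2 * √q := by
    rw [pow_succ]
    gcongr
  have hbad : (d : ℝ) ≤ d ^ 3 := le_self_pow₀ hd1 three_ne_zero
  linarith

theorem IsNormalized.sum_posPart_card_sub_le (hf : IsNormalized f d) (hfy : pderiv none f ≠ 0)
    (hirr : Irreducible (differencePolynomial f)) (hq : 256 * d ^ 4 ≤ Fintype.card F) :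
    ∑ a : F, (#{x | eval x f = a} - Fintype.card F ^ Fintype.card σ : ℝ)⁺ ≤
      41 * d ^ 2 * √(Fintype.card F) * Fintype.card F ^ Fintype.card σ := by
  choose U hU hcover using fun a ↦ exists_finset_monic_irreducible_dvd (hf.sub_C a).monic
  have hsmall := hf.sum_sum_natDegree_le hfy hirr hU
  have hbad : ∑ a, #{x | eval x f = a ∧ eval x (pderiv none f) = 0} ≤
      d * Fintype.card F ^ Fintype.card σ := by
    refine Eq.trans_le ?_ (card_pderiv_zeros_le hf.totalDegree_le hfy)
    rw [Finset.card_eq_sum_card_fiberwise (f := fun x ↦ eval x f) fun _ _ ↦ Finset.mem_univ _]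
    simp_rw [Finset.filter_filter, and_comm]
  set q := Fintype.card F
  set Q := q ^ Fintype.card σ with hQ
  set bad : F → ℕ := fun a ↦ #{x | eval x f = a ∧ eval x (pderiv none f) = 0}
  set small : F → ℕ := fun a ↦ ∑ u ∈ U a with 2 * (optionEquivLeft F σ u).natDegree ≤ d,
    (optionEquivLeft F σ u).natDegree
  have hfibre (a : F) : (#{x | eval x f = a} - q ^ Fintype.card σ : ℝ)⁺ ≤
      bad a + 24 * d ^ 2 / √q * Q + small a * Q := by
    refine max_le ?_ (by positivity)
    have hcount : (#{x | eval x f = a} : ℝ) ≤ bad a + ↑(∑ u ∈ U a, ∑ z, smoothZeroCount f u z) :=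
      mod_cast card_eval_eq_le (hcover a)
    have hfactors := hf.sum_sum_smoothZeroCount_le hq (hU a)
    rw [hQ, Nat.cast_pow]
    linarith
  calc ∑ a : F, (#{x | eval x f = a} - q ^ Fintype.card σ : ℝ)⁺
      ≤ ∑ a : F, (bad a + 24 * d ^ 2 / √q * Q + small a * Q : ℝ) :=
        Finset.sum_le_sum fun a _ ↦ hfibre a
    _ = ((∑ a, bad a : ℕ) : ℝ) + 24 * d ^ 2 * (q / √q) * Q + ((∑ a, small a : ℕ) : ℝ) * Q := by
        rw [Finset.sum_add_distrib, Finset.sum_add_distrib, Finset.sum_const, Finset.card_univ,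
          ← Finset.sum_mul, nsmul_eq_mul]
        push_cast
        ring
    _ ≤ ((d * Q : ℕ) : ℝ) + 24 * d ^ 2 * √q * Q + ((16 * d ^ 3 : ℕ) : ℝ) * Q := by
        rw [Real.div_sqrt]
        gcongr
    _ = (d + 24 * d ^ 2 * √q + 16 * d ^ 3) * Q := by
        push_cast
        ring
    _ ≤ 41 * d ^ 2 * √q * Q := by
        gcongr
        exact add_mul_sqrt_add_pow_le hf.pos (by omega)
    _ = 41 * d ^ 2 * √q * q ^ Fintype.card σ := by rw [hQ, Nat.cast_pow]

end Fibres

section VanishingGradient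

theorem dvd_of_pderiv_eq_zero {R σ : Type*} [CommSemiring R] [NoZeroDivisors R] (p : ℕ) [CharP R p]
    {f : MvPolynomial σ R} {i : σ} (h : pderiv i f = 0) {s : σ →₀ ℕ} (hs : s ∈ f.support) :
    p ∣ s i := by
  by_contra hdvd
  have hsi : 1 ≤ s i := Nat.one_le_iff_ne_zero.2 fun h0 ↦ hdvd (h0 ▸ dvd_zero p)
  have hcoeff := congrArg (coeff (s - Finsupp.single i 1)) h
  rw [coeff_zero, coeff_pderiv, tsub_add_cancel_of_le (Finsupp.single_le_iff.2 hsi),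
    Finsupp.tsub_apply, Finsupp.single_eq_same, ← Nat.cast_add_one, Nat.sub_add_cancel hsi]
    at hcoeff
  rcases mul_eq_zero.1 hcoeff with hzero | hzero
  · exact mem_support_iff.1 hs hzero
  · exact hdvd ((CharP.cast_eq_zero_iff R p _).1 hzero)

theorem exists_eq_pow_of_forall_pderiv_eq_zero {R σ : Type*} [CommSemiring R] [NoZeroDivisors R]
    (p : ℕ) [Fact p.Prime] [CharP R p] [PerfectRing R p] {f : MvPolynomial σ R}
    (h : ∀ i, pderiv i f = 0) : ∃ g, f = g ^ p := by
  choose root hroot using surjective_frobenius R p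
  refine ⟨∑ s ∈ f.support, monomial (s.mapRange (· / p) (Nat.zero_div p)) (root (coeff s f)), ?_⟩
  rw [sum_pow_char]
  nth_rw 1 [f.as_sum]
  refine Finset.sum_congr rfl fun s hs ↦ ?_
  have hs : p • s.mapRange (· / p) (Nat.zero_div p) = s := by
    ext i
    simp [Nat.mul_div_cancel' (dvd_of_pderiv_eq_zero p (h i) hs)]
  rw [monomial_pow, hs]
  exact congrArg _ (hroot _).symm

end VanishingGradient

section Directions

variable {F σ : Type*} [Field F]

theorem coeff_aeval_C_mul_X_eq_eval {R : Type*} [CommSemiring R] (w : σ → R)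
    (f : MvPolynomial σ R) (d : ℕ) :
    (aeval (fun i ↦ Polynomial.C (w i) * Polynomial.X) f : R[X]).coeff d =
      eval w (homogeneousComponent d f) := by
  classical
  induction f using MvPolynomial.induction_on' with
  | monomial s a =>
    have hline : (aeval (fun i ↦ Polynomial.C (w i) * Polynomial.X) (monomial s a) : R[X]) =
        Polynomial.C (eval w (monomial s a)) * Polynomial.X ^ s.degree := by
      simp_rw [aeval_monomial, eval_monomial, Finsupp.prod, mul_pow, Finset.prod_mul_distrib,
        Finset.prod_pow_eq_pow_sum, map_mul, map_prod, map_pow, Polynomial.algebraMap_eq, mul_assoc]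
      rfl
    rw [hline, Polynomial.coeff_C_mul_X_pow,
      homogeneousComponent_of_mem (isHomogeneous_monomial a rfl), apply_ite (eval w), map_zero]
  | add p q hp hq => rw [map_add, Polynomial.coeff_add, hp, hq, map_add, map_add]

theorem homogeneousComponent_totalDegree_ne_zero {R : Type*} [CommSemiring R]
    {f : MvPolynomial σ R} (hf : f ≠ 0) : homogeneousComponent f.totalDegree f ≠ 0 := by
  classical
  obtain ⟨s, hs, hdegree⟩ :=
    Finset.exists_mem_eq_sup f.support (support_nonempty.2 hf) fun s ↦ s.sum fun _ e ↦ e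
  refine ne_zero_iff.2 ⟨s, ?_⟩
  rw [coeff_homogeneousComponent, if_pos (by exact hdegree.symm)]
  exact mem_support_iff.1 hs

theorem exists_direction [Fintype F] [Fintype σ] {f : MvPolynomial σ F} (hf : f ≠ 0) {i : σ}
    (hi : pderiv i f ≠ 0) (i₀ : σ) (hq : f.totalDegree + 2 < Fintype.card F) :
    ∃ w : σ → F, w i₀ ≠ 0 ∧ eval w (homogeneousComponent f.totalDegree f) ≠ 0 ∧
      ∑ i, C (w i) * pderiv i f ≠ 0 := by
  classical
  obtain ⟨s, hs⟩ := ne_zero_iff.1 hi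
  set ℓ : MvPolynomial σ F := ∑ j, C (coeff s (pderiv j f)) * X j with hℓ
  have hℓ0 : ℓ ≠ 0 := fun h ↦ hs <| by
    simpa [hℓ, Pi.single_apply] using congrArg (eval (Pi.single i 1)) h
  have hdegree : (homogeneousComponent f.totalDegree f * ℓ * X i₀).totalDegree ≤
      f.totalDegree + 1 + 1 := by
    refine (totalDegree_mul _ _).trans (add_le_add ((totalDegree_mul _ _).trans (add_le_add
      (homogeneousComponent_isHomogeneous _ f).totalDegree_le ?_)) (totalDegree_X i₀).le)
    exact totalDegree_finsetSum_le fun j _ ↦ (totalDegree_mul _ _).trans (by simp)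
  obtain ⟨w, hw⟩ := exists_eval_ne_zero (mul_ne_zero (mul_ne_zero
    (homogeneousComponent_totalDegree_ne_zero hf) hℓ0) (X_ne_zero i₀)) (hdegree.trans_lt hq)
  rw [map_mul, map_mul, eval_X] at hw
  refine ⟨w, right_ne_zero_of_mul hw, left_ne_zero_of_mul (left_ne_zero_of_mul hw), fun h ↦
    right_ne_zero_of_mul (left_ne_zero_of_mul hw) ?_⟩
  simpa [hℓ, coeff_sum, coeff_C_mul, mul_comm] using congrArg (coeff s) h

end Directions

section Shear

theorem pderiv_aeval {R σ τ : Type*} [CommSemiring R] [Fintype σ] (g : σ → MvPolynomial τ R)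
    (j : τ) (f : MvPolynomial σ R) :
    pderiv j (aeval g f) = ∑ i, pderiv j (g i) * aeval g (pderiv i f) := by
  classical
  induction f using MvPolynomial.induction_on with
  | C a => simp [algHom_C, algebraMap_eq]
  | add p q hp hq => simp only [map_add, hp, hq, mul_add, Finset.sum_add_distrib]
  | mul_X p i hp =>
    simp only [map_mul, aeval_X, Derivation.leibniz, smul_eq_mul, hp, map_add, pderiv_X, mul_add,
      Finset.sum_add_distrib, Finset.mul_sum]
    congr 1
    · simp [Pi.single_apply, mul_comm]
    · exact Finset.sum_congr rfl fun k _ ↦ mul_left_comm _ _ _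

/-- The linear change of coordinates carrying the `none`-axis to the line spanned by `w` and fixing
the coordinates `some i` otherwise; over the polynomial ring, with `x = X`, it gives the
corresponding substitution of variables. -/
def shear {F σ A : Type*} [SMul F A] [Add A] (w : Option σ → F) (x : Option σ → A) : Option σ → A
  | none => w none • x none
  | some i => x (some i) + w (some i) • x none

/-- The direction whose shear inverts `shear w`. -/
def shearInv {F σ : Type*} [Field F] (w : Option σ → F) : Option σ → F
  | none => (w none)⁻¹
  | some i => -(w (some i) * (w none)⁻¹)

variable {F σ : Type*} [Field F] {w : Option σ → F}

theorem shear_shearInv {A : Type*} [AddCommGroup A] [Module F A] (hw : w none ≠ 0)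
    (x : Option σ → A) : shear w (shear (shearInv w) x) = x := by
  funext o
  cases o <;> simp [shear, shearInv, smul_smul, hw]

theorem shearInv_shear {A : Type*} [AddCommGroup A] [Module F A] (hw : w none ≠ 0)
    (x : Option σ → A) : shear (shearInv w) (shear w x) = x := by
  funext o
  cases o <;> simp [shear, shearInv, smul_smul, hw]

theorem aeval_aeval_shear_X {A : Type*} [CommRing A] [Algebra F A] (w : Option σ → F)
    (x : Option σ → A) (f : MvPolynomial (Option σ) F) :
    aeval x (aeval (shear w X) f : MvPolynomial (Option σ) F) = aeval (shear w x) f := by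
  rw [← AlgHom.comp_apply, comp_aeval]
  congr 2
  funext o
  cases o <;> simp [shear]

theorem aeval_shearInv_aeval_shear (hw : w none ≠ 0) (f : MvPolynomial (Option σ) F) :
    (aeval (shear (shearInv w) X) (aeval (shear w X) f : MvPolynomial (Option σ) F) :
      MvPolynomial (Option σ) F) = f := by
  rw [aeval_aeval_shear_X, shear_shearInv hw, aeval_X_left_apply]

theorem totalDegree_shear_X_le (w : Option σ → F) (o : Option σ) :
    (shear w X o : MvPolynomial (Option σ) F).totalDegree ≤ 1 := by
  cases o with
  | none => exact (totalDegree_smul_le _ _).trans (totalDegree_X _).le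
  | some i =>
    exact (totalDegree_add _ _).trans
      (max_le (totalDegree_X _).le ((totalDegree_smul_le _ _).trans (totalDegree_X _).le))

theorem totalDegree_aeval_shear_X_le (w : Option σ → F) (f : MvPolynomial (Option σ) F) :
    (aeval (shear w X) f : MvPolynomial (Option σ) F).totalDegree ≤ f.totalDegree :=
  (totalDegree_aeval_le (totalDegree_shear_X_le w) f).trans_eq (mul_one _)

theorem pderiv_none_aeval_shear_X [Fintype σ] (w : Option σ → F) (f : MvPolynomial (Option σ) F) :
    pderiv none (aeval (shear w X) f : MvPolynomial (Option σ) F) =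
      aeval (shear w X) (∑ o, C (w o) * pderiv o f) := by
  have hw (o : Option σ) : pderiv none (shear w X o : MvPolynomial (Option σ) F) = C (w o) := by
    cases o <;> simp [shear, smul_eq_C_mul]
  rw [pderiv_aeval, map_sum]
  exact Finset.sum_congr rfl fun o _ ↦ by rw [hw, map_mul, algHom_C, algebraMap_eq]

theorem coeff_optionEquivLeft_aeval_shear_X (w : Option σ → F) {f : MvPolynomial (Option σ) F}
    {d : ℕ} (hf : f.totalDegree ≤ d) :
    (optionEquivLeft F σ (aeval (shear w X) f)).coeff d =
      C (eval w (homogeneousComponent d f)) := by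
  have hdegree : ((optionEquivLeft F σ (aeval (shear w X) f)).coeff d).totalDegree = 0 := by
    rcases le_or_gt d (aeval (shear w X) f : MvPolynomial (Option σ) F).totalDegree with h | h
    · have := totalDegree_coeff_optionEquivLeft_add_le F σ _ _ h
      have := totalDegree_aeval_shear_X_le w f
      omega
    · rw [Polynomial.coeff_eq_zero_of_natDegree_lt
        ((natDegree_optionEquivLeft_le _).trans_lt h), totalDegree_zero]
  have haxis : (optionEquivLeft F σ (aeval (shear w X) f)).map (eval 0) =
      aeval (fun o ↦ Polynomial.C (w o) * Polynomial.X) f := by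
    refine DFunLike.congr_fun (?_ : ((Polynomial.mapAlgHom (aeval (0 : σ → F))).comp
      (optionEquivLeft F σ).toAlgHom).comp (aeval (shear w X)) = _) f
    refine algHom_ext fun o ↦ ?_
    cases o <;> simp [shear, smul_eq_C_mul]
  rw [← coeff_aeval_C_mul_X_eq_eval, ← haxis, Polynomial.coeff_map,
    totalDegree_eq_zero_iff_eq_C.1 hdegree, eval_C]

end Shear

section Normalization

variable {F σ : Type*} [Field F] {w : Option σ → F} {f : MvPolynomial (Option σ) F}

/-- `f` in the coordinates whose `none`-axis is the line spanned by `w`, divided by the leading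
coefficient of its restriction to that line. -/
noncomputable def normalization (w : Option σ → F) (f : MvPolynomial (Option σ) F) :
    MvPolynomial (Option σ) F :=
  C (eval w (homogeneousComponent f.totalDegree f))⁻¹ * aeval (shear w X) f

theorem C_mul_normalization (hf : eval w (homogeneousComponent f.totalDegree f) ≠ 0) :
    C (eval w (homogeneousComponent f.totalDegree f)) * normalization w f =
      aeval (shear w X) f := by
  rw [normalization, ← mul_assoc, ← C_mul, mul_inv_cancel₀ hf, C_1, one_mul]

theorem isNormalized_normalization (hpos : 0 < f.totalDegree)
    (hf : eval w (homogeneousComponent f.totalDegree f) ≠ 0) :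
    IsNormalized (normalization w f) f.totalDegree := by
  have htotal : (normalization w f).totalDegree ≤ f.totalDegree := by
    refine (totalDegree_mul _ _).trans ?_
    rw [totalDegree_C, zero_add]
    exact totalDegree_aeval_shear_X_le w f
  have hdegree := (natDegree_optionEquivLeft_le _).trans htotal
  have hcoeff : (optionEquivLeft F σ (normalization w f)).coeff f.totalDegree = 1 := by
    rw [normalization, map_mul, optionEquivLeft_C, Polynomial.coeff_C_mul,
      coeff_optionEquivLeft_aeval_shear_X w le_rfl, ← C_mul, inv_mul_cancel₀ hf, C_1]
  exact ⟨Polynomial.monic_of_natDegree_le_of_coeff_eq_one _ hdegree hcoeff,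
    hdegree.antisymm (Polynomial.le_natDegree_of_ne_zero (hcoeff ▸ one_ne_zero)), htotal, hpos⟩

theorem pderiv_none_normalization_ne_zero [Fintype σ] (hw : w none ≠ 0)
    (hf : eval w (homogeneousComponent f.totalDegree f) ≠ 0)
    (hderiv : ∑ o, C (w o) * pderiv o f ≠ 0) : pderiv none (normalization w f) ≠ 0 := by
  rw [normalization, pderiv_C_mul, pderiv_none_aeval_shear_X]
  refine mul_ne_zero (C_ne_zero.2 (inv_ne_zero hf)) fun h ↦ hderiv ?_
  rw [← aeval_shearInv_aeval_shear hw (∑ o, C (w o) * pderiv o f), h, map_zero]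

theorem natDegree_le_one_of_normalization_eq_aeval (hw : w none ≠ 0)
    (hf : eval w (homogeneousComponent f.totalDegree f) ≠ 0)
    (hind : ∀ (g : F[X]) h, f = Polynomial.aeval h g → g.natDegree ≤ 1)
    {g : F[X]} {h : MvPolynomial (Option σ) F} (hgh : normalization w f = Polynomial.aeval h g) :
    g.natDegree ≤ 1 := by
  rw [← Polynomial.natDegree_C_mul hf]
  refine hind _ (aeval (shear (shearInv w) X) h) ?_
  rw [map_mul, Polynomial.aeval_C, Polynomial.aeval_algHom_apply, ← hgh, algebraMap_eq]
  nth_rw 1 [← aeval_shearInv_aeval_shear hw f]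
  rw [← C_mul_normalization hf, map_mul, algHom_C, algebraMap_eq]

theorem card_eval_normalization_eq [Fintype F] [DecidableEq F] [Fintype σ] [DecidableEq σ]
    (hw : w none ≠ 0) (hf : eval w (homogeneousComponent f.totalDegree f) ≠ 0) (a : F) :
    #{x | eval x (normalization w f) = a} =
      #{x | eval x f = eval w (homogeneousComponent f.totalDegree f) * a} := by
  refine Finset.card_equiv
    ⟨shear w, shear (shearInv w), shearInv_shear hw, shear_shearInv hw⟩ fun x ↦ ?_
  have heval : eval x (aeval (shear w X) f) = eval (shear w x) f := aeval_aeval_shear_X w x f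
  simp only [Finset.mem_filter, Finset.mem_univ, true_and, Equiv.coe_fn_mk]
  rw [← heval, ← C_mul_normalization hf, map_mul, eval_C, mul_right_inj' hf]

theorem exists_pderiv_ne_zero {τ : Type*} [Finite F] {f : MvPolynomial τ F}
    (hind : ∀ (g : F[X]) h, f = Polynomial.aeval h g → g.natDegree ≤ 1) :
    ∃ i, pderiv i f ≠ 0 := by
  by_contra! hcontra
  obtain ⟨p, hp⟩ := CharP.exists F
  have hprime : Fact p.Prime :=
    ⟨(CharP.char_is_prime_or_zero F p).resolve_right (CharP.char_ne_zero_of_finite F p)⟩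
  obtain ⟨g, hg⟩ := exists_eq_pow_of_forall_pderiv_eq_zero p hcontra
  have hdegree := hind (Polynomial.X ^ p) g (by simpa using hg)
  rw [Polynomial.natDegree_X_pow] at hdegree
  exact hprime.out.one_lt.not_ge hdegree

theorem sum_posPart_card_sub_le [Fintype F] [DecidableEq F] [Fintype σ] [DecidableEq σ]
    (hpos : 0 < f.totalDegree)
    (hind : ∀ (g : F[X]) h, f = Polynomial.aeval h g → g.natDegree ≤ 1)
    (hq : 256 * f.totalDegree ^ 4 ≤ Fintype.card F) :
    ∑ a : F, (#{x | eval x f = a} - Fintype.card F ^ Fintype.card σ : ℝ)⁺ ≤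
      41 * f.totalDegree ^ 2 * √(Fintype.card F) * Fintype.card F ^ Fintype.card σ := by
  have hcard : f.totalDegree + 2 < Fintype.card F := by
    have : f.totalDegree ≤ f.totalDegree ^ 4 := Nat.le_self_pow (by norm_num) _
    omega
  have hf0 : f ≠ 0 := by
    rintro rfl
    exact hpos.ne' totalDegree_zero
  obtain ⟨i, hi⟩ := exists_pderiv_ne_zero hind
  obtain ⟨w, hw, hf, hderiv⟩ := exists_direction hf0 hi none hcard
  have hnormalized := isNormalized_normalization hpos hf
  have hfy := pderiv_none_normalization_ne_zero hw hf hderiv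
  obtain ⟨P₀, hP₀⟩ := exists_eval_ne_zero hfy <|
    ((totalDegree_pderiv_le _ _).trans (Nat.sub_le _ 1)).trans_lt
      (hnormalized.totalDegree_le.trans_lt (by omega))
  have hirr := hnormalized.irreducible_differencePolynomial hP₀ fun g h ↦
    natDegree_le_one_of_normalization_eq_aeval hw hf hind
  rw [← Equiv.sum_comp (Equiv.mulLeft₀ _ hf)]
  simpa only [Equiv.mulLeft₀_apply, ← card_eval_normalization_eq hw hf] using
    hnormalized.sum_posPart_card_sub_le hfy hirr hq

end Normalization

section StatisticalDistance

theorem half_sum_abs_eq_sum_posPart {ι : Type*} {s : Finset ι} {t : ι → ℝ}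
    (h : ∑ i ∈ s, t i = 0) : (1 / 2) * ∑ i ∈ s, |t i| = ∑ i ∈ s, (t i)⁺ := by
  rw [← add_zero (∑ i ∈ s, |t i|), ← h, ← Finset.sum_add_distrib, Finset.mul_sum]
  refine Finset.sum_congr rfl fun i _ ↦ ?_
  rw [add_comm, add_abs_eq_two_nsmul_posPart, nsmul_eq_mul]
  ring

theorem half_sum_abs_div_sub_inv_eq {F : Type*} [Fintype F] [Nonempty F] {m : ℕ} {N : F → ℝ}
    (hN : ∑ a, N a = Fintype.card F ^ (m + 1)) :
    (1 / 2) * ∑ a, |N a / Fintype.card F ^ (m + 1) - 1 / Fintype.card F| =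
      (∑ a, (N a - Fintype.card F ^ m)⁺) / Fintype.card F ^ (m + 1) := by
  have hq : (0 : ℝ) < Fintype.card F := by exact_mod_cast Fintype.card_pos
  have hterm (a : F) : |N a / (Fintype.card F : ℝ) ^ (m + 1) - 1 / Fintype.card F| =
      |N a - (Fintype.card F : ℝ) ^ m| / (Fintype.card F : ℝ) ^ (m + 1) := by
    rw [← abs_of_pos (pow_pos hq (m + 1)), ← abs_div, abs_of_pos (pow_pos hq (m + 1)), sub_div,
      pow_succ, div_mul_cancel_left₀ (pow_pos hq m).ne', one_div]
  simp_rw [hterm]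
  rw [← Finset.sum_div, ← mul_div_assoc, half_sum_abs_eq_sum_posPart]
  rw [Finset.sum_sub_distrib, hN, Finset.sum_const, Finset.card_univ, nsmul_eq_mul, pow_succ',
    sub_self]

theorem sum_card_eval_eq {F σ : Type*} [CommSemiring F] [Fintype F] [Fintype σ]
    (f : MvPolynomial σ F) :
    ∑ a : F, (Nat.card {x : σ → F // eval x f = a} : ℝ) =
      Fintype.card F ^ Fintype.card σ := by
  classical
  have h := Fintype.card_congr (Equiv.sigmaFiberEquiv fun x : σ → F ↦ eval x f)
  rw [Fintype.card_sigma, Fintype.card_fun] at h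
  simp_rw [Nat.card_eq_fintype_card]
  exact_mod_cast h

theorem sum_posPart_sub_le_sum {ι : Type*} {s : Finset ι} {t : ι → ℝ} {c : ℝ}
    (ht : ∀ i ∈ s, 0 ≤ t i) (hc : 0 ≤ c) : ∑ i ∈ s, (t i - c)⁺ ≤ ∑ i ∈ s, t i :=
  Finset.sum_le_sum fun i hi ↦ max_le (sub_le_self _ hc) (ht i hi)

variable {F : Type*} [Field F] [Fintype F] {m : ℕ} {f : MvPolynomial (Fin (m + 1)) F}

theorem sum_posPart_card_sub_le_of_card_lt (hq : Fintype.card F < 256 * f.totalDegree ^ 4) :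
    ∑ a : F, (Nat.card {x // eval x f = a} - Fintype.card F ^ m : ℝ)⁺ ≤
      41 * f.totalDegree ^ 2 * √(Fintype.card F) * Fintype.card F ^ m := by
  have hsqrt : √(Fintype.card F) ≤ 16 * f.totalDegree ^ 2 := by
    rw [Real.sqrt_le_left (by positivity), mul_pow, ← pow_mul]
    norm_num
    exact_mod_cast hq.le
  calc ∑ a : F, (Nat.card {x // eval x f = a} - Fintype.card F ^ m : ℝ)⁺
      ≤ (Fintype.card F : ℝ) ^ (m + 1) := by
        refine (sum_posPart_sub_le_sum (fun a _ ↦ Nat.cast_nonneg _) (by positivity)).trans_eq ?_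
        rw [sum_card_eval_eq, Fintype.card_fin]
    _ = √(Fintype.card F) * √(Fintype.card F) * (Fintype.card F : ℝ) ^ m := by
        rw [Real.mul_self_sqrt (Nat.cast_nonneg _), pow_succ']
    _ ≤ 41 * f.totalDegree ^ 2 * √(Fintype.card F) * (Fintype.card F : ℝ) ^ m := by
        gcongr
        exact hsqrt.trans (by gcongr; norm_num)

theorem sum_posPart_card_sub_le_of_le_card (hpos : 0 < f.totalDegree) (hf : ¬f.Decomposable)
    (hq : 256 * f.totalDegree ^ 4 ≤ Fintype.card F) :
    ∑ a : F, (Nat.card {x // eval x f = a} - Fintype.card F ^ m : ℝ)⁺ ≤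
      41 * f.totalDegree ^ 2 * √(Fintype.card F) * Fintype.card F ^ m := by
  classical
  have htotal : (rename (_root_.finSuccEquiv m) f).totalDegree = f.totalDegree :=
    totalDegree_renameEquiv _ f
  have hind (g : F[X]) (h : MvPolynomial (Option (Fin m)) F)
      (hgh : rename (_root_.finSuccEquiv m) f = Polynomial.aeval h g) : g.natDegree ≤ 1 := by
    by_contra! hg
    refine hf ⟨g, rename (_root_.finSuccEquiv m).symm h, hg, ?_⟩
    rw [Polynomial.aeval_algHom_apply, ← hgh, rename_rename, Equiv.symm_comp_self, rename_id_apply]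
  have hcard (a : F) : Nat.card {x // eval x f = a} =
      #{x | eval x (rename (_root_.finSuccEquiv m) f) = a} := by
    rw [Nat.card_eq_fintype_card, Fintype.card_subtype]
    refine Finset.card_equiv ((_root_.finSuccEquiv m).arrowCongr (Equiv.refl F)) fun x ↦ ?_
    simp [eval_rename, Equiv.arrowCongr, Function.comp_assoc]
  have hbound := sum_posPart_card_sub_le (htotal.symm ▸ hpos) hind (htotal.symm ▸ hq)
  simpa only [hcard, htotal, Fintype.card_fin] using hbound

end StatisticalDistance

end IndecomposablePolynomial

/-- **Outputs of indecomposable polynomials are equidistributed.**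
There is an absolute constant `C > 0` such that for every finite field `F`
(of prime-power size `q = Fintype.card F`) and every non-constant polynomial
`f ∈ F[x₁,…,xₙ]` of total degree `d` that is indecomposable over `F`, the output
distribution of `f` on a uniformly random input is `C·d²/√q`-close to uniform on `F`. -/
theorem indecomposable_equidistributed :
    ∃ C : ℝ, 0 < C ∧
      ∀ (F : Type) [Field F] [Fintype F], ∀ (n d : ℕ), 1 ≤ n →
      ∀ f : MvPolynomial (Fin n) F,
        f.totalDegree = d → 0 < f.totalDegree → ¬ f.Decomposable →
        (1 / 2 : ℝ) * ∑ a : F,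
          |(Nat.card {x : Fin n → F // eval x f = a} : ℝ) / (Fintype.card F : ℝ) ^ n
            - 1 / (Fintype.card F : ℝ)|
          ≤ C * (d : ℝ) ^ 2 / Real.sqrt (Fintype.card F) := by
  refine ⟨41, by norm_num, fun F _ _ n d hn f hd hpos hf ↦ ?_⟩
  obtain ⟨m, rfl⟩ := Nat.exists_eq_add_of_le' hn
  subst hd
  have hexcess : ∑ a : F, (Nat.card {x // eval x f = a} - Fintype.card F ^ m : ℝ)⁺ ≤
      41 * f.totalDegree ^ 2 * √(Fintype.card F) * Fintype.card F ^ m := by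
    rcases lt_or_ge (Fintype.card F) (256 * f.totalDegree ^ 4) with hq | hq
    · exact IndecomposablePolynomial.sum_posPart_card_sub_le_of_card_lt hq
    · exact IndecomposablePolynomial.sum_posPart_card_sub_le_of_le_card hpos hf hq
  have htotal := IndecomposablePolynomial.sum_card_eval_eq f
  rw [Fintype.card_fin] at htotal
  rw [IndecomposablePolynomial.half_sum_abs_div_sub_inv_eq htotal]
  calc _ ≤ 41 * f.totalDegree ^ 2 * √(Fintype.card F) * Fintype.card F ^ m /
        (Fintype.card F : ℝ) ^ (m + 1) := by gcongr
    _ = 41 * f.totalDegree ^ 2 * (√(Fintype.card F) / Fintype.card F) := by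
        field_simp
        exact (pow_succ _ m).symm
    _ = 41 * f.totalDegree ^ 2 / √(Fintype.card F) := by
        rw [Real.sqrt_div_self', mul_one_div]
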